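/- Every n-vertex (n ≥ 2) planar graph containing no Theta graph on 6 vertices as a subgraph has at most (18/7)n - 27/7 edges. -/

import Mathlib

open SimpleGraph

/-- `H` is a minor of `G`: there is an assignment of disjoint connected branch sets
of `G` to the vertices of `H` realizing all edges of `H`. -/
def HasMinor {V : Type*} {W : Type*} (G : SimpleGraph V) (H : SimpleGraph W) : Prop :=
  ∃ f : V → Option W,
    (∀ w : W, ∃ v, f v = some w) ∧
    (∀ w : W, (G.induce {v | f v = some w}).Preconnected) ∧
    (∀ w₁ w₂ : W, H.Adj w₁ w₂ →
      ∃ v₁ v₂, f v₁ = some w₁ ∧ f v₂ = some w₂ ∧ G.Adj v₁ v₂)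

/-- Planarity, via Wagner's theorem: no `K₅` minor and no `K₃,₃` minor. -/
def IsPlanar {V : Type*} (G : SimpleGraph V) : Prop :=
  ¬ HasMinor G (completeGraph (Fin 5)) ∧
    ¬ HasMinor G (completeBipartiteGraph (Fin 3) (Fin 3))

/-- `G` contains a Theta graph on 6 vertices: a 6-cycle together with a chord
joining two non-consecutive vertices of the cycle. -/
def HasTheta6 {V : Type*} (G : SimpleGraph V) : Prop :=
  ∃ v : Fin 6 → V, Function.Injective v ∧
    (∀ i : Fin 6, G.Adj (v i) (v (i + 1))) ∧
    ∃ i j : Fin 6, i ≠ j ∧ j ≠ i + 1 ∧ i ≠ j + 1 ∧ G.Adj (v i) (v j)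

namespace Theta6
universe u
variable {V : Type u}

/-! ### Minors and planarity -/

lemma planar_mono {G G' : SimpleGraph V} (h : G' ≤ G) (hp : IsPlanar G) : IsPlanar G' := by
  have key : ∀ {W : Type} (K : SimpleGraph W), HasMinor G' K → HasMinor G K := by
    rintro W K ⟨f, h1, h2, h3⟩
    refine ⟨f, h1, fun w => ?_, fun a b hab => ?_⟩
    · exact (h2 w).mono (fun a b hab => h hab)
    · obtain ⟨v₁, v₂, e1, e2, e3⟩ := h3 a b hab
      exact ⟨v₁, v₂, e1, e2, h e3⟩
  exact ⟨fun h' => hp.1 (key _ h'), fun h' => hp.2 (key _ h')⟩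

lemma planar_comap {W : Type u} {G : SimpleGraph V} (φ : W ↪ V) (hp : IsPlanar G) :
    IsPlanar (G.comap φ) := by
  classical
  have key : ∀ {X : Type} (K : SimpleGraph X), HasMinor (G.comap φ) K → HasMinor G K := by
    rintro X K ⟨f, h1, h2, h3⟩
    have hex : ∀ w, (Function.extend φ f (fun _ => none)) (φ w) = f w :=
      fun w => φ.injective.extend_apply f _ w
    have hno : ∀ v x, (Function.extend φ f (fun _ => none)) v = some x → ∃ w, φ w = v := by
      intro v x hv
      by_contra hc
      rw [Function.extend_apply' _ _ _ hc] at hv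
      cases hv
    refine ⟨Function.extend φ f (fun _ => none), fun w => ?_, fun w => ?_, fun a b hab => ?_⟩
    · obtain ⟨v, hv⟩ := h1 w
      exact ⟨φ v, by rw [hex, hv]⟩
    · rintro ⟨a, ha⟩ ⟨b, hb⟩
      obtain ⟨a', rfl⟩ := hno a w ha
      obtain ⟨b', rfl⟩ := hno b w hb
      have ha' : f a' = some w := by rw [← hex]; exact ha
      have hb' : f b' = some w := by rw [← hex]; exact hb
      have hr := h2 w ⟨a', ha'⟩ ⟨b', hb'⟩
      let g : (G.comap φ).induce {v | f v = some w} →g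
          G.induce {v | (Function.extend φ f (fun _ => none)) v = some w} :=
        ⟨fun v => ⟨φ v.1, by have := v.2; simp only [Set.mem_setOf_eq] at this ⊢; rw [hex, this]⟩,
          fun {a b} h => h⟩
      exact hr.map g
    · obtain ⟨v₁, v₂, e1, e2, e3⟩ := h3 a b hab
      exact ⟨φ v₁, φ v₂, by rw [hex, e1], by rw [hex, e2], e3⟩
  exact ⟨fun h' => hp.1 (key _ h'), fun h' => hp.2 (key _ h')⟩

/-- Contraction of the edge `xy` into `x`; the vertex `y` becomes isolated. -/
def contr (G : SimpleGraph V) (x y : V) : SimpleGraph V where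
  Adj p q := p ≠ q ∧ p ≠ y ∧ q ≠ y ∧ (G.Adj p q ∨ (p = x ∧ G.Adj y q) ∨ (q = x ∧ G.Adj y p))
  symm := ⟨by
    rintro p q ⟨h1, h2, h3, h4⟩
    refine ⟨h1.symm, h3, h2, ?_⟩
    rcases h4 with h | h | h
    · exact Or.inl h.symm
    · exact Or.inr (Or.inr h)
    · exact Or.inr (Or.inl h)⟩
  loopless := ⟨fun p h => h.1 rfl⟩

lemma minor_contr {W : Type} {K : SimpleGraph W} (hK : ∀ w, ∃ w', K.Adj w w')
    {G : SimpleGraph V} {x y : V} (hxy : G.Adj x y) (h : HasMinor (contr G x y) K) :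
    HasMinor G K := by
  classical
  obtain ⟨f, h1, h2, h3⟩ := h
  have hy : f y = none := by
    by_contra hne
    obtain ⟨w, hw⟩ := Option.ne_none_iff_exists'.1 hne
    obtain ⟨w', hw'⟩ := hK w
    obtain ⟨v₁, v₂, e1, e2, e3⟩ := h3 w w' hw'
    have hr := h2 w ⟨y, hw⟩ ⟨v₁, e1⟩
    rw [SimpleGraph.reachable_iff_reflTransGen] at hr
    rcases Relation.ReflTransGen.cases_head hr with h | ⟨c, hc, _⟩
    · have : y = v₁ := congrArg Subtype.val h
      exact e3.2.1 this.symm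
    · exact hc.2.1 rfl
  let g : V → Option W := fun v => if v = y then f x else f v
  have gne : ∀ v, v ≠ y → g v = f v := fun v hv => by simp [g, hv]
  have gy : g y = f x := by simp [g]
  have fne : ∀ v w, f v = some w → v ≠ y := by
    rintro v w hv rfl
    rw [hy] at hv; cases hv
  have gf : ∀ v w, f v = some w → g v = some w := fun v w hv => by rw [gne v (fne v w hv), hv]
  refine ⟨g, fun w => ?_, fun w => ?_, fun a b hab => ?_⟩
  · obtain ⟨v, hv⟩ := h1 w
    exact ⟨v, gf v w hv⟩
  · have lift : ∀ (a b : V) (ha : f a = some w) (hb : f b = some w),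
        (G.induce {v | g v = some w}).Reachable ⟨a, gf a w ha⟩ ⟨b, gf b w hb⟩ := by
      intro a b ha hb
      have hr := h2 w ⟨a, ha⟩ ⟨b, hb⟩
      rw [SimpleGraph.reachable_iff_reflTransGen] at hr
      have : ∀ c : {v | f v = some w}, Relation.ReflTransGen
          ((contr G x y).induce {v | f v = some w}).Adj ⟨a, ha⟩ c →
          (G.induce {v | g v = some w}).Reachable ⟨a, gf a w ha⟩ ⟨c.1, gf c.1 w c.2⟩ := by
        intro c hc
        induction hc with
        | refl => exact Reachable.refl _
        | @tail b c _ hbc ih =>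
          refine ih.trans ?_
          obtain ⟨b, hb⟩ := b
          obtain ⟨c, hc⟩ := c
          have hbc' : (contr G x y).Adj b c := hbc
          rcases hbc'.2.2.2 with h | ⟨rfl, h⟩ | ⟨rfl, h⟩
          · exact Adj.reachable (G := G.induce {v | g v = some w}) h
          · have hyw : g y = some w := by rw [gy]; exact hb
            have r1 : (G.induce {v | g v = some w}).Reachable ⟨b, gf b w hb⟩ ⟨y, hyw⟩ :=
              Adj.reachable (G := G.induce {v | g v = some w}) hxy
            have r2 : (G.induce {v | g v = some w}).Reachable ⟨y, hyw⟩ ⟨c, gf c w hc⟩ :=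
              Adj.reachable (G := G.induce {v | g v = some w}) h
            exact r1.trans r2
          · have hyw : g y = some w := by rw [gy]; exact hc
            have r1 : (G.induce {v | g v = some w}).Reachable ⟨c, gf c w hc⟩ ⟨y, hyw⟩ :=
              Adj.reachable (G := G.induce {v | g v = some w}) hxy
            have r2 : (G.induce {v | g v = some w}).Reachable ⟨y, hyw⟩ ⟨b, gf b w hb⟩ :=
              Adj.reachable (G := G.induce {v | g v = some w}) h
            exact (r1.trans r2).symm
      exact this ⟨b, hb⟩ hr
    have tox : ∀ (a : V) (ha : g a = some w), ∃ (b : V) (hb : f b = some w),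
        (G.induce {v | g v = some w}).Reachable ⟨a, ha⟩ ⟨b, gf b w hb⟩ := by
      intro a ha
      by_cases hay : a = y
      · subst hay
        have hx : f x = some w := by rw [← gy]; exact ha
        exact ⟨x, hx, Adj.reachable (G := G.induce {v | g v = some w}) hxy.symm⟩
      · exact ⟨a, by rw [← gne a hay]; exact ha, Reachable.refl _⟩
    rintro ⟨a, ha⟩ ⟨b, hb⟩
    obtain ⟨a', ha', ra⟩ := tox a ha
    obtain ⟨b', hb', rb⟩ := tox b hb
    exact ra.trans ((lift a' b' ha' hb').trans rb.symm)
  · obtain ⟨v₁, v₂, e1, e2, e3⟩ := h3 a b hab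
    rcases e3.2.2.2 with h | ⟨rfl, h⟩ | ⟨rfl, h⟩
    · exact ⟨v₁, v₂, gf _ _ e1, gf _ _ e2, h⟩
    · exact ⟨y, v₂, by rw [gy]; exact e1, gf _ _ e2, h⟩
    · exact ⟨v₁, y, gf _ _ e1, by rw [gy]; exact e2, h.symm⟩

lemma planar_contr {G : SimpleGraph V} {x y : V} (hxy : G.Adj x y) (hp : IsPlanar G) :
    IsPlanar (contr G x y) := by
  refine ⟨fun h => hp.1 (minor_contr ?_ hxy h), fun h => hp.2 (minor_contr ?_ hxy h)⟩
  · intro w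
    refine ⟨w + 1, ?_⟩
    simp
  · rintro (w | w)
    · exact ⟨Sum.inr 0, by simp⟩
    · exact ⟨Sum.inl 0, by simp⟩

/-- A planar graph contains no `K₅` subgraph. -/
lemma no_K5 {G : SimpleGraph V} (hp : IsPlanar G) (f : Fin 5 → V) (hf : Function.Injective f)
    (h : ∀ i j, i ≠ j → G.Adj (f i) (f j)) : False := by
  classical
  apply hp.1
  have hex : ∀ i, Function.extend f some (fun _ => none) (f i) = some i :=
    fun i => hf.extend_apply some _ i
  have hno : ∀ v i, Function.extend f some (fun _ => none) v = some i → v = f i := by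
    intro v i hv
    by_cases hc : ∃ j, f j = v
    · obtain ⟨j, rfl⟩ := hc
      rw [hex] at hv
      cases hv; rfl
    · rw [Function.extend_apply' _ _ _ hc] at hv
      cases hv
  refine ⟨Function.extend f some (fun _ => none), fun w => ⟨f w, hex w⟩, fun w => ?_,
    fun a b hab => ⟨f a, f b, hex a, hex b, h a b hab⟩⟩
  rintro ⟨a, ha⟩ ⟨b, hb⟩
  have : a = b := (hno a w ha).trans (hno b w hb).symm
  subst this
  exact Reachable.refl _

/-- A planar graph contains no `K₃,₃` subgraph. -/
lemma no_K33 {G : SimpleGraph V} (hp : IsPlanar G) (f : Fin 3 ⊕ Fin 3 → V)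
    (hf : Function.Injective f)
    (h : ∀ i j, G.Adj (f (Sum.inl i)) (f (Sum.inr j))) : False := by
  classical
  apply hp.2
  have hex : ∀ i, Function.extend f some (fun _ => none) (f i) = some i :=
    fun i => hf.extend_apply some _ i
  have hno : ∀ v i, Function.extend f some (fun _ => none) v = some i → v = f i := by
    intro v i hv
    by_cases hc : ∃ j, f j = v
    · obtain ⟨j, rfl⟩ := hc
      rw [hex] at hv
      cases hv; rfl
    · rw [Function.extend_apply' _ _ _ hc] at hv
      cases hv
  refine ⟨Function.extend f some (fun _ => none), fun w => ⟨f w, hex w⟩, fun w => ?_,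
    fun a b hab => ⟨f a, f b, hex a, hex b, ?_⟩⟩
  · rintro ⟨a, ha⟩ ⟨b, hb⟩
    have : a = b := (hno a w ha).trans (hno b w hb).symm
    subst this
    exact Reachable.refl _
  · rcases a with a | a <;> rcases b with b | b
    · simp at hab
    · exact h a b
    · exact (h b a).symm
    · simp at hab

end Theta6

namespace Theta6
universe u
open scoped Classical
set_option linter.unusedSectionVars false
set_option linter.unusedVariables false
variable {V : Type u} [Fintype V]

abbrev ES (V : Type u) := Sym2 V → ZMod 2

theorem z2 {x : ZMod 2} (h : x ≠ 0) : x = 1 := by revert x; decide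

theorem z2add (x : ZMod 2) : x + x = 0 := by revert x; decide

theorem esadd {α : Type*} (S : α → ZMod 2) : S + S = 0 := by
  funext e; exact z2add _

theorem eq_of_add {α : Type*} {S T : α → ZMod 2} (h : S + T = 0) : S = T := by
  have : S + T + T = T := by rw [h, zero_add]
  rwa [add_assoc, esadd, add_zero] at this

noncomputable def bd : ES V →ₗ[ZMod 2] (V → ZMod 2) where
  toFun S v := ∑ u, S s(v,u)
  map_add' S T := by funext v; simp [Finset.sum_add_distrib]
  map_smul' c S := by funext v; simp [Finset.mul_sum]

theorem bd_apply (S : ES V) (v : V) : bd S v = ∑ u, S s(v,u) := rfl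

/-- chains supported on `G` -/
def Cc (G : SimpleGraph V) : Submodule (ZMod 2) (ES V) where
  carrier := {S | ∀ e, S e ≠ 0 → e ∈ G.edgeSet}
  add_mem' := by
    intro a b ha hb e he
    by_contra h
    have h1 : a e = 0 := by by_contra h2; exact h (ha e h2)
    have h2 : b e = 0 := by by_contra h2; exact h (hb e h2)
    exact he (by simp [h1, h2])
  zero_mem' := by intro e he; exact absurd rfl he
  smul_mem' := by
    intro c x hx e he
    apply hx
    intro h
    exact he (by simp [h])

theorem mem_Cc {G : SimpleGraph V} {S : ES V} : S ∈ Cc G ↔ ∀ e, S e ≠ 0 → e ∈ G.edgeSet := Iff.rfl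

theorem Cc_adj {G : SimpleGraph V} {S : ES V} (h : S ∈ Cc G) {a b : V} (hab : S s(a,b) ≠ 0) : G.Adj a b :=
  h _ hab

theorem Cc_zero {G : SimpleGraph V} {S : ES V} (h : S ∈ Cc G) {a b : V} (hab : ¬ G.Adj a b) : S s(a,b) = 0 := by
  by_contra h2; exact hab (h _ h2)

theorem Cc_of {G : SimpleGraph V} {S : ES V} (h : ∀ a b, S s(a,b) ≠ 0 → G.Adj a b) : S ∈ Cc G := by
  intro e
  induction e with | _ a b => exact h a b

theorem Cc_diag {G : SimpleGraph V} {S : ES V} (h : S ∈ Cc G) (a : V) : S s(a,a) = 0 :=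
  Cc_zero h (G.irrefl)

theorem Cc_mono {G H : SimpleGraph V} (h : G ≤ H) : Cc G ≤ Cc H := by
  intro S hS
  exact Cc_of fun a b hab => h (Cc_adj hS hab)

/-- cycle space -/
noncomputable def Zc (G : SimpleGraph V) : Submodule (ZMod 2) (ES V) := Cc G ⊓ LinearMap.ker bd

theorem mem_Zc {G : SimpleGraph V} {S : ES V} : S ∈ Zc G ↔ S ∈ Cc G ∧ bd S = 0 := by
  simp [Zc]

theorem Zc_mono {G H : SimpleGraph V} (h : G ≤ H) : Zc G ≤ Zc H := by
  intro S hS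
  rw [mem_Zc] at *
  exact ⟨Cc_mono h hS.1, hS.2⟩

theorem Zc_sum {G : SimpleGraph V} {S : ES V} (h : S ∈ Zc G) (v : V) : ∑ u, S s(v,u) = 0 :=
  congrFun (mem_Zc.1 h).2 v

noncomputable def dl (v : V) : V → ZMod 2 := Pi.single v 1
noncomputable def ed (a b : V) : ES V := Pi.single s(a,b) 1

theorem dl_apply (v w : V) : dl v w = if w = v then 1 else 0 := by
  simp [dl, Pi.single_apply]

theorem ed_apply (a b : V) (e : Sym2 V) : ed a b e = if e = s(a,b) then 1 else 0 := by
  simp [ed, Pi.single_apply]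

theorem ed_self (a b : V) : ed a b s(a,b) = 1 := by simp [ed_apply]

theorem ed_comm (a b : V) : ed a b = ed b a := by simp [ed, Sym2.eq_swap]

theorem ed_Cc {G : SimpleGraph V} {a b : V} (h : G.Adj a b) : ed a b ∈ Cc G := by
  intro e he
  rw [ed_apply] at he
  have : e = s(a,b) := by by_contra h; simp [h] at he
  rw [this]; exact h

theorem bd_ed {a b : V} (h : a ≠ b) : bd (ed a b) = dl a + dl b := by
  funext v
  rw [bd_apply]
  simp only [ed_apply, Pi.add_apply, dl_apply]
  by_cases h1 : v = a
  · subst h1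
    rw [Finset.sum_eq_single b]
    · simp [h]
    · intro c _ hc
      rw [if_neg]
      intro h2
      exact hc (Sym2.congr_right.1 h2)
    · simp
  · by_cases h2 : v = b
    · subst h2
      rw [Finset.sum_eq_single a]
      · simp [h1, Sym2.eq_swap]
      · intro c _ hc
        rw [if_neg]
        intro h2
        rw [Sym2.eq_swap (a := a)] at h2
        exact hc (Sym2.congr_right.1 h2)
      · simp
    · simp only [h1, h2, if_false, add_zero]
      apply Finset.sum_eq_zero
      intro c _
      rw [if_neg]
      intro h3
      rw [Sym2.eq_iff] at h3
      tauto

theorem dladd (v : V) : dl v + dl v = 0 := esadd _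

theorem chain {H : SimpleGraph V} {p q : V} (h : H.Reachable p q) : ∃ c ∈ Cc H, bd c = dl p + dl q := by
  obtain ⟨w⟩ := h
  induction w with
  | nil => exact ⟨0, Submodule.zero_mem _, by rw [dladd]; simp⟩
  | cons hab w ih =>
    obtain ⟨c, hc, hb⟩ := ih
    refine ⟨ed _ _ + c, Submodule.add_mem _ (ed_Cc hab) hc, ?_⟩
    rw [map_add, hb, bd_ed hab.ne, add_assoc, ← add_assoc (dl _) (dl _) (dl _), dladd, zero_add]

theorem handshake {G : SimpleGraph V} {S : ES V} (hS : S ∈ Cc G) (A : Finset V) :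
    ∑ v ∈ A, bd S v = ∑ v ∈ A, ∑ u ∈ Aᶜ, S s(v,u) := by
  have h1 : ∑ v ∈ A, ∑ u ∈ A, S s(v,u) = 0 := by
    rw [← Finset.sum_product']
    apply Finset.sum_involution (fun p _ => (p.2, p.1))
    · rintro ⟨a, b⟩ _
      simp only
      rw [Sym2.eq_swap, z2add]
    · rintro ⟨a, b⟩ _ h h2
      simp only [Prod.mk.injEq] at h2
      simp only at h
      rw [h2.1] at h
      exact h (Cc_diag hS _)
    · rintro ⟨a, b⟩ h
      simp only [Finset.mem_product] at *
      tauto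
    · rintro ⟨a, b⟩ _
      rfl
  have h2 : ∀ v, bd S v = ∑ u ∈ A, S s(v,u) + ∑ u ∈ Aᶜ, S s(v,u) := by
    intro v
    rw [bd_apply, Finset.sum_add_sum_compl]
  simp only [h2]
  rw [Finset.sum_add_distrib, h1, zero_add]

theorem handshake0 {G : SimpleGraph V} {S : ES V} (hS : S ∈ Cc G) : ∑ v, bd S v = 0 := by
  rw [handshake hS]; simp

/-- closed under 2-covering -/
def M2 {ι : Type*} (F : ι → ES V) : Prop :=
  ∀ e i j k, F i e ≠ 0 → F j e ≠ 0 → F k e ≠ 0 → i = j ∨ i = k ∨ j = k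

structure FSp (G : SimpleGraph V) {ι : Type} [Fintype ι] (F : ι → ES V) : Prop where
  mem : ∀ i, F i ∈ Zc G
  span : ∀ S ∈ Zc G, ∃ c : ι → ZMod 2, S = ∑ i, c i • F i
  m2 : M2 F

def FS (G : SimpleGraph V) : Prop := ∃ (ι : Type) (_ : Fintype ι) (F : ι → ES V), FSp G F

theorem sum_ap {ι : Type*} (s : Finset ι) (c : ι → ZMod 2) (F : ι → ES V) (e : Sym2 V) :
    (∑ i ∈ s, c i • F i) e = ∑ i ∈ s, c i * F i e := by
  simp [Finset.sum_apply]

theorem toFull {G : SimpleGraph V} (h : FS G) :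
    ∃ (ι : Type) (_ : Fintype ι) (F : ι → ES V), FSp G F ∧ ∑ i, F i = 0 := by
  obtain ⟨ι, _, F, hF⟩ := h
  have key : ∀ e i j, (∑ k, F k) e ≠ 0 → F i e ≠ 0 → F j e ≠ 0 → i = j := by
    intro e i j h hi hj
    by_contra hij
    apply h
    rw [Finset.sum_apply, ← Finset.sum_subset (Finset.subset_univ {i, j}), Finset.sum_pair hij, z2 hi, z2 hj]
    · rfl
    · intro k _ hk
      by_contra hk2
      simp only [Finset.mem_insert, Finset.mem_singleton, not_or] at hk
      rcases hF.m2 e i j k hi hj hk2 with h | h | h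
      · exact hij h
      · exact hk.1 h.symm
      · exact hk.2 h.symm
  refine ⟨Option ι, inferInstance, fun o => o.elim (∑ i, F i) F, ⟨?_, ?_, ?_⟩, ?_⟩
  · rintro (_ | i)
    · exact Submodule.sum_mem _ fun i _ => hF.mem i
    · exact hF.mem i
  · intro S hS
    obtain ⟨c, hc⟩ := hF.span S hS
    refine ⟨fun o => o.elim 0 c, ?_⟩
    rw [Fintype.sum_option]
    simpa using hc
  · rintro e (_ | i) (_ | j) (_ | k) hi hj hk
    · simp
    · simp
    · simp
    · right; right; congr 1; exact key e j k hi hj hk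
    · simp
    · right; left; congr 1; exact key e i k hj hi hk
    · left; congr 1; exact key e i j hk hi hj
    · rcases hF.m2 e i j k hi hj hk with h | h | h <;> simp [h]
  · rw [Fintype.sum_option]
    exact esadd _

/-- every edge of a face lies in a second face -/
theorem partner {ι : Type*} [Fintype ι] {F : ι → ES V} {c : ι → ZMod 2} {e : Sym2 V}
    (h0 : ∑ i, c i * F i e = 0) {i : ι} (hc : c i ≠ 0) (hi : F i e ≠ 0) :
    ∃ j, j ≠ i ∧ c j ≠ 0 ∧ F j e ≠ 0 := by
  by_contra hcon
  push Not at hcon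
  rw [Finset.sum_eq_single i, z2 hc, z2 hi] at h0
  · exact absurd h0 (by decide)
  · intro j _ hj
    by_cases hcj : c j = 0
    · simp [hcj]
    · simp [hcon j hj hcj]
  · simp

theorem partner1 {ι : Type*} [Fintype ι] {F : ι → ES V} (h0 : ∑ i, F i = 0) {e : Sym2 V}
    {i : ι} (hi : F i e ≠ 0) : ∃ j, j ≠ i ∧ F j e ≠ 0 := by
  obtain ⟨j, h1, _, h2⟩ := partner (F := F) (c := fun _ => 1) (e := e) (i := i)
    (by simpa [Finset.sum_apply] using congrFun h0 e) one_ne_zero hi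
  exact ⟨j, h1, h2⟩

theorem hom_sum {ι : Type*} [Fintype ι] {F : ι → ES V} (hm : M2 F) {s : V}
    (hb : ∀ i, ∑ u, F i s(s,u) = 0) {c : ι → ZMod 2}
    (h0 : ∀ u, (∑ i, c i • F i) s(s,u) = 0) {d : ι → ZMod 2} :
    ∑ u, (if ∃ i, c i ≠ 0 ∧ F i s(s,u) ≠ 0 then (∑ i, d i • F i) s(s,u) else 0) = 0 := by
  have key : ∀ j, ∑ u, (if ∃ i, c i ≠ 0 ∧ F i s(s,u) ≠ 0 then F j s(s,u) else 0) = 0 := by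
    intro j
    by_cases hj : c j = 0
    · apply Finset.sum_eq_zero
      intro u _
      split_ifs with h
      · obtain ⟨i, hi, hiu⟩ := h
        by_contra hju
        have h1 := h0 u
        rw [sum_ap] at h1
        obtain ⟨k, hki, hck, hk⟩ := partner h1 hi hiu
        rcases hm _ i k j hiu hk hju with h | h | h
        · exact hki h.symm
        · exact hi (h ▸ hj)
        · exact hck (h ▸ hj)
      · rfl
    · refine Eq.trans (Finset.sum_congr rfl ?_) (hb j)
      intro u _
      split_ifs with h
      · rfl
      · by_contra h2
        exact h ⟨j, hj, fun h3 => h2 h3.symm⟩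
  have : ∀ u, (if ∃ i, c i ≠ 0 ∧ F i s(s,u) ≠ 0 then (∑ i, d i • F i) s(s,u) else 0)
      = ∑ j, d j * (if ∃ i, c i ≠ 0 ∧ F i s(s,u) ≠ 0 then F j s(s,u) else 0) := by
    intro u
    rw [sum_ap]
    split_ifs <;> simp
  simp only [this]
  rw [Finset.sum_comm]
  apply Finset.sum_eq_zero
  intro j _
  rw [← Finset.mul_sum, key, mul_zero]

theorem hom {G : SimpleGraph V} {ι : Type} [Fintype ι] {F : ι → ES V} (hF : FSp G F) {s : V}
    {c : ι → ZMod 2} (h0 : ∀ u, (∑ i, c i • F i) s(s,u) = 0) {S : ES V} (hS : S ∈ Zc G)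
    {a b : V} (hu : ∀ u, u ≠ a → u ≠ b → S s(s,u) = 0)
    (h : ∃ i, c i ≠ 0 ∧ F i s(s,a) ≠ 0) (ha : S s(s,a) ≠ 0) : ∃ i, c i ≠ 0 ∧ F i s(s,b) ≠ 0 := by
  obtain ⟨d, hd⟩ := hF.span S hS
  have h1 := hom_sum hF.m2 (fun i => Zc_sum (hF.mem i) s) h0 (d := d)
  rw [← hd] at h1
  by_contra hn
  rw [Finset.sum_eq_single a] at h1
  · rw [if_pos h] at h1; exact ha h1
  · intro u _ hua
    by_cases hub : u = b
    · rw [hub, if_neg hn]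
    · rw [hu u hua hub]; simp
  · simp

end Theta6

namespace Theta6
universe u
open scoped Classical
set_option linter.unusedSectionVars false
set_option linter.unusedVariables false
variable {V : Type u} [Fintype V]

structure MinCx (G : SimpleGraph V) : Prop where
  planar : IsPlanar G
  nfs : ¬ FS G
  ih : ∀ G' : SimpleGraph V, IsPlanar G' → G'.edgeSet.ncard < G.edgeSet.ncard → FS G'

theorem ncard_lt {G G' : SimpleGraph V} (h : G' ≤ G) {a b : V} (hab : G.Adj a b) (hn : ¬ G'.Adj a b) :
    G'.edgeSet.ncard < G.edgeSet.ncard := by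
  apply Set.ncard_lt_ncard _ (Set.toFinite _)
  rw [Set.ssubset_iff_of_subset (by simpa using h)]
  exact ⟨s(a,b), hab, hn⟩

theorem MinCx.sub {G G' : SimpleGraph V} (hG : MinCx G) (h : G' ≤ G) {a b : V} (hab : G.Adj a b)
    (hn : ¬ G'.Adj a b) : FS G' :=
  hG.ih _ (planar_mono h hG.planar) (ncard_lt h hab hn)

theorem contr_ncard {G : SimpleGraph V} {x y : V} (hxy : G.Adj x y) :
    (contr G x y).edgeSet.ncard < G.edgeSet.ncard := by
  have h1 : (contr G x y).edgeSet ⊆ Sym2.map (fun v => if v = y then x else v) '' (G.edgeSet \ {s(x,y)}) := by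
    intro e
    induction e with | _ p q =>
    rintro ⟨hpq, hp, hq, h | ⟨h1, h2⟩ | ⟨h1, h2⟩⟩ <;> simp only at *
    · refine ⟨s(p,q), ⟨h, ?_⟩, by simp [hp, hq]⟩
      simp only [Set.mem_singleton_iff, Sym2.eq_iff]
      tauto
    · refine ⟨s(y,q), ⟨h2, ?_⟩, by simp [hq, h1]⟩
      simp only [Set.mem_singleton_iff, Sym2.eq_iff]
      rintro (h | h)
      · exact hq h.2
      · exact hpq (h1.trans h.2.symm)
    · refine ⟨s(y,p), ⟨h2, ?_⟩, by simp [hp, h1]⟩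
      simp only [Set.mem_singleton_iff, Sym2.eq_iff]
      rintro (h | h)
      · exact hp h.2
      · exact hpq (h.2.trans h1.symm)
  calc _ ≤ _ := Set.ncard_le_ncard h1 (Set.toFinite _)
    _ ≤ (G.edgeSet \ {s(x,y)}).ncard := Set.ncard_image_le (Set.toFinite _)
    _ < _ := Set.ncard_sdiff_singleton_lt_of_mem hxy (Set.toFinite _)

theorem MinCx.con {G : SimpleGraph V} (hG : MinCx G) {x y : V} (hxy : G.Adj x y) : FS (contr G x y) :=
  hG.ih _ (planar_contr hxy hG.planar) (contr_ncard hxy)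

theorem fs_same {K G : SimpleGraph V} (h : K ≤ G) (hz : Zc G ≤ Zc K) (hF : FS K) : FS G := by
  obtain ⟨ι, _, F, hF⟩ := hF
  exact ⟨ι, _, F, fun i => Zc_mono h (hF.mem i), fun S hS => hF.span S (hz hS), hF.m2⟩

theorem add_face {K G : SimpleGraph V} (hKG : K ≤ G) {ι : Type} [Fintype ι] {F : ι → ES V}
    (hF : FSp K F) {D : ES V} (hD : D ∈ Zc G) (hred : ∀ S ∈ Zc G, S ∈ Zc K ∨ S + D ∈ Zc K)
    (i0 : ι) (h : ∀ e, D e ≠ 0 → F i0 e ≠ 0 ∨ ∀ i, F i e = 0) : FS G := by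
  have up : ∀ c : ι → ZMod 2, ∑ i, c i • (if i = i0 then F i + D else F i) = ∑ i, c i • F i + c i0 • D := by
    intro c
    have : ∀ i, c i • (if i = i0 then F i + D else F i) = c i • F i + if i = i0 then c i0 • D else 0 := by
      intro i
      split_ifs with h
      · rw [h, smul_add]
      · simp
    simp only [this, Finset.sum_add_distrib]
    simp
  refine ⟨Option ι, inferInstance, fun o => o.elim D (fun i => if i = i0 then F i + D else F i), ⟨?_, ?_, ?_⟩⟩
  · rintro (_ | i)
    · exact hD
    · simp only [Option.elim]
      split_ifs
      · exact Submodule.add_mem _ (Zc_mono hKG (hF.mem i)) hD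
      · exact Zc_mono hKG (hF.mem i)
  · intro S hS
    rcases hred S hS with h1 | h1
    · obtain ⟨c, hc⟩ := hF.span _ h1
      refine ⟨fun o => o.elim (c i0) c, ?_⟩
      rw [Fintype.sum_option]
      simp only [Option.elim]
      rw [up, ← hc, add_comm, add_assoc, esadd, add_zero]
    · obtain ⟨c, hc⟩ := hF.span _ h1
      refine ⟨fun o => o.elim (1 + c i0) c, ?_⟩
      rw [Fintype.sum_option]
      simp only [Option.elim]
      rw [up, ← hc, add_smul, one_smul]
      have h1 := esadd D
      have h2 := esadd (c i0 • D)
      calc S = S + (D + D) + (c i0 • D + c i0 • D) := by rw [h1, h2]; simp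
        _ = _ := by abel
  · have A : ∀ e, D e = 0 → ∀ i, (if i = i0 then F i + D else F i) e = F i e := by
      intro e he i
      split_ifs <;> simp [he]
    have B : ∀ e, D e ≠ 0 → ∀ i j, (if i = i0 then F i + D else F i) e ≠ 0 →
        (if j = i0 then F j + D else F j) e ≠ 0 → i = j := by
      intro e he i j hi hj
      rcases h e he with h1 | h1
      · have hi0 : ∀ i, (if i = i0 then F i + D else F i) e ≠ 0 → i ≠ i0 ∧ F i e ≠ 0 := by
          intro i hi
          by_cases hii : i = i0
          · exfalso; apply hi; rw [if_pos hii, hii, Pi.add_apply, z2 he, z2 h1]; rfl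
          · rw [if_neg hii] at hi; exact ⟨hii, hi⟩
        have h2 := hi0 i hi
        have h3 := hi0 j hj
        rcases hF.m2 e i j i0 h2.2 h3.2 h1 with h | h | h
        · exact h
        · exact absurd h h2.1
        · exact absurd h h3.1
      · have hi0 : ∀ i, (if i = i0 then F i + D else F i) e ≠ 0 → i = i0 := by
          intro i hi
          by_contra hii
          rw [if_neg hii] at hi; exact hi (h1 i)
        rw [hi0 i hi, hi0 j hj]
    rintro e (_ | i) (_ | j) (_ | k) hi hj hk
    · simp
    · simp
    · simp
    · right; right; congr 1; exact B e hi j k hj hk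
    · simp
    · right; left; congr 1; exact B e hj i k hi hk
    · left; congr 1; exact B e hk i j hi hj
    · simp only [Option.elim] at hi hj hk
      by_cases he : D e = 0
      · rw [A e he] at hi hj hk
        rcases hF.m2 e i j k hi hj hk with h | h | h <;> simp [h]
      · left; congr 1; exact B e he i j hi hj

theorem add_zero_face {G : SimpleGraph V} {ι : Type} [Fintype ι] {F : ι → ES V}
    (hF : FSp G F) : FSp G (fun o : Option ι => o.elim 0 F) := by
  refine ⟨?_, ?_, ?_⟩
  · rintro (_ | i)
    · exact Submodule.zero_mem _
    · exact hF.mem i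
  · intro S hS
    obtain ⟨c, hc⟩ := hF.span S hS
    refine ⟨fun o => o.elim 0 c, ?_⟩
    rw [Fintype.sum_option]
    simpa using hc
  · rintro e (_ | i) (_ | j) (_ | k) hi hj hk <;> try simp at hi hj hk
    rcases hF.m2 e i j k hi hj hk with h | h | h <;> simp [h]

theorem add_face0 {K G : SimpleGraph V} (hKG : K ≤ G) {ι : Type} [Fintype ι] {F : ι → ES V}
    (hF : FSp K F) {D : ES V} (hD : D ∈ Zc G) (hred : ∀ S ∈ Zc G, S ∈ Zc K ∨ S + D ∈ Zc K)
    (h : ∀ e, D e ≠ 0 → ∀ i, F i e = 0) : FS G := by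
  apply add_face hKG (add_zero_face hF) hD hred none
  intro e he
  right
  rintro (_ | i)
  · rfl
  · exact h e he i

noncomputable def tri (v a b : V) : ES V := ed v a + ed v b + ed a b

theorem tri_mem {G : SimpleGraph V} {v a b : V} (h1 : G.Adj v a) (h2 : G.Adj v b) (h3 : G.Adj a b) :
    tri v a b ∈ Zc G := by
  rw [mem_Zc]
  refine ⟨Submodule.add_mem _ (Submodule.add_mem _ (ed_Cc h1) (ed_Cc h2)) (ed_Cc h3), ?_⟩
  rw [tri, map_add, map_add, bd_ed h1.ne, bd_ed h2.ne, bd_ed h3.ne]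
  have := dladd v; have h4 := dladd a; have h5 := dladd b
  calc _ = (dl v + dl v) + (dl a + dl a) + (dl b + dl b) := by abel
    _ = 0 := by rw [this, h4, h5]; simp

theorem tri_ap {v a b : V} (h1 : v ≠ a) (h2 : v ≠ b) (h3 : a ≠ b) (e : Sym2 V) :
    tri v a b e = if e = s(v,a) ∨ e = s(v,b) ∨ e = s(a,b) then 1 else 0 := by
  have k1 : s(v,a) ≠ s(v,b) := by rw [Ne, Sym2.eq_iff]; tauto
  have k2 : s(v,a) ≠ s(a,b) := by rw [Ne, Sym2.eq_iff]; tauto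
  have k3 : s(v,b) ≠ s(a,b) := by rw [Ne, Sym2.eq_iff]; tauto
  simp only [tri, Pi.add_apply, ed_apply]
  by_cases e1 : e = s(v,a)
  · subst e1; simp [k1, k2]
  · by_cases e2 : e = s(v,b)
    · subst e2; simp [k1.symm, k3]
    · simp [e1, e2]

theorem tri_ne {v a b : V} (h1 : v ≠ a) (h2 : v ≠ b) (h3 : a ≠ b) {e : Sym2 V} (h : tri v a b e ≠ 0) :
    e = s(v,a) ∨ e = s(v,b) ∨ e = s(a,b) := by
  rw [tri_ap h1 h2 h3] at h
  by_contra h4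
  rw [if_neg h4] at h
  exact h rfl

/-- sum over a star with at most two/three nonzero entries -/
theorem star2 {S : ES V} {v a b : V} (hab : a ≠ b) (h : ∀ u, u ≠ a → u ≠ b → S s(v,u) = 0) :
    ∑ u, S s(v,u) = S s(v,a) + S s(v,b) := by
  rw [← Finset.sum_pair (f := fun u => S s(v,u)) hab]
  symm
  apply Finset.sum_subset (Finset.subset_univ _)
  intro u _ hu
  simp only [Finset.mem_insert, Finset.mem_singleton, not_or] at hu
  exact h u hu.1 hu.2

theorem star1 {S : ES V} {v a : V} (h : ∀ u, u ≠ a → S s(v,u) = 0) :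
    ∑ u, S s(v,u) = S s(v,a) := by
  apply Finset.sum_eq_single
  · intro u _ hu; exact h u hu
  · simp

theorem star3 {S : ES V} {v a b c : V} (hab : a ≠ b) (hac : a ≠ c) (hbc : b ≠ c)
    (h : ∀ u, u ≠ a → u ≠ b → u ≠ c → S s(v,u) = 0) :
    ∑ u, S s(v,u) = S s(v,a) + S s(v,b) + S s(v,c) := by
  have : S s(v,a) + S s(v,b) + S s(v,c) = ∑ u ∈ {a,b,c}, S s(v,u) := by
    rw [Finset.sum_insert, Finset.sum_pair hbc, add_assoc]
    simp [hab, hac]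
  rw [this]
  symm
  apply Finset.sum_subset (Finset.subset_univ _)
  intro u _ hu
  simp only [Finset.mem_insert, Finset.mem_singleton, not_or] at hu
  exact h u hu.1 hu.2.1 hu.2.2

theorem z2_eq_of_add {x y : ZMod 2} (h : x + y = 0) : x = y := by revert x y; decide

theorem L1 {G : SimpleGraph V} (hG : MinCx G) {v a : V} (hva : G.Adj v a) :
    ∃ b, G.Adj v b ∧ b ≠ a := by
  by_contra hcon
  push Not at hcon
  apply hG.nfs
  set K := G.deleteEdges {s(v,a)} with hK
  have hle : K ≤ G := deleteEdges_le _
  refine fs_same hle ?_ (hG.sub hle hva (by simp [hK]))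
  intro S hS
  have h1 := Zc_sum hS v
  rw [mem_Zc] at *
  rw [star1 (a := a)] at h1
  · refine ⟨Cc_of fun p q hpq => ?_, hS.2⟩
    rw [hK, deleteEdges_adj]
    refine ⟨Cc_adj hS.1 hpq, ?_⟩
    rintro h
    rw [Set.mem_singleton_iff] at h
    rw [h] at hpq; exact hpq h1
  · intro u hu
    exact Cc_zero hS.1 fun h => hu (hcon u h)

theorem L2 {G : SimpleGraph V} (hG : MinCx G) {v a b : V} (hva : G.Adj v a) (hvb : G.Adj v b) (hab : a ≠ b) :
    ∃ c, G.Adj v c ∧ c ≠ a ∧ c ≠ b := by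
  by_contra hcon
  have hcon : ∀ c, G.Adj v c → c = a ∨ c = b := by
    intro c hc; by_contra h; push Not at h; exact hcon ⟨c, hc, h⟩
  apply hG.nfs
  set K := contr G a v with hK
  obtain ⟨ι, _, F, hF⟩ := hG.con hva.symm
  have hKadj : ∀ p q, K.Adj p q ↔ p ≠ v ∧ q ≠ v ∧ (G.Adj p q ∨ s(p,q) = s(a,b)) := by
    intro p q
    simp only [hK, contr, Sym2.eq_iff]
    constructor
    · rintro ⟨hpq, hp, hq, h | ⟨h1, h2⟩ | ⟨h1, h2⟩⟩
      · exact ⟨hp, hq, Or.inl h⟩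
      · refine ⟨hp, hq, Or.inr (Or.inl ⟨h1, ?_⟩)⟩
        rcases hcon _ h2 with h | h
        · exact absurd (h1.trans h.symm) hpq
        · exact h
      · refine ⟨hp, hq, Or.inr (Or.inr ⟨?_, h1⟩)⟩
        rcases hcon _ h2 with h | h
        · exact absurd (h.trans h1.symm) hpq
        · exact h
    · rintro ⟨hp, hq, h | ⟨h1, h2⟩ | ⟨h1, h2⟩⟩
      · exact ⟨h.ne, hp, hq, Or.inl h⟩
      · subst h1 h2; exact ⟨hab, hp, hq, Or.inr (Or.inl ⟨rfl, hvb⟩)⟩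
      · subst h1 h2; exact ⟨hab.symm, hp, hq, Or.inr (Or.inr ⟨rfl, hvb⟩)⟩
  have hFv : ∀ i u, F i s(v,u) = 0 := by
    intro i u
    refine Cc_zero (mem_Zc.1 (hF.mem i)).1 ?_
    rw [← hK, hKadj]; tauto
  have hSv : ∀ S ∈ Zc G, S s(v,a) = S s(v,b) := by
    intro S hS
    have h1 := Zc_sum hS v
    rw [star2 hab] at h1
    · exact z2_eq_of_add h1
    · intro u hu hu2
      refine Cc_zero (mem_Zc.1 hS).1 fun h => ?_
      rcases hcon u h with h | h
      · exact hu h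
      · exact hu2 h
  have hS0 : ∀ S ∈ Zc G, ∀ u, u ≠ a → u ≠ b → S s(v,u) = 0 := by
    intro S hS u hu hu2
    refine Cc_zero (mem_Zc.1 hS).1 fun h => ?_
    rcases hcon u h with h | h
    · exact hu h
    · exact hu2 h
  have tap := tri_ap hva.ne hvb.ne hab
  have n1 : s(a,b) ≠ s(v,a) := by rw [Ne, Sym2.eq_iff]; have := hva.ne; have := hvb.ne; tauto
  have n2 : s(a,b) ≠ s(v,b) := by rw [Ne, Sym2.eq_iff]; have := hva.ne; have := hvb.ne; tauto
  -- any chain on `G + ab` with no edges at v is on K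
  have hmem : ∀ S : ES V, bd S = 0 → (∀ u, S s(v,u) = 0) → (∀ p q, S s(p,q) ≠ 0 → G.Adj p q ∨ s(p,q) = s(a,b)) → S ∈ Zc K := by
    intro S h1 h2 h3
    rw [mem_Zc]
    refine ⟨Cc_of fun p q hpq => ?_, h1⟩
    rw [hKadj]
    refine ⟨?_, ?_, h3 p q hpq⟩
    · rintro rfl; exact hpq (h2 q)
    · rintro rfl; rw [Sym2.eq_swap] at hpq; exact hpq (h2 p)
  have htv : ∀ u, tri v a b s(v,u) = if u = a ∨ u = b then 1 else 0 := by
    intro u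
    rw [tap]
    have : s(v,u) ≠ s(a,b) := by rw [Ne, Sym2.eq_iff]; have := hva.ne; have := hvb.ne; tauto
    have e1 : ∀ c, s(v,u) = s(v,c) ↔ u = c := fun c => Sym2.congr_right
    simp only [this, e1, or_false]
  have hbt : bd (tri v a b) = 0 := by
    have : tri v a b ∈ Zc (⊤ : SimpleGraph V) := tri_mem hva.ne hvb.ne hab
    exact (mem_Zc.1 this).2
  by_cases habG : G.Adj a b
  · have hle : K ≤ G := by
      intro p q h
      rw [hKadj] at h
      rcases h.2.2 with h | h
      · exact h
      · have : s(p,q) ∈ G.edgeSet := by rw [h]; exact habG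
        exact this
    have hD := tri_mem hva hvb habG
    have hred : ∀ S ∈ Zc G, S ∈ Zc K ∨ S + tri v a b ∈ Zc K := by
      intro S hS
      have hS1 := mem_Zc.1 hS
      by_cases h : S s(v,a) = 0
      · left
        refine hmem S hS1.2 (fun u => ?_) (fun p q h => Or.inl (Cc_adj hS1.1 h))
        by_cases hu : u = a
        · rw [hu, h]
        · by_cases hu2 : u = b
          · rw [hu2, ← hSv S hS, h]
          · exact hS0 S hS u hu hu2
      · right
        refine hmem _ ?_ (fun u => ?_) (fun p q h => Or.inl (Cc_adj (mem_Zc.1 (Submodule.add_mem _ hS hD)).1 h))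
        · rw [map_add, hS1.2, hbt, add_zero]
        · rw [Pi.add_apply, htv]
          by_cases hu : u = a
          · rw [hu, z2 h]; simp; rfl
          · by_cases hu2 : u = b
            · rw [hu2, ← hSv S hS, z2 h]; simp; rfl
            · rw [hS0 S hS u hu hu2]; simp [hu, hu2]
    by_cases hex : ∃ i, F i s(a,b) ≠ 0
    · obtain ⟨i, hi⟩ := hex
      apply add_face hle hF hD hred i
      intro e he
      rcases tri_ne hva.ne hvb.ne hab he with h | h | h
      · right; rw [h]; exact fun i => hFv i a
      · right; rw [h]; exact fun i => hFv i b
      · left; rw [h]; exact hi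
    · push Not at hex
      apply add_face0 hle hF hD hred
      intro e he
      rcases tri_ne hva.ne hvb.ne hab he with h | h | h
      · rw [h]; exact fun i => hFv i a
      · rw [h]; exact fun i => hFv i b
      · rw [h]; exact hex
  · refine ⟨ι, inferInstance, fun i => F i + F i s(a,b) • tri v a b, ?_, ?_, ?_⟩
    · intro i
      have hFi := mem_Zc.1 (hF.mem i)
      rw [mem_Zc, map_add, map_smul, hFi.2, hbt]
      refine ⟨Cc_of fun p q hpq => ?_, by simp⟩
      rw [Pi.add_apply, Pi.smul_apply, smul_eq_mul, tap] at hpq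
      by_cases h1 : s(p,q) = s(a,b)
      · exfalso; apply hpq; rw [h1]; simp [z2add]
      · by_cases h2 : s(p,q) = s(v,a)
        · have : s(p,q) ∈ G.edgeSet := by rw [h2]; exact hva
          exact this
        · by_cases h3 : s(p,q) = s(v,b)
          · have : s(p,q) ∈ G.edgeSet := by rw [h3]; exact hvb
            exact this
          · have : F i s(p,q) ≠ 0 := by simpa [h1, h2, h3] using hpq
            have := Cc_adj hFi.1 this
            rw [← hK, hKadj] at this
            rcases this.2.2 with h | h
            · exact h
            · exact absurd h h1
    · intro S hS
      have hS1 := mem_Zc.1 hS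
      obtain ⟨c, hc⟩ := hF.span (S + S s(v,a) • tri v a b) (by
        refine hmem _ ?_ (fun u => ?_) (fun p q h => ?_)
        · rw [map_add, map_smul, hS1.2, hbt]; simp
        · rw [Pi.add_apply, Pi.smul_apply, htv]
          by_cases hu : u = a
          · rw [hu]; simp [z2add]
          · by_cases hu2 : u = b
            · rw [hu2, ← hSv S hS]; simp [z2add]
            · rw [hS0 S hS u hu hu2]; simp [hu, hu2]
        · by_contra hn
          push Not at hn
          apply h
          rw [Pi.add_apply, Pi.smul_apply, tap, Cc_zero hS1.1 hn.1, if_neg]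
          · simp
          · rintro (h | h | h)
            · apply hn.1; have : s(p,q) ∈ G.edgeSet := by rw [h]; exact hva
              exact this
            · apply hn.1; have : s(p,q) ∈ G.edgeSet := by rw [h]; exact hvb
              exact this
            · exact hn.2 h)
      refine ⟨c, ?_⟩
      have h1 := congrFun hc s(a,b)
      rw [sum_ap, Pi.add_apply, Pi.smul_apply, tap, Cc_zero hS1.1 habG] at h1
      simp at h1
      simp only [smul_add, Finset.sum_add_distrib, smul_smul]
      rw [← hc, ← Finset.sum_smul, ← h1, add_assoc, esadd, add_zero]
    · have key : ∀ e i, (F i + F i s(a,b) • tri v a b) e = if e = s(a,b) then 0 else if e = s(v,a) ∨ e = s(v,b) then F i s(a,b) else F i e := by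
        intro e i
        rw [Pi.add_apply, Pi.smul_apply, smul_eq_mul, tap]
        by_cases h1 : e = s(a,b)
        · simp [h1, z2add]
        · by_cases h2 : e = s(v,a)
          · subst h2; simp [hFv, h1]
          · by_cases h3 : e = s(v,b)
            · subst h3; simp [hFv, h1]
            · simp [h1, h2, h3]
      intro e i j k hi hj hk
      simp only [key] at hi hj hk
      split_ifs at hi hj hk
      · exact absurd rfl hi
      · exact hF.m2 _ i j k hi hj hk
      · exact hF.m2 _ i j k hi hj hk

theorem L3 {G : SimpleGraph V} (hG : MinCx G) {v x y u : V} (hvx : G.Adj v x) (hvy : G.Adj v y)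
    (hxy : G.Adj x y) : ∃ c, G.Adj v c ∧ c ≠ x ∧ c ≠ y ∧ c ≠ u := by
  by_contra hcon
  have hcon : ∀ c, G.Adj v c → c = x ∨ c = y ∨ c = u := by
    intro c hc; by_contra h; push Not at h; exact hcon ⟨c, hc, h⟩
  obtain ⟨w, hw, hwx, hwy⟩ := L2 hG hvx hvy hxy.ne
  have hwu : w = u := by have := hcon w hw; tauto
  subst hwu
  apply hG.nfs
  set K := G.deleteEdges {s(x,y)} with hK
  have hle : K ≤ G := deleteEdges_le _
  obtain ⟨ι, _, F, hF, hsum⟩ := toFull (hG.sub hle hxy (by simp [hK]))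
  have hD := tri_mem hvx hvy hxy
  have hFxy : ∀ i, F i s(x,y) = 0 := by
    intro i
    refine Cc_zero (mem_Zc.1 (hF.mem i)).1 ?_
    simp [hK]
  have hKm : ∀ S ∈ Zc G, S s(x,y) = 0 → S ∈ Zc K := by
    intro S hS h0
    rw [mem_Zc] at *
    refine ⟨Cc_of fun p q hpq => ?_, hS.2⟩
    rw [hK, deleteEdges_adj]
    refine ⟨Cc_adj hS.1 hpq, ?_⟩
    intro h
    rw [Set.mem_singleton_iff] at h
    rw [h] at hpq; exact hpq h0
  have hred : ∀ S ∈ Zc G, S ∈ Zc K ∨ S + tri v x y ∈ Zc K := by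
    intro S hS
    by_cases h : S s(x,y) = 0
    · left; exact hKm S hS h
    · right
      apply hKm _ (Submodule.add_mem _ hS hD)
      rw [Pi.add_apply, z2 h, tri_ap hvx.ne hvy.ne hxy.ne]
      simp; rfl
  have hst : ∀ i, F i s(v,x) + F i s(v,y) + F i s(v,w) = 0 := by
    intro i
    have h1 := Zc_sum (hF.mem i) v
    rw [star3 hxy.ne hwx.symm hwy.symm] at h1
    · exact h1
    · intro u h1 h2 h3
      refine Cc_zero (mem_Zc.1 (hF.mem i)).1 fun h => ?_
      have := hcon u (hle h)
      tauto
  have z3 : ∀ {p q r : ZMod 2}, p + q + r = 0 → p ≠ 0 → q = 0 → r ≠ 0 := by decide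
  -- general step: a face with one of the edges but none with both
  have step : ∀ p q : V, (∀ i, F i s(v,p) + F i s(v,q) + F i s(v,w) = 0) →
      (¬ ∃ i, F i s(v,p) ≠ 0 ∧ F i s(v,q) ≠ 0) → ∀ i, F i s(v,p) ≠ 0 → ∀ j, F j s(v,q) = 0 := by
    intro p q hpq hno i hi j
    by_contra hj
    have hn : ∀ i, F i s(v,p) ≠ 0 → F i s(v,q) = 0 := by
      intro i hi; by_contra h; exact hno ⟨i, hi, h⟩
    obtain ⟨k, hki, hk⟩ := partner1 hsum hi
    have h1 := z3 (hpq i) hi (hn i hi)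
    have h2 := z3 (hpq k) hk (hn k hk)
    have h3 : F j s(v,p) = 0 := by by_contra h; exact hj (hn j h)
    have h4 : F j s(v,w) ≠ 0 := z3 (by rw [← hpq j]; ring) hj h3
    rcases hF.m2 _ i k j h1 h2 h4 with h | h | h
    · exact hki h.symm
    · rw [h] at hi; exact hi h3
    · rw [h] at hk; exact hk h3
  by_cases hex : ∃ i, F i s(v,x) ≠ 0 ∧ F i s(v,y) ≠ 0
  · obtain ⟨i, h1, h2⟩ := hex
    apply add_face hle hF hD hred i
    intro e he
    rcases tri_ne hvx.ne hvy.ne hxy.ne he with h | h | h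
    · left; rw [h]; exact h1
    · left; rw [h]; exact h2
    · right; rw [h]; exact hFxy
  · by_cases hx : ∃ i, F i s(v,x) ≠ 0
    · obtain ⟨i, hi⟩ := hx
      apply add_face hle hF hD hred i
      intro e he
      rcases tri_ne hvx.ne hvy.ne hxy.ne he with h | h | h
      · left; rw [h]; exact hi
      · right; rw [h]; exact step x y hst hex i hi
      · right; rw [h]; exact hFxy
    · push Not at hx
      by_cases hy : ∃ i, F i s(v,y) ≠ 0
      · obtain ⟨i, hi⟩ := hy
        apply add_face hle hF hD hred i
        intro e he
        rcases tri_ne hvx.ne hvy.ne hxy.ne he with h | h | h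
        · right; rw [h]; exact hx
        · left; rw [h]; exact hi
        · right; rw [h]; exact hFxy
      · push Not at hy
        apply add_face0 hle hF hD hred
        intro e he
        rcases tri_ne hvx.ne hvy.ne hxy.ne he with h | h | h
        · rw [h]; exact hx
        · rw [h]; exact hy
        · rw [h]; exact hFxy

theorem drop_face {G : SimpleGraph V} (h : FS G) (e : Sym2 V) :
    ∃ (ι : Type) (_ : Fintype ι) (F : ι → ES V), FSp G F ∧ ∀ i j, F i e ≠ 0 → F j e ≠ 0 → i = j := by
  obtain ⟨ι, _, F, hF, hsum⟩ := toFull h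
  by_cases hex : ∃ i, F i e ≠ 0
  · obtain ⟨i0, hi0⟩ := hex
    refine ⟨ι, inferInstance, fun i => if i = i0 then 0 else F i, ⟨?_, ?_, ?_⟩, ?_⟩
    · intro i
      split_ifs
      · exact Submodule.zero_mem _
      · exact hF.mem i
    · intro S hS
      obtain ⟨c, hc⟩ := hF.span S hS
      refine ⟨fun i => c i + c i0, ?_⟩
      have h1 : ∀ i, (c i + c i0) • (if i = i0 then 0 else F i) = c i • F i + c i0 • F i := by
        intro i
        split_ifs with h
        · rw [h, esadd]; simp
        · rw [add_smul]
      simp only [h1, Finset.sum_add_distrib]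
      rw [← hc, ← Finset.smul_sum, hsum]; simp
    · intro e i j k hi hj hk
      simp only at hi hj hk
      split_ifs at hi hj hk
      · exact absurd rfl hi
      · exact absurd rfl hi
      · exact absurd rfl hi
      · exact absurd rfl hi
      · exact absurd rfl hj
      · exact absurd rfl hj
      · exact absurd rfl hk
      · exact hF.m2 e i j k hi hj hk
    · intro i j hi hj
      simp only at hi hj
      split_ifs at hi hj with h1 h2
      · exact absurd rfl hi
      · exact absurd rfl hi
      · exact absurd rfl hj
      · rcases hF.m2 e i j i0 hi hj hi0 with h | h | h
        · exact h
        · exact absurd h h1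
        · contradiction
  · push Not at hex
    exact ⟨ι, inferInstance, F, hF, fun i j hi => absurd (hex i) hi⟩

theorem glue {G1 G2 G : SimpleGraph V} (f1 : FS G1) (f2 : FS G2) (h1 : G1 ≤ G) (h2 : G2 ≤ G) (e0 : Sym2 V)
    (hinter : ∀ e ∈ G1.edgeSet, e ∈ G2.edgeSet → e = e0)
    (hsp : ∀ S ∈ Zc G, ∃ S1 ∈ Zc G1, S + S1 ∈ Zc G2) : FS G := by
  obtain ⟨ι1, _, F1, hF1, u1⟩ := drop_face f1 e0
  obtain ⟨ι2, _, F2, hF2, u2⟩ := drop_face f2 e0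
  refine ⟨ι1 ⊕ ι2, inferInstance, Sum.elim F1 F2, ?_, ?_, ?_⟩
  · rintro (i | i)
    · exact Zc_mono h1 (hF1.mem i)
    · exact Zc_mono h2 (hF2.mem i)
  · intro S hS
    obtain ⟨S1, hS1, hS2⟩ := hsp S hS
    obtain ⟨c1, hc1⟩ := hF1.span _ hS1
    obtain ⟨c2, hc2⟩ := hF2.span _ hS2
    refine ⟨Sum.elim c1 c2, ?_⟩
    rw [Fintype.sum_sum_type]
    simp only [Sum.elim_inl, Sum.elim_inr]
    rw [← hc1, ← hc2, add_comm, add_assoc, esadd, add_zero]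
  · have hx : ∀ e i j, F1 i e ≠ 0 → F2 j e ≠ 0 → e = e0 := by
      intro e i j hi hj
      exact hinter e ((mem_Zc.1 (hF1.mem i)).1 e hi) ((mem_Zc.1 (hF2.mem j)).1 e hj)
    rintro e (i | i) (j | j) (k | k) hi hj hk <;> simp only [Sum.elim_inl, Sum.elim_inr] at hi hj hk
    · rcases hF1.m2 e i j k hi hj hk with h | h | h <;> simp [h]
    · have := hx e i k hi hk; subst this; simp [u1 i j hi hj]
    · have := hx e i j hi hj; subst this; simp [u1 i k hi hk]
    · have := hx e i k hi hk; subst this; simp [u2 j k hj hk]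
    · have := hx e j i hj hi; subst this; simp [u1 j k hj hk]
    · have := hx e j k hj hk; subst this; simp [u2 i k hi hk]
    · have := hx e k j hk hj; subst this; simp [u2 i j hi hj]
    · rcases hF2.m2 e i j k hi hj hk with h | h | h <;> simp [h]

/-- delete two vertices -/
def del2 (G : SimpleGraph V) (x y : V) : SimpleGraph V where
  Adj p q := G.Adj p q ∧ p ≠ x ∧ p ≠ y ∧ q ≠ x ∧ q ≠ y
  symm := ⟨fun p q h => ⟨h.1.symm, h.2.2.2.1, h.2.2.2.2, h.2.1, h.2.2.1⟩⟩
  loopless := ⟨fun p h => h.1.ne rfl⟩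

theorem del2_le (G : SimpleGraph V) (x y : V) : del2 G x y ≤ G := fun _ _ h => h.1

theorem reach_not {H : SimpleGraph V} {p x : V} (hx : ∀ q, ¬ H.Adj x q) (h : H.Reachable p x) : p = x := by
  obtain ⟨w⟩ := h.symm
  cases w with
  | nil => rfl
  | cons h _ => exact absurd h (hx _)

theorem L4 {G : SimpleGraph V} (hG : MinCx G) {x y : V} (hxy : G.Adj x y) {p q p' q' : V}
    (hpp : G.Adj p p') (hqq : G.Adj q q') (hpx : p ≠ x) (hpy : p ≠ y) (hqx : q ≠ x) (hqy : q ≠ y) :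
    (del2 G x y).Reachable p q := by
  by_contra hnr
  apply hG.nfs
  set H := del2 G x y with hH
  set A : V → Prop := fun r => H.Reachable p r with hA
  have hxA : ¬ A x := fun h => hpx (reach_not (fun q (h : (del2 G x y).Adj x q) => h.2.1 rfl) h)
  have hyA : ¬ A y := fun h => hpy (reach_not (fun q (h : (del2 G x y).Adj y q) => h.2.2.1 rfl) h)
  have hstep : ∀ a b, A a → G.Adj a b → A b ∨ b = x ∨ b = y := by
    intro a b ha hab
    by_contra hn
    push Not at hn
    refine hn.1 (ha.trans (Adj.reachable ⟨hab, ?_, ?_, hn.2.1, hn.2.2⟩))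
    · rintro rfl; exact hxA ha
    · rintro rfl; exact hyA ha
  let G1 : SimpleGraph V :=
    { Adj := fun a b => G.Adj a b ∧ (A a ∨ a = x ∨ a = y) ∧ (A b ∨ b = x ∨ b = y)
      symm := ⟨fun a b h => ⟨h.1.symm, h.2.2, h.2.1⟩⟩
      loopless := ⟨fun a h => h.1.ne rfl⟩ }
  let G2 : SimpleGraph V :=
    { Adj := fun a b => G.Adj a b ∧ ¬ A a ∧ ¬ A b
      symm := ⟨fun a b h => ⟨h.1.symm, h.2.2, h.2.1⟩⟩
      loopless := ⟨fun a h => h.1.ne rfl⟩ }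
  have hpA : A p := Reachable.refl _
  have f1 : FS G1 := hG.sub (fun a b h => h.1) hqq (fun h => by have := h.2.1; tauto)
  have f2 : FS G2 := hG.sub (fun a b h => h.1) hpp (fun h => h.2.1 hpA)
  refine glue f1 f2 (fun a b h => h.1) (fun a b h => h.1) s(x,y) ?_ ?_
  · intro e
    induction e with | _ a b =>
    rintro ⟨h1, h2, h3⟩ ⟨_, h4, h5⟩
    simp only at *
    have := h1.ne
    rw [Sym2.eq_iff]
    rcases h2 with h | h | h
    · exact absurd h h4
    · rcases h3 with h' | h' | h'
      · exact absurd h' h5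
      · exact absurd (h.trans h'.symm) this
      · exact Or.inl ⟨h, h'⟩
    · rcases h3 with h' | h' | h'
      · exact absurd h' h5
      · exact Or.inr ⟨h, h'⟩
      · exact absurd (h.trans h'.symm) this
  · intro S hS
    have hS1 := mem_Zc.1 hS
    -- part of S touching A
    let S1 : ES V := fun e => if ∃ r ∈ e, A r then S e else 0
    have hv1 : ∀ r, A r → bd S1 r = 0 := by
      intro r hr
      rw [bd_apply, ← Zc_sum hS r]
      apply Finset.sum_congr rfl
      intro u _
      simp only [S1]
      rw [if_pos ⟨r, by simp, hr⟩]
    have hS1C : S1 ∈ Cc G1 := by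
      apply Cc_of
      intro a b hab
      simp only [S1] at hab
      split_ifs at hab with h
      · have hadj := Cc_adj hS1.1 hab
        obtain ⟨r, hr, hrA⟩ := h
        rw [Sym2.mem_iff] at hr
        rcases hr with rfl | rfl
        · exact ⟨hadj, Or.inl hrA, hstep _ _ hrA hadj⟩
        · exact ⟨hadj, hstep _ _ hrA hadj.symm, Or.inl hrA⟩
      · exact absurd rfl hab
    have hv2 : ∀ r, ¬ A r → r ≠ x → r ≠ y → bd S1 r = 0 := by
      intro r hr hrx hry
      rw [bd_apply]
      apply Finset.sum_eq_zero
      intro u _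
      refine Cc_zero hS1C fun h => ?_
      have := h.2.1
      tauto
    have hsum := handshake0 hS1C
    have hbd : bd S1 = bd S1 x • (dl x + dl y) := by
      have h1 : bd S1 x + bd S1 y = 0 := by
        rw [← Finset.sum_pair (f := fun r => bd S1 r) hxy.ne, ← hsum]
        apply Finset.sum_subset (Finset.subset_univ _)
        intro r _ hr
        simp only [Finset.mem_insert, Finset.mem_singleton, not_or] at hr
        by_cases hAr : A r
        · exact hv1 r hAr
        · exact hv2 r hAr hr.1 hr.2
      funext r
      simp only [Pi.smul_apply, Pi.add_apply, dl_apply]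
      by_cases hrx : r = x
      · subst hrx; simp [hxy.ne]
      · by_cases hry : r = y
        · subst hry; simp [hrx, z2_eq_of_add h1]
        · simp only [hrx, hry, if_false, add_zero, smul_zero]
          by_cases hAr : A r
          · exact hv1 r hAr
          · exact hv2 r hAr hrx hry
    have hT : S1 + bd S1 x • ed x y ∈ Zc G1 := by
      rw [mem_Zc]
      constructor
      · refine Submodule.add_mem _ hS1C (Submodule.smul_mem _ _ (ed_Cc ⟨hxy, by tauto, by tauto⟩))
      · rw [map_add, map_smul, bd_ed hxy.ne, ← hbd, esadd]
    refine ⟨_, hT, ?_⟩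
    rw [mem_Zc]
    constructor
    · rw [← add_assoc]
      refine Submodule.add_mem _ (Cc_of fun a b hab => ?_) (Submodule.smul_mem _ _ (ed_Cc ⟨hxy, hxA, hyA⟩))
      rw [Pi.add_apply] at hab
      simp only [S1] at hab
      split_ifs at hab with h
      · exact absurd (z2add _) hab
      · rw [add_zero] at hab
        refine ⟨Cc_adj hS1.1 hab, fun h1 => h ⟨a, by simp, h1⟩, fun h1 => h ⟨b, by simp, h1⟩⟩
    · rw [map_add, hS1.2, (mem_Zc.1 hT).2, add_zero]

theorem deg3 {G : SimpleGraph V} (hG : MinCx G) {v w : V} (h : G.Adj v w) (a b : V) :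
    ∃ c, G.Adj v c ∧ c ≠ a ∧ c ≠ b := by
  obtain ⟨w2, h2, hne⟩ := L1 hG h
  obtain ⟨w3, h3, hne3, hne4⟩ := L2 hG h h2 hne.symm
  by_contra hcon
  push Not at hcon
  have k1 := hcon w h
  have k2 := hcon w2 h2
  have k3 := hcon w3 h3
  by_cases w = a <;> by_cases w2 = a <;> by_cases w3 = a <;> simp_all

theorem degH {G : SimpleGraph V} (hG : MinCx G) {x y : V} (hxy : G.Adj x y) {v w : V} (h : G.Adj v w)
    (hvx : v ≠ x) (hvy : v ≠ y) (u : V) : ∃ c, (del2 G x y).Adj v c ∧ c ≠ u := by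
  by_cases h1 : G.Adj v x
  · by_cases h2 : G.Adj v y
    · obtain ⟨c, hc, h3, h4, h5⟩ := L3 hG (u := u) h1 h2 hxy
      exact ⟨c, ⟨hc, hvx, hvy, h3, h4⟩, h5⟩
    · obtain ⟨c, hc, h3, h4⟩ := deg3 hG h x u
      refine ⟨c, ⟨hc, hvx, hvy, h3, ?_⟩, h4⟩
      rintro rfl; exact h2 hc
  · obtain ⟨c, hc, h3, h4⟩ := deg3 hG h y u
    refine ⟨c, ⟨hc, hvx, hvy, ?_, h3⟩, h4⟩
    rintro rfl; exact h1 hc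

end Theta6

namespace Theta6
universe u
open scoped Classical
set_option linter.unusedSectionVars false
set_option linter.unusedVariables false
variable {V : Type u} [Fintype V]

theorem contr_x {G : SimpleGraph V} {x y r : V} : (contr G x y).Adj x r ↔ r ≠ x ∧ x ≠ y ∧ r ≠ y ∧ (G.Adj x r ∨ G.Adj y r) := by
  simp only [contr]
  constructor
  · rintro ⟨h1, h2, h3, h | ⟨h4, h5⟩ | ⟨h4, h5⟩⟩
    · exact ⟨h1.symm, h2, h3, Or.inl h⟩
    · exact ⟨h1.symm, h2, h3, Or.inr h5⟩
    · exact absurd h4.symm h1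
  · rintro ⟨h1, h2, h3, h | h⟩
    · exact ⟨h1.symm, h2, h3, Or.inl h⟩
    · exact ⟨h1.symm, h2, h3, Or.inr (Or.inl ⟨trivial, h⟩)⟩

theorem contr_off {G : SimpleGraph V} {x y p q : V} (hp : p ≠ x) (hq : q ≠ x) :
    (contr G x y).Adj p q ↔ (del2 G x y).Adj p q := by
  simp only [contr, del2]
  constructor
  · rintro ⟨h1, h2, h3, h | ⟨h4, h5⟩ | ⟨h4, h5⟩⟩
    · exact ⟨h, hp, h2, hq, h3⟩
    · exact absurd h4 hp
    · exact absurd h4 hq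
  · rintro ⟨h1, h2, h3, h4, h5⟩
    exact ⟨h1.ne, h3, h5, Or.inl h1⟩

theorem del2_le_contr (G : SimpleGraph V) (x y : V) : del2 G x y ≤ contr G x y := by
  intro p q h
  exact (contr_off h.2.1 h.2.2.2.1).2 h

theorem H_starx {G : SimpleGraph V} {x y : V} {S : ES V} (h : S ∈ Cc (del2 G x y)) (u : V) : S s(x,u) = 0 :=
  Cc_zero h fun h => h.2.1 rfl

theorem H_stary {G : SimpleGraph V} {x y : V} {S : ES V} (h : S ∈ Cc (del2 G x y)) (u : V) : S s(y,u) = 0 :=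
  Cc_zero h fun h => h.2.2.1 rfl

/-- cycles of the contraction avoiding the contracted vertex live on `H` -/
theorem Zc_contr_off {G : SimpleGraph V} {x y : V} {S : ES V} (h : S ∈ Zc (contr G x y)) (h0 : ∀ u, S s(x,u) = 0) :
    S ∈ Zc (del2 G x y) := by
  rw [mem_Zc] at *
  refine ⟨Cc_of fun p q hpq => ?_, h.2⟩
  rw [← contr_off]
  · exact Cc_adj h.1 hpq
  · rintro rfl; exact hpq (h0 q)
  · rintro rfl; rw [Sym2.eq_swap] at hpq; exact hpq (h0 p)

theorem nbr_reach {G : SimpleGraph V} (hG : MinCx G) {x y : V} (hxy : G.Adj x y) {p q : V}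
    (hp : (contr G x y).Adj x p) (hq : (contr G x y).Adj x q) : (del2 G x y).Reachable p q := by
  rw [contr_x] at hp hq
  obtain ⟨p', hp'⟩ : ∃ p', G.Adj p p' := by
    rcases hp.2.2.2 with h | h
    · exact ⟨_, h.symm⟩
    · exact ⟨_, h.symm⟩
  obtain ⟨q', hq'⟩ : ∃ p', G.Adj q p' := by
    rcases hq.2.2.2 with h | h
    · exact ⟨_, h.symm⟩
    · exact ⟨_, h.symm⟩
  exact L4 hG hxy hp' hq' hp.1 hp.2.2.1 hq.1 hq.2.2.1

theorem contr_cycle {G : SimpleGraph V} (hG : MinCx G) {x y : V} (hxy : G.Adj x y) {p q : V}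
    (hp : (contr G x y).Adj x p) (hq : (contr G x y).Adj x q) :
    ∃ S ∈ Zc (contr G x y), ∀ u, S s(x,u) = (if u = p then 1 else 0) + (if u = q then 1 else 0) := by
  obtain ⟨c, hc, hb⟩ := chain (nbr_reach hG hxy hp hq)
  refine ⟨c + ed x p + ed x q, ?_, ?_⟩
  · rw [mem_Zc]
    refine ⟨Submodule.add_mem _ (Submodule.add_mem _ (Cc_mono (del2_le_contr _ _ _) hc) (ed_Cc hp)) (ed_Cc hq), ?_⟩
    rw [map_add, map_add, hb, bd_ed hp.ne, bd_ed hq.ne]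
    calc _ = (dl x + dl x) + (dl p + dl p) + (dl q + dl q) := by abel
      _ = 0 := by rw [dladd, dladd, dladd]; simp
  · intro u
    rw [Pi.add_apply, Pi.add_apply, H_starx hc, zero_add, ed_apply, ed_apply]
    have e1 : ∀ c, s(x,u) = s(x,c) ↔ u = c := fun c => Sym2.congr_right
    simp only [e1]

/-- (i) cycles of `H` are spanned by faces avoiding the contracted vertex -/
theorem L5a {G : SimpleGraph V} (hG : MinCx G) {x y : V} (hxy : G.Adj x y) {ι : Type} [Fintype ι] {F : ι → ES V}
    (hF : FSp (contr G x y) F) (hsum : ∑ i, F i = 0) {S : ES V} (hS : S ∈ Zc (del2 G x y)) :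
    ∃ c : ι → ZMod 2, S = ∑ i, c i • F i ∧ ∀ i, c i ≠ 0 → ∀ u, F i s(x,u) = 0 := by
  obtain ⟨d, hd⟩ := hF.span S (Zc_mono (del2_le_contr _ _ _) hS)
  have hvan : ∀ u, (∑ i, d i • F i) s(x,u) = 0 := by
    intro u; rw [← hd]; exact H_starx (mem_Zc.1 hS).1 u
  by_cases hE : ∃ u i, d i ≠ 0 ∧ F i s(x,u) ≠ 0
  · obtain ⟨p, hE⟩ := hE
    have hp : (contr G x y).Adj x p := by
      obtain ⟨i, _, hi⟩ := hE; exact Cc_adj (mem_Zc.1 (hF.mem i)).1 hi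
    have hall : ∀ q, (contr G x y).Adj x q → ∃ i, d i ≠ 0 ∧ F i s(x,q) ≠ 0 := by
      intro q hq
      by_cases hpq : p = q
      · rw [← hpq]; exact hE
      · obtain ⟨T, hT, hTx⟩ := contr_cycle hG hxy hp hq
        refine hom hF hvan hT (a := p) (b := q) ?_ hE ?_
        · intro u h1 h2; rw [hTx]; simp [h1, h2]
        · rw [hTx]; simp [hpq]
    refine ⟨fun i => d i + 1, ?_, ?_⟩
    · simp only [add_smul, Finset.sum_add_distrib, one_smul]
      rw [hsum, ← hd, add_zero]
    · intro j hj u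
      by_contra hu
      obtain ⟨i, hi, hiu⟩ := hall u (Cc_adj (mem_Zc.1 (hF.mem j)).1 hu)
      have h1 := hvan u
      rw [sum_ap] at h1
      obtain ⟨k, hki, hck, hk⟩ := partner h1 hi hiu
      have hdj : d j ≠ 0 := by
        rcases hF.m2 _ i k j hiu hk hu with h | h | h
        · exact absurd h.symm hki
        · exact h ▸ hi
        · exact h ▸ hck
      simp only [z2 hdj] at hj
      exact hj (by decide)
  · push Not at hE
    exact ⟨d, hd, fun i hi u => hE u i hi⟩

theorem proj {G : SimpleGraph V} {x y : V} (hxy : G.Adj x y) {S : ES V} (hS : S ∈ Zc G) :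
    ∃ S' ∈ Zc (contr G x y), ∀ a b, (del2 G x y).Adj a b → S' s(a,b) = S s(a,b) := by
  have hS1 := mem_Zc.1 hS
  let S' : ES V := fun e => if y ∈ e then 0 else if x ∈ e then S e + S (Sym2.map (fun v => if v = x then y else v) e) else S e
  have hne := hxy.ne
  have v1 : ∀ u, S' s(y,u) = 0 := by intro u; simp [S']
  have v2 : ∀ u, u ≠ x → u ≠ y → S' s(x,u) = S s(x,u) + S s(y,u) := by
    intro u h1 h2
    simp only [S', Sym2.mem_iff, hne.symm, h2.symm, Sym2.map_mk, h1]
    simp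
  have v3 : ∀ v u, v ≠ x → v ≠ y → u ≠ x → u ≠ y → S' s(v,u) = S s(v,u) := by
    intro v u h1 h2 h3 h4
    simp [S', h1.symm, h2.symm, h3.symm, h4.symm]
  have v4 : S' s(x,x) = 0 := by
    simp only [S', Sym2.mem_iff, hne.symm, Sym2.map_mk]
    simp [Cc_diag hS1.1]
  refine ⟨S', ?_, fun a b h => v3 a b h.2.1 h.2.2.1 h.2.2.2.1 h.2.2.2.2⟩
  rw [mem_Zc]
  constructor
  · have main : ∀ r, S' s(x,r) ≠ 0 → (contr G x y).Adj x r := by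
      intro r hr
      by_cases hrx : r = x
      · subst hrx; exact absurd v4 hr
      · by_cases hry : r = y
        · subst hry; rw [Sym2.eq_swap] at hr; exact absurd (v1 _) hr
        · rw [v2 r hrx hry] at hr
          rw [contr_x]
          refine ⟨hrx, hne, hry, ?_⟩
          by_contra hn
          push Not at hn
          apply hr
          rw [Cc_zero hS1.1 hn.1, Cc_zero hS1.1 hn.2, add_zero]
    apply Cc_of
    intro a b hab
    by_cases ha : a = x
    · subst ha; exact main b hab
    · by_cases hb : b = x
      · subst hb; rw [Sym2.eq_swap] at hab; exact (main a hab).symm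
      · have h1 : a ≠ y := by rintro rfl; exact hab (v1 _)
        have h2 : b ≠ y := by rintro rfl; rw [Sym2.eq_swap] at hab; exact hab (v1 _)
        rw [contr_off ha hb]
        rw [v3 a b ha h1 hb h2] at hab
        exact ⟨Cc_adj hS1.1 hab, ha, h1, hb, h2⟩
  · funext v
    rw [bd_apply, Pi.zero_apply]
    by_cases hvy : v = y
    · subst hvy; exact Finset.sum_eq_zero fun u _ => v1 u
    · by_cases hvx : v = x
      · subst hvx
        have : ∀ u, S' s(v,u) = S s(v,u) + S s(y,u) + ((if u = v then S s(y,v) else 0) + (if u = y then S s(y,v) else 0)) := by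
          intro u
          by_cases h1 : u = v
          · subst h1; simp [v4, Cc_diag hS1.1, hvy, z2add]
          · by_cases h2 : u = y
            · subst h2; rw [Sym2.eq_swap, v1, Sym2.eq_swap]; simp [h1, Cc_diag hS1.1, z2add]
            · rw [v2 u h1 h2]; simp [h1, h2]
        simp only [this, Finset.sum_add_distrib]
        rw [Zc_sum hS, Zc_sum hS]
        simp [z2add]
      · have : ∀ u, S' s(v,u) = S s(v,u) + ((if u = x then S s(y,v) else 0) + (if u = y then S s(y,v) else 0)) := by
          intro u
          by_cases h1 : u = x
          · subst h1; rw [Sym2.eq_swap, v2 v hvx hvy]; simp [Sym2.eq_swap, hne]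
          · by_cases h2 : u = y
            · subst h2; rw [Sym2.eq_swap, v1]; simp [h1, Sym2.eq_swap, z2add]
            · rw [v3 v u hvx hvy h1 h2]; simp [h1, h2]
        simp only [this, Finset.sum_add_distrib]
        rw [Zc_sum hS]
        simp [z2add]

/-- normalise coefficients so that faces through `e` have coefficient zero -/
theorem normalise {G : SimpleGraph V} {ι : Type} [Fintype ι] {F : ι → ES V} (hF : FSp G F) (hsum : ∑ i, F i = 0)
    {D : ES V} (hD : D ∈ Zc G) {e : Sym2 V} (he : D e = 0) :
    ∃ c : ι → ZMod 2, D = ∑ i, c i • F i ∧ ∀ i, F i e ≠ 0 → c i = 0 := by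
  obtain ⟨d, hd⟩ := hF.span D hD
  by_cases hE : ∃ i, d i ≠ 0 ∧ F i e ≠ 0
  · obtain ⟨i, hi, hie⟩ := hE
    rw [hd, sum_ap] at he
    obtain ⟨k, hki, hck, hk⟩ := partner he hi hie
    refine ⟨fun i => d i + 1, ?_, ?_⟩
    · simp only [add_smul, Finset.sum_add_distrib, one_smul]
      rw [hsum, ← hd, add_zero]
    · intro j hj
      have hdj : d j ≠ 0 := by
        rcases hF.m2 _ i k j hie hk hj with h | h | h
        · exact absurd h.symm hki
        · exact h ▸ hi
        · exact h ▸ hck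
      simp only [z2 hdj]; decide
  · refine ⟨d, hd, fun i hi => ?_⟩
    by_contra h; exact hE ⟨i, h, hi⟩

/-- final assembly of the new family -/
theorem assemble {G : SimpleGraph V} {ι ι1 : Type} [Fintype ι] [Fintype ι1] {F : ι → ES V} {g F1 : ι1 → ES V}
    (A : ι → Prop) {D : ES V} (hDs : D = ∑ i, (if A i then F i else 0)) (hm : M2 F) (hm1 : M2 F1)
    (hFm : ∀ i, A i → F i ∈ Zc G) (hgm : ∀ i, g i ∈ Zc G)
    (hI : ∀ e i j, i ≠ j → A i → A j → F i e ≠ 0 → F j e ≠ 0 → ∀ k, g k e = 0)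
    (hD0 : ∀ e, D e = 0 → ∀ i, g i e = F1 i e)
    (hD1 : ∀ e, D e ≠ 0 → ∀ i j, g i e ≠ 0 → g j e ≠ 0 → i = j)
    (hsp : ∀ S ∈ Zc G, ∃ (c' : ι → ZMod 2) (c : ι1 → ZMod 2) (t : ZMod 2),
      S + ∑ i, c' i • (if A i then F i else 0) = ∑ i, c i • g i + t • D) : FS G := by
  refine ⟨ι1 ⊕ ι, inferInstance, Sum.elim g (fun i => if A i then F i else 0), ?_, ?_, ?_⟩
  · rintro (i | i)
    · exact hgm i
    · simp only [Sum.elim_inr]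
      split_ifs with h
      · exact hFm i h
      · exact Submodule.zero_mem _
  · intro S hS
    obtain ⟨c', c, t, h⟩ := hsp S hS
    refine ⟨Sum.elim c (fun i => t + c' i), ?_⟩
    rw [Fintype.sum_sum_type]
    simp only [Sum.elim_inl, Sum.elim_inr, add_smul, Finset.sum_add_distrib]
    rw [← Finset.smul_sum, ← hDs, ← add_assoc, ← h, add_assoc, esadd, add_zero]
  · have hA : ∀ {e i}, (if A i then F i else 0) e ≠ 0 → A i ∧ F i e ≠ 0 := by
      intro e i h
      split_ifs at h with h1
      · exact ⟨h1, h⟩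
      · exact absurd rfl h
    have key1 : ∀ e i k l, (if A i then F i else 0) e ≠ 0 → g k e ≠ 0 → g l e ≠ 0 → k = l := by
      intro e i k l hi hk hl
      have hi' := hA hi
      have hDe : D e ≠ 0 := by
        rw [hDs, Finset.sum_apply, Finset.sum_eq_single i]
        · exact hi
        · intro j _ hj
          by_contra h
          have hj' := hA h
          exact hk (hI e i j hj.symm hi'.1 hj'.1 hi'.2 hj'.2 k)
        · simp
      exact hD1 e hDe k l hk hl
    have key2 : ∀ e i j k, (if A i then F i else 0) e ≠ 0 → (if A j then F j else 0) e ≠ 0 → g k e ≠ 0 → i = j := by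
      intro e i j k hi hj hk
      by_contra hij
      exact hk (hI e i j hij (hA hi).1 (hA hj).1 (hA hi).2 (hA hj).2 k)
    rintro e (i | i) (j | j) (k | k) hi hj hk <;> simp only [Sum.elim_inl, Sum.elim_inr] at hi hj hk
    · by_cases hDe : D e = 0
      · rw [hD0 e hDe] at hi hj hk
        rcases hm1 e i j k hi hj hk with h | h | h <;> simp [h]
      · left; rw [hD1 e hDe i j hi hj]
    · left; rw [key1 e k i j hk hi hj]
    · right; left; rw [key1 e j i k hj hi hk]
    · right; right; rw [key2 e j k i hj hk hi]
    · right; right; rw [key1 e i j k hi hj hk]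
    · right; left; rw [key2 e i k j hi hk hj]
    · left; rw [key2 e i j k hi hj hk]
    · rcases hm e i j k (hA hi).2 (hA hj).2 (hA hk).2 with h | h | h <;> simp [h]


theorem L5b {G : SimpleGraph V} (hG : MinCx G) {x y : V} (hxy : G.Adj x y) {ι : Type} [Fintype ι] {F : ι → ES V}
    (hF : FSp (contr G x y) F) (hsum : ∑ i, F i = 0) {i0 j0 : ι} (hij : i0 ≠ j0)
    (hi0 : ∀ u, F i0 s(x,u) = 0) (hj0 : ∀ u, F j0 s(x,u) = 0) (e0 : Sym2 V) (hie : F i0 e0 ≠ 0) (hje : F j0 e0 ≠ 0) :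
    False := by
  apply hG.nfs
  have hne := hxy.ne
  set H := del2 G x y with hH
  let A : ι → Prop := Relation.ReflTransGen (fun i j => (∀ u, F j s(x,u) = 0) ∧ ∃ e, F i e ≠ 0 ∧ F j e ≠ 0) i0
  have hA0 : A i0 := Relation.ReflTransGen.refl
  have hAx : ∀ i, A i → ∀ u, F i s(x,u) = 0 := by
    intro i hi
    cases hi with
    | refl => exact hi0
    | tail _ h => exact h.1
  have hAcl : ∀ i j e, A i → (∀ u, F j s(x,u) = 0) → F i e ≠ 0 → F j e ≠ 0 → A j := by
    intro i j e hi hj h1 h2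
    exact Relation.ReflTransGen.tail hi ⟨hj, e, h1, h2⟩
  have hAj0 : A j0 := hAcl i0 j0 e0 hA0 hj0 hie hje
  have hAH : ∀ i, A i → F i ∈ Zc H := fun i hi => Zc_contr_off (hF.mem i) (hAx i hi)
  let I : Set (Sym2 V) := {e | ∃ i j, i ≠ j ∧ A i ∧ A j ∧ F i e ≠ 0 ∧ F j e ≠ 0}
  have hIH : ∀ e ∈ I, e ∈ H.edgeSet := by
    rintro e ⟨i, j, _, hi, _, h, _⟩
    exact (mem_Zc.1 (hAH i hi)).1 e h
  have hI3 : ∀ e ∈ I, ∀ k, F k e ≠ 0 → A k := by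
    rintro e ⟨i, j, hij, hi, hj, h, h'⟩ k hk
    rcases hF.m2 e i j k h h' hk with h | h | h
    · exact absurd h hij
    · exact h ▸ hi
    · exact h ▸ hj
  have he0 : e0 ∈ I := ⟨i0, j0, hij, hA0, hAj0, hie, hje⟩
  let G1 := G.deleteEdges I
  have hG1 : G1 ≤ G := deleteEdges_le _
  have hHG : H ≤ G := del2_le G x y
  obtain ⟨ι1, _, F1, hF1, hsum1⟩ : ∃ (ι : Type) (_ : Fintype ι) (F : ι → ES V), FSp G1 F ∧ ∑ i, F i = 0 := by
    apply toFull
    revert he0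
    clear hie hje
    induction e0 with | _ a b =>
    intro he0
    refine hG.sub hG1 (a := a) (b := b) (hHG (hIH _ he0)) ?_
    simp [G1, he0]
  have memG1 : ∀ S ∈ Zc G, (∀ e ∈ I, S e = 0) → S ∈ Zc G1 := by
    intro S hS h0
    rw [mem_Zc] at *
    refine ⟨Cc_of fun a b hab => ?_, hS.2⟩
    rw [deleteEdges_adj]
    exact ⟨Cc_adj hS.1 hab, fun h => hab (h0 _ h)⟩
  have G1I : ∀ S ∈ Zc G1, ∀ e ∈ I, S e = 0 := by
    intro S hS e he
    by_contra h
    have := (mem_Zc.1 hS).1 e h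
    rw [edgeSet_deleteEdges] at this
    exact this.2 he
  set D : ES V := ∑ i, (if A i then F i else 0) with hD
  have hDap : ∀ e, D e = ∑ i, (if A i then F i e else 0) := by
    intro e
    rw [hD, Finset.sum_apply]
    apply Finset.sum_congr rfl
    intro i _
    split_ifs <;> rfl
  have hDH : D ∈ Zc H := by
    apply Submodule.sum_mem
    intro i _
    split_ifs with h
    · exact hAH i h
    · exact Submodule.zero_mem _
  have hDI : ∀ e ∈ I, D e = 0 := by
    rintro e ⟨i, j, hij, hi, hj, h, h'⟩
    rw [hDap, ← Finset.sum_subset (Finset.subset_univ {i, j}), Finset.sum_pair hij, if_pos hi, if_pos hj, z2 h, z2 h']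
    · rfl
    · intro k _ hk
      simp only [Finset.mem_insert, Finset.mem_singleton, not_or] at hk
      by_contra hn
      have : F k e ≠ 0 := by
        intro h; apply hn; simp [h]
      rcases hF.m2 e i j k h h' this with h | h | h
      · exact hij h
      · exact hk.1 h.symm
      · exact hk.2 h.symm
  have hDG1 : D ∈ Zc G1 := memG1 D (Zc_mono hHG hDH) hDI
  -- an edge of D is in exactly one face avoiding x
  have hD1 : ∀ e, D e ≠ 0 → ∃ i, A i ∧ F i e ≠ 0 ∧ ∀ j, (∀ u, F j s(x,u) = 0) → F j e ≠ 0 → j = i := by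
    intro e he
    rw [hDap] at he
    obtain ⟨i, _, hi⟩ := Finset.exists_ne_zero_of_sum_ne_zero he
    have hAi : A i := by by_contra h; exact hi (if_neg h)
    rw [if_pos hAi] at hi
    refine ⟨i, hAi, hi, fun j hj hje => ?_⟩
    by_contra hji
    have : e ∈ I := ⟨i, j, Ne.symm hji, hAi, hAcl i j e hAi hj hi hje, hi, hje⟩
    exact he (hDap e ▸ hDI e this)
  -- W reachability
  let W := H.deleteEdges I
  have hWG1 : W ≤ G1 := by
    intro a b h
    simp only [W, G1, deleteEdges_adj] at *
    exact ⟨hHG h.1, h.2⟩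
  have hWH : W ≤ H := deleteEdges_le _
  have hWr : ∀ p q, (contr G x y).Adj x p → (contr G x y).Adj x q → W.Reachable p q := by
    intro p q hp hq
    let K : Finset V := Finset.univ.filter (fun r => W.Reachable p r)
    have hxK : x ∉ K := by
      intro h
      simp only [K, Finset.mem_filter] at h
      exact hp.ne (reach_not (fun q h => (hWH h).2.1 rfl) h.2).symm
    have lam : ∀ j, ∑ r ∈ K, F j s(x,r) = 0 := by
      intro j
      by_cases hj : A j
      · exact Finset.sum_eq_zero fun r _ => hAx j hj r
      · have hz := mem_Zc.1 (hF.mem j)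
        have h1 := handshake hz.1 K
        rw [hz.2] at h1
        simp only [Pi.zero_apply, Finset.sum_const_zero] at h1
        rw [h1]
        apply Finset.sum_congr rfl
        intro v hv
        rw [Finset.sum_eq_single x, Sym2.eq_swap]
        · intro u hu hux
          by_contra hn
          have hadj := Cc_adj hz.1 hn
          have hvx : v ≠ x := by rintro rfl; exact hxK hv
          rw [contr_off hvx hux] at hadj
          apply Finset.mem_compl.1 hu
          simp only [K, Finset.mem_filter, Finset.mem_univ, true_and] at hv ⊢
          refine hv.trans (Adj.reachable ?_)
          simp only [W, deleteEdges_adj]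
          exact ⟨hadj, fun h => hj (hI3 _ h j hn)⟩
        · intro h
          exact absurd (Finset.mem_compl.2 hxK) h
    obtain ⟨T, hT, hTx⟩ := contr_cycle hG hxy hp hq
    obtain ⟨d, hd⟩ := hF.span T hT
    have h2 : ∑ r ∈ K, T s(x,r) = 0 := by
      rw [hd]
      simp only [sum_ap]
      rw [Finset.sum_comm]
      apply Finset.sum_eq_zero
      intro j _
      rw [← Finset.mul_sum, lam, mul_zero]
    simp only [hTx, Finset.sum_add_distrib, Finset.sum_ite_eq'] at h2
    have hpK : p ∈ K := by simp [K]
    by_contra hn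
    have hqK : q ∉ K := by simpa [K] using hn
    simp [hpK, hqK] at h2
  -- coefficients
  obtain ⟨c, hc, hcxy⟩ := normalise hF1 hsum1 hDG1 (e := s(x,y)) (H_starx (mem_Zc.1 hDH).1 y)
  have notI : ∀ u, s(x,u) ∉ I ∧ s(y,u) ∉ I := by
    intro u
    exact ⟨fun h => (hIH _ h : H.Adj x u).2.1 rfl, fun h => (hIH _ h : H.Adj y u).2.2.1 rfl⟩
  have star : ∀ s t : V, (s = x ∧ t = y) ∨ (s = y ∧ t = x) → ∀ i, c i ≠ 0 → ∀ u, F1 i s(s,u) = 0 := by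
    intro s t hst i hi u
    by_contra hu
    have hadj : G1.Adj s u := Cc_adj (mem_Zc.1 (hF1.mem i)).1 hu
    have hadjG : G.Adj s u := hG1 hadj
    have hst' : G.Adj t s := by rcases hst with ⟨rfl, rfl⟩ | ⟨rfl, rfl⟩; exacts [hxy.symm, hxy]
    have hut : u ≠ t := by
      rintro rfl
      apply hi
      apply hcxy
      rcases hst with ⟨rfl, rfl⟩ | ⟨rfl, rfl⟩
      · exact hu
      · rw [Sym2.eq_swap]; exact hu
    obtain ⟨q, hq, hqs⟩ := L1 hG hst'
    have hcu : (contr G x y).Adj x u := by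
      rw [contr_x]
      have := hadjG.ne
      rcases hst with ⟨rfl, rfl⟩ | ⟨rfl, rfl⟩
      · exact ⟨this.symm, hne, hut, Or.inl hadjG⟩
      · exact ⟨hut, hne, this.symm, Or.inr hadjG⟩
    have hcq : (contr G x y).Adj x q := by
      rw [contr_x]
      have := hq.ne
      rcases hst with ⟨rfl, rfl⟩ | ⟨rfl, rfl⟩
      · exact ⟨hqs, hne, this.symm, Or.inr hq⟩
      · exact ⟨this.symm, hne, hqs, Or.inl hq⟩
    obtain ⟨w, hw, hwb⟩ := chain (hWr u q hcu hcq)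
    have hws : ∀ r, w s(s,r) = 0 := by
      intro r
      rcases hst with ⟨rfl, rfl⟩ | ⟨rfl, rfl⟩
      · exact H_starx (Cc_mono hWH hw) r
      · exact H_stary (Cc_mono hWH hw) r
    have notI2 : ∀ u, s(s,u) ∉ I ∧ s(t,u) ∉ I := by
      intro u
      rcases hst with ⟨rfl, rfl⟩ | ⟨rfl, rfl⟩
      · exact notI u
      · exact (notI u).symm
    have hq1 : G1.Adj t q := by rw [deleteEdges_adj]; exact ⟨hq, (notI2 _).2⟩
    have ht1 : G1.Adj s t := by rw [deleteEdges_adj]; exact ⟨hst'.symm, (notI2 _).1⟩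
    have hT : w + ed s u + ed s t + ed t q ∈ Zc G1 := by
      rw [mem_Zc]
      refine ⟨Submodule.add_mem _ (Submodule.add_mem _ (Submodule.add_mem _ (Cc_mono hWG1 hw) (ed_Cc hadj)) (ed_Cc ht1)) (ed_Cc hq1), ?_⟩
      rw [map_add, map_add, map_add, hwb, bd_ed hadj.ne, bd_ed ht1.ne, bd_ed hq1.ne]
      calc _ = (dl s + dl s) + (dl u + dl u) + (dl q + dl q) + (dl t + dl t) := by abel
        _ = 0 := by rw [dladd, dladd, dladd, dladd]; simp
    have hTs : ∀ r, (w + ed s u + ed s t + ed t q) s(s,r) = (if r = u then 1 else 0) + (if r = t then 1 else 0) := by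
      intro r
      have e1 : ∀ c, s(s,r) = s(s,c) ↔ r = c := fun c => Sym2.congr_right
      have e2 : s(s,r) ≠ s(t,q) := by
        rw [Ne, Sym2.eq_iff]
        have := hst'.ne
        tauto
      simp only [Pi.add_apply, hws, ed_apply, e1, e2]
      simp
    have hvan : ∀ r, (∑ i, c i • F1 i) s(s,r) = 0 := by
      intro r; rw [← hc]
      rcases hst with ⟨rfl, rfl⟩ | ⟨rfl, rfl⟩
      · exact H_starx (mem_Zc.1 hDH).1 r
      · exact H_stary (mem_Zc.1 hDH).1 r
    obtain ⟨k, hk, hk2⟩ := hom hF1 hvan hT (a := u) (b := t) (by intro r h1 h2; rw [hTs]; simp [h1, h2])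
      ⟨i, hi, hu⟩ (by rw [hTs]; simp [hut])
    apply hk
    apply hcxy
    rcases hst with ⟨rfl, rfl⟩ | ⟨rfl, rfl⟩
    · exact hk2
    · rw [Sym2.eq_swap]; exact hk2
  -- such faces contain D or miss it
  have hcon : ∀ i, c i ≠ 0 → ∀ e, D e ≠ 0 → F1 i e ≠ 0 → ∀ e', D e' ≠ 0 → F1 i e' ≠ 0 := by
    intro i hi e hDe hie e' hDe'
    have h1 : F1 i ∈ Zc H := by
      rw [mem_Zc]
      refine ⟨Cc_of fun a b hab => ?_, (mem_Zc.1 (hF1.mem i)).2⟩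
      have hadj : G.Adj a b := hG1 (Cc_adj (mem_Zc.1 (hF1.mem i)).1 hab)
      have k1 := star x y (Or.inl ⟨rfl, rfl⟩) i hi
      have k2 := star y x (Or.inr ⟨rfl, rfl⟩) i hi
      refine ⟨hadj, ?_, ?_, ?_, ?_⟩
      · rintro rfl; exact hab (k1 b)
      · rintro rfl; exact hab (k2 b)
      · rintro rfl; rw [Sym2.eq_swap] at hab; exact hab (k1 a)
      · rintro rfl; rw [Sym2.eq_swap] at hab; exact hab (k2 a)
    obtain ⟨b, hb, hb0⟩ := L5a hG hxy hF hsum h1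
    have single : ∀ e, D e ≠ 0 → ∃ k, A k ∧ F1 i e = b k := by
      intro e he
      obtain ⟨k, hAk, hk, huniq⟩ := hD1 e he
      refine ⟨k, hAk, ?_⟩
      rw [hb, sum_ap, Finset.sum_eq_single k, z2 hk, mul_one]
      · intro j _ hjk
        by_contra hn
        have n1 : b j ≠ 0 := fun h => hn (by simp [h])
        have n2 : F j e ≠ 0 := fun h => hn (by simp [h])
        exact hjk (huniq j (hb0 j n1) n2)
      · simp
    have const : ∀ k, A k → b k = b i0 := by
      intro k hk
      induction hk with
      | refl => rfl
      | @tail m n hm hmn ih =>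
        rw [← ih]
        by_cases hmn' : m = n
        · rw [hmn']
        obtain ⟨hn, e, h1, h2⟩ := hmn
        have hI : e ∈ I := ⟨m, n, hmn', hm, hAcl m n e hm hn h1 h2, h1, h2⟩
        have h3 := G1I _ (hF1.mem i) e hI
        rw [hb, sum_ap, ← Finset.sum_subset (Finset.subset_univ {m, n}), Finset.sum_pair hmn', z2 h1, z2 h2] at h3
        · simp only [mul_one] at h3
          exact (z2_eq_of_add h3).symm
        · intro k _ hk
          simp only [Finset.mem_insert, Finset.mem_singleton, not_or] at hk
          by_contra hn
          have : F k e ≠ 0 := by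
            intro h; apply hn; simp [h]
          rcases hF.m2 e m n k h1 h2 this with h | h | h
          · exact hmn' h
          · exact hk.1 h.symm
          · exact hk.2 h.symm
    obtain ⟨k, hk, hke⟩ := single e hDe
    obtain ⟨k', hk', hke'⟩ := single e' hDe'
    rw [hke', const k' hk', ← const k hk, ← hke]
    exact hie
  -- the new family
  have hsp : ∀ S ∈ Zc G, ∃ c' : ι → ZMod 2, S + ∑ i, c' i • (if A i then F i else 0) ∈ Zc G1 := by
    intro S hS
    obtain ⟨S', hS', hagree⟩ := proj hxy hS
    obtain ⟨c', hc'⟩ := hF.span S' hS'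
    refine ⟨c', memG1 _ (Submodule.add_mem _ hS ?_) ?_⟩
    · apply Submodule.sum_mem
      intro i _
      apply Submodule.smul_mem
      split_ifs with h
      · exact Zc_mono hHG (hAH i h)
      · exact Submodule.zero_mem _
    · intro e he
      have h1 : S' e = S e := by
        have h2 := hIH e he
        revert h2
        clear he
        induction e with | _ a b => exact fun h2 => hagree a b h2
      rw [Pi.add_apply, sum_ap, ← h1, hc', sum_ap]
      have : ∑ i, c' i * (if A i then F i else 0) e = ∑ i, c' i * F i e := by
        apply Finset.sum_congr rfl
        intro i _
        split_ifs with h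
        · rfl
        · have : F i e = 0 := by by_contra hn; exact h (hI3 e he i hn)
          simp [this]
      rw [this, z2add]
  by_cases hD0 : D = 0
  · refine assemble (F := F) (g := F1) (F1 := F1) A hD hF.m2 hF1.m2 (fun i hi => Zc_mono hHG (hAH i hi))
      (fun i => Zc_mono hG1 (hF1.mem i)) ?_ (fun _ _ _ => rfl) ?_ ?_
    · intro e i j h1 h2 h3 h4 h5 k
      exact G1I _ (hF1.mem k) e ⟨i, j, h1, h2, h3, h4, h5⟩
    · intro e he; rw [hD0] at he; exact absurd rfl he
    · intro S hS
      obtain ⟨c', h⟩ := hsp S hS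
      obtain ⟨d, hd⟩ := hF1.span _ h
      exact ⟨c', d, 0, by rw [hd]; simp⟩
  · obtain ⟨e, he⟩ : ∃ e, D e ≠ 0 := by
      by_contra h; push Not at h; exact hD0 (funext h)
    obtain ⟨i1, hi1, hi1e⟩ : ∃ i, c i ≠ 0 ∧ F1 i e ≠ 0 := by
      have h1 := he
      rw [hc, sum_ap] at h1
      obtain ⟨i, _, hi⟩ := Finset.exists_ne_zero_of_sum_ne_zero h1
      exact ⟨i, fun h => hi (by simp [h]), fun h => hi (by simp [h])⟩
    have hsub := hcon i1 hi1 e he hi1e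
    have hgap : ∀ i e, (if i = i1 then F1 i + D else F1 i) e ≠ 0 → D e ≠ 0 → i ≠ i1 ∧ F1 i e ≠ 0 := by
      intro i e h1 h2
      by_cases h : i = i1
      · exfalso; apply h1; rw [if_pos h, h, Pi.add_apply, z2 h2, z2 (hsub e h2)]; rfl
      · rw [if_neg h] at h1; exact ⟨h, h1⟩
    have hg0 : ∀ e, D e = 0 → ∀ i, (if i = i1 then F1 i + D else F1 i) e = F1 i e := by
      intro e he i
      split_ifs <;> simp [he]
    refine assemble (F := F) (g := fun i => if i = i1 then F1 i + D else F1 i) (F1 := F1) A hD hF.m2 hF1.m2 (fun i hi => Zc_mono hHG (hAH i hi))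
      ?_ ?_ hg0 ?_ ?_
    · intro i
      split_ifs
      · exact Submodule.add_mem _ (Zc_mono hG1 (hF1.mem i)) (Zc_mono hHG hDH)
      · exact Zc_mono hG1 (hF1.mem i)
    · intro e i j h1 h2 h3 h4 h5 k
      have he : e ∈ I := ⟨i, j, h1, h2, h3, h4, h5⟩
      rw [hg0 e (hDI e he)]
      exact G1I _ (hF1.mem k) e he
    · intro e he i j hi hj
      have h1 := hgap i e hi he
      have h2 := hgap j e hj he
      rcases hF1.m2 e i j i1 h1.2 h2.2 (hsub e he) with h | h | h
      · exact h
      · exact absurd h h1.1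
      · exact absurd h h2.1
    · intro S hS
      obtain ⟨c', h⟩ := hsp S hS
      obtain ⟨d, hd⟩ := hF1.span _ h
      refine ⟨c', d, d i1, ?_⟩
      rw [hd]
      have : ∀ i, d i • (if i = i1 then F1 i + D else F1 i) = d i • F1 i + if i = i1 then d i1 • D else 0 := by
        intro i
        split_ifs with h
        · rw [h, smul_add]
        · simp
      simp only [this, Finset.sum_add_distrib]
      rw [Finset.sum_ite_eq' Finset.univ i1 (fun _ => d i1 • D)]
      simp only [Finset.mem_univ, if_true]
      rw [add_assoc, esadd, add_zero]

/-- L5: intersections of cycles of `G - x - y` are cycles -/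
theorem L5 {G : SimpleGraph V} (hG : MinCx G) {x y : V} (hxy : G.Adj x y) {S T : ES V}
    (hS : S ∈ Zc (del2 G x y)) (hT : T ∈ Zc (del2 G x y)) : S * T ∈ Zc (del2 G x y) := by
  obtain ⟨ι, _, F, hF, hsum⟩ := toFull (hG.con hxy)
  obtain ⟨c, hc, hc0⟩ := L5a hG hxy hF hsum hS
  obtain ⟨d, hd, hd0⟩ := L5a hG hxy hF hsum hT
  have : S * T = ∑ i, (c i * d i) • F i := by
    funext e
    rw [Pi.mul_apply, sum_ap]
    by_cases hex : ∃ k, (∀ u, F k s(x,u) = 0) ∧ F k e ≠ 0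
    · obtain ⟨k, hk, hke⟩ := hex
      have huniq : ∀ b : ι → ZMod 2, (∀ i, b i ≠ 0 → ∀ u, F i s(x,u) = 0) → ∑ i, b i * F i e = b k := by
        intro b hb
        rw [Finset.sum_eq_single k, z2 hke, mul_one]
        · intro j _ hjk
          by_contra hn
          have n1 : b j ≠ 0 := fun h => hn (by simp [h])
          have n2 : F j e ≠ 0 := fun h => hn (by simp [h])
          exact L5b hG hxy hF hsum hjk (hb j n1) hk e n2 hke
        · simp
      rw [huniq (fun i => c i * d i) (fun i hi => hc0 i fun h => hi (by simp [h])), hc, hd, sum_ap, sum_ap, huniq c hc0, huniq d hd0]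
    · have h0 : ∀ b : ι → ZMod 2, (∀ i, b i ≠ 0 → ∀ u, F i s(x,u) = 0) → ∑ i, b i * F i e = 0 := by
        intro b hb
        apply Finset.sum_eq_zero
        intro j _
        by_contra hn
        have n1 : b j ≠ 0 := fun h => hn (by simp [h])
        have n2 : F j e ≠ 0 := fun h => hn (by simp [h])
        exact hex ⟨j, hb j n1, n2⟩
      rw [h0 (fun i => c i * d i) (fun i hi => hc0 i fun h => hi (by simp [h])), hc, sum_ap, h0 c hc0, zero_mul]
  rw [this]
  apply Submodule.sum_mem
  intro i _
  by_cases h : c i = 0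
  · simp [h]
  · exact Submodule.smul_mem _ _ (Zc_contr_off (hF.mem i) (hc0 i h))

end Theta6

namespace Theta6
universe u
open scoped Classical
set_option linter.unusedSectionVars false
set_option linter.unusedVariables false
variable {V : Type u} [Fintype V]
theorem five_clique {G : SimpleGraph V} (hp : IsPlanar G) {v a b c d : V} (ha : G.Adj v a) (hb : G.Adj v b)
    (hc : G.Adj v c) (hd : G.Adj v d) (hab : G.Adj a b) (hac : G.Adj a c) (had : G.Adj a d) (hbc : G.Adj b c)
    (hbd : G.Adj b d) (hcd : G.Adj c d) : False := by
  have key : ∀ i j : Fin 5, i ≠ j → G.Adj (![v, a, b, c, d] i) (![v, a, b, c, d] j) := by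
    intro i j hij
    fin_cases i <;> fin_cases j <;> simp at hij ⊢ <;> first | assumption | (apply SimpleGraph.Adj.symm; assumption)
  refine no_K5 hp ![v, a, b, c, d] ?_ key
  intro i j hij
  by_contra hn
  exact (key i j hn).ne hij

theorem k33 {G : SimpleGraph V} (hp : IsPlanar G) {x y a b c d : V} (hxy : G.Adj x y) (ha : G.Adj x a) (hb : G.Adj x b)
    (hc : G.Adj y c) (hd : G.Adj y d) (hac : G.Adj a c) (had : G.Adj a d) (hbc : G.Adj b c) (hbd : G.Adj b d)
    (hay : a ≠ y) (hby : b ≠ y) (hab : a ≠ b) (hcx : c ≠ x) (hdx : d ≠ x) (hcd : c ≠ d) : False := by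
  have key : ∀ i j : Fin 3, G.Adj (![x, c, d] i) (![y, a, b] j) := by
    intro i j
    fin_cases i <;> fin_cases j <;> simp <;> first | assumption | (apply SimpleGraph.Adj.symm; assumption)
  have i1 : Function.Injective ![x, c, d] := by
    intro i j hij
    fin_cases i <;> fin_cases j <;> simp at hij ⊢ <;> first | exact hcx hij | exact hcx hij.symm | exact hdx hij | exact hdx hij.symm | exact hcd hij | exact hcd hij.symm
  have i2 : Function.Injective ![y, a, b] := by
    intro i j hij
    fin_cases i <;> fin_cases j <;> simp at hij ⊢ <;> first | exact hay hij | exact hay hij.symm | exact hby hij | exact hby hij.symm | exact hab hij | exact hab hij.symm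
  refine no_K33 hp (Sum.elim ![x, c, d] ![y, a, b]) ?_ ?_
  · rintro (i | i) (j | j) hij
    · exact congrArg _ (i1 hij)
    · exact absurd hij (key i j).ne
    · exact absurd hij (key j i).ne'
    · exact congrArg _ (i2 hij)
  · exact key


theorem mul0 {c d : ES V} (h : ∀ e, c e ≠ 0 → d e = 0) : c * d = 0 := by
  funext e
  by_cases h1 : c e = 0
  · simp [h1]
  · simp [h e h1]

theorem dl_ne {a b : V} (h : a ≠ b) : dl a + dl b ≠ 0 := by
  intro h1
  have := congrFun h1 a
  simp [dl_apply, h] at this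

theorem theta3 {G : SimpleGraph V} (hG : MinCx G) {x y : V} (hxy : G.Adj x y) {a b : V} (hab : a ≠ b)
    {c1 c2 c3 : ES V} (h1 : c1 ∈ Cc (del2 G x y)) (h2 : c2 ∈ Cc (del2 G x y)) (h3 : c3 ∈ Cc (del2 G x y))
    (b1 : bd c1 = dl a + dl b) (b2 : bd c2 = dl a + dl b) (b3 : bd c3 = dl a + dl b)
    (d12 : ∀ e, c1 e ≠ 0 → c2 e = 0) (d13 : ∀ e, c1 e ≠ 0 → c3 e = 0) (d23 : ∀ e, c2 e ≠ 0 → c3 e = 0) : False := by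
  have hS : c1 + c2 ∈ Zc (del2 G x y) := mem_Zc.2 ⟨Submodule.add_mem _ h1 h2, by rw [map_add, b1, b2, esadd]⟩
  have hT : c1 + c3 ∈ Zc (del2 G x y) := mem_Zc.2 ⟨Submodule.add_mem _ h1 h3, by rw [map_add, b1, b3, esadd]⟩
  have h := L5 hG hxy hS hT
  have : (c1 + c2) * (c1 + c3) = c1 := by
    have e1 := mul0 d12
    have e2 := mul0 d13
    have e3 := mul0 d23
    have e4 : c1 * c1 = c1 := by
      funext e
      have : ∀ z : ZMod 2, z * z = z := by decide
      exact this _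
    calc _ = c1 * c1 + c1 * c3 + c1 * c2 + c2 * c3 := by ring
      _ = c1 := by rw [e1, e2, e3, e4]; simp
  rw [this, mem_Zc, b1] at h
  exact dl_ne hab h.2

noncomputable def pc (P : ℕ → V) (a b : ℕ) : ES V := ∑ k ∈ Finset.Ico a b, ed (P k) (P (k+1))

theorem pc_ne {P : ℕ → V} {a b : ℕ} {e : Sym2 V} (h : pc P a b e ≠ 0) : ∃ m, a ≤ m ∧ m < b ∧ e = s(P m, P (m+1)) := by
  rw [pc, Finset.sum_apply] at h
  obtain ⟨m, hm, h1⟩ := Finset.exists_ne_zero_of_sum_ne_zero h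
  rw [Finset.mem_Ico] at hm
  refine ⟨m, hm.1, hm.2, ?_⟩
  rw [ed_apply] at h1
  by_contra h2
  rw [if_neg h2] at h1
  exact h1 rfl

theorem ed_ne {a b : V} {e : Sym2 V} (h : ed a b e ≠ 0) : e = s(a,b) := by
  rw [ed_apply] at h
  by_contra h2
  rw [if_neg h2] at h
  exact h rfl

theorem pc_mem {H : SimpleGraph V} {P : ℕ → V} {a b : ℕ} (h : ∀ m, m < b → H.Adj (P m) (P (m+1))) : pc P a b ∈ Cc H := by
  apply Submodule.sum_mem
  intro k hk
  rw [Finset.mem_Ico] at hk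
  exact ed_Cc (h k hk.2)

theorem pc_bd {H : SimpleGraph V} {P : ℕ → V} {a b : ℕ} (hab : a ≤ b) (h : ∀ m, m < b → H.Adj (P m) (P (m+1))) :
    bd (pc P a b) = dl (P a) + dl (P b) := by
  induction b, hab using Nat.le_induction with
  | base => simp [pc, dladd]
  | succ n hn ih =>
    rw [pc, Finset.sum_Ico_succ_top hn, map_add, ← pc, ih (fun m hm => h m (by omega)), bd_ed (h n (by omega)).ne]
    rw [add_assoc, ← add_assoc (dl (P n)), dladd, zero_add]

theorem ear {G : SimpleGraph V} (hG : MinCx G) {x y : V} (hxy : G.Adj x y) {P : ℕ → V} {i : ℕ} (hi : 2 ≤ i)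
    (hinj : ∀ a b, a ≤ i → b ≤ i → P a = P b → a = b) (hadj : ∀ m, m < i → (del2 G x y).Adj (P m) (P (m+1)))
    (hcl : (del2 G x y).Adj (P 0) (P i)) {k l : ℕ} (hkl : k < l) (hl : l ≤ i) {d : ES V} (hd : d ∈ Cc (del2 G x y))
    (hbd : bd d = dl (P k) + dl (P l)) (h1 : ∀ m, m < i → d s(P m, P (m+1)) = 0) (h2 : d s(P 0, P i) = 0) : False := by
  have hne : ∀ m m', m < i → m' < i → s(P m, P (m+1)) = s(P m', P (m'+1)) → m = m' := by
    intro m m' hm hm' h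
    rw [Sym2.eq_iff] at h
    rcases h with ⟨h, _⟩ | ⟨h, h'⟩
    · exact hinj _ _ (by omega) (by omega) h
    · have := hinj _ _ (by omega) (by omega) h
      have := hinj _ _ (by omega) (by omega) h'
      omega
  have hne0 : ∀ m, m < i → s(P m, P (m+1)) ≠ s(P 0, P i) := by
    intro m hm h
    rw [Sym2.eq_iff] at h
    rcases h with ⟨h, h'⟩ | ⟨h, h'⟩
    · have := hinj _ _ (by omega) (by omega) h
      have := hinj _ _ (by omega) (by omega) h'
      omega
    · have := hinj _ _ (by omega) (by omega) h
      omega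
  have hc2 : ∀ e, (pc P 0 k + pc P l i + ed (P 0) (P i)) e ≠ 0 →
      (∃ m, m < i ∧ (m < k ∨ l ≤ m) ∧ e = s(P m, P (m+1))) ∨ e = s(P 0, P i) := by
    intro e he
    by_cases e1 : pc P 0 k e = 0
    · by_cases e2 : pc P l i e = 0
      · right
        apply ed_ne
        simpa [e1, e2] using he
      · obtain ⟨m, h1, h2, h3⟩ := pc_ne e2
        exact Or.inl ⟨m, h2, Or.inr h1, h3⟩
    · obtain ⟨m, h1, h2, h3⟩ := pc_ne e1
      exact Or.inl ⟨m, by omega, Or.inl h2, h3⟩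
  refine theta3 hG hxy (a := P k) (b := P l) (c1 := pc P k l) (c2 := pc P 0 k + pc P l i + ed (P 0) (P i)) (c3 := d)
    ?_ (pc_mem fun m hm => hadj m (by omega)) ?_ hd (pc_bd hkl.le fun m hm => hadj m (by omega)) ?_ hbd ?_ ?_ ?_
  · intro h
    have := hinj _ _ (by omega) (by omega) h
    omega
  · exact Submodule.add_mem _ (Submodule.add_mem _ (pc_mem fun m hm => hadj m (by omega)) (pc_mem hadj)) (ed_Cc hcl)
  · rw [map_add, map_add, pc_bd (H := del2 G x y) (by omega) fun m hm => hadj m (by omega), pc_bd hl hadj, bd_ed hcl.ne]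
    calc _ = (dl (P 0) + dl (P 0)) + (dl (P i) + dl (P i)) + (dl (P k) + dl (P l)) := by abel
      _ = _ := by rw [dladd, dladd]; simp
  · intro e he
    obtain ⟨m, h3, h4, rfl⟩ := pc_ne he
    by_contra hn
    rcases hc2 _ hn with ⟨m', h5, h6, h7⟩ | h5
    · have := hne m m' (by omega) h5 h7
      omega
    · exact hne0 m (by omega) h5
  · intro e he
    obtain ⟨m, h3, h4, rfl⟩ := pc_ne he
    exact h1 m (by omega)
  · intro e he
    rcases hc2 _ he with ⟨m', h5, h6, rfl⟩ | rfl
    · exact h1 m' h5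
    · exact h2

structure IsP (H : SimpleGraph V) (v : V) (n : ℕ) (P : ℕ → V) : Prop where
  adj : ∀ m, m < n → H.Adj (P m) (P (m+1))
  inj : ∀ a b, a ≤ n → b ≤ n → P a = P b → a = b
  last : P n = v

theorem IsP.bound {H : SimpleGraph V} {v : V} {n : ℕ} {P : ℕ → V} (h : IsP H v n P) : n < Fintype.card V := by
  have : Function.Injective (fun k : Fin (n+1) => P k) := by
    intro a b hab
    exact Fin.ext (h.inj _ _ (by omega) (by omega) hab)
  have := Fintype.card_le_of_injective _ this
  simpa using this

theorem first_nbr {H : SimpleGraph V} {v : V} {n : ℕ} {P : ℕ → V} (h : IsP H v n P)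
    (hmax : ∀ Q, ¬ IsP H v (n+1) Q) {w : V} (hw : H.Adj (P 0) w) : ∃ j, j ≤ n ∧ w = P j := by
  by_contra hcon
  push Not at hcon
  apply hmax (fun k => if k = 0 then w else P (k-1))
  refine ⟨?_, ?_, ?_⟩
  · intro m hm
    rcases m with _ | m
    · simpa using hw.symm
    · simpa using h.adj m (by omega)
  · intro a b ha hb hab
    rcases a with _ | a <;> rcases b with _ | b
    · rfl
    · simp at hab; exact absurd hab (hcon b (by omega))
    · simp at hab; exact absurd hab.symm (hcon a (by omega))
    · simp at hab
      have := h.inj a b (by omega) (by omega) hab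
      omega
  · simpa using h.last

/-- data at the start of a longest path -/
theorem start_data {G : SimpleGraph V} (hG : MinCx G) {x y : V} (hxy : G.Adj x y) {v : V} {n : ℕ} {P : ℕ → V}
    (h : IsP (del2 G x y) v n P) (hmax : ∀ Q, ¬ IsP (del2 G x y) v (n+1) Q) (hn : 1 ≤ n) :
    (∃ i, 2 ≤ i ∧ i ≤ n ∧ (del2 G x y).Adj (P 0) (P i)) ∧ (G.Adj (P 0) x ∨ G.Adj (P 0) y) := by
  have h01 := h.adj 0 (by omega)
  obtain ⟨c, hc, hc1⟩ := degH hG hxy h01.1 h01.2.1 h01.2.2.1 (P 1)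
  obtain ⟨i, hi, rfl⟩ := first_nbr h hmax hc
  have hi2 : 2 ≤ i := by
    rcases i with _ | _ | i
    · exact absurd rfl hc.ne
    · exact absurd rfl hc1
    · omega
  refine ⟨⟨i, hi2, hi, hc⟩, ?_⟩
  have noboth : ∀ i j, 2 ≤ i → i < j → j ≤ n → (del2 G x y).Adj (P 0) (P i) → (del2 G x y).Adj (P 0) (P j) → False := by
    intro i j hi hij hj h1 h2
    refine ear hG hxy (i := j) (P := P) (by omega) (fun a b ha hb => h.inj a b (by omega) (by omega))
      (fun m hm => h.adj m (by omega)) h2 (k := 0) (l := i) (by omega) hij.le (d := ed (P 0) (P i)) (ed_Cc h1) (bd_ed h1.ne) ?_ ?_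
    · intro m hm
      by_contra hn
      have := ed_ne hn
      rw [Sym2.eq_iff] at this
      rcases this with ⟨k1, k2⟩ | ⟨k1, k2⟩
      · have := h.inj _ _ (by omega) (by omega) k1
        have := h.inj _ _ (by omega) (by omega) k2
        omega
      · have := h.inj _ _ (by omega) (by omega) k2
        omega
    · by_contra hn
      have := ed_ne hn
      rw [Sym2.eq_iff] at this
      rcases this with ⟨k1, k2⟩ | ⟨k1, k2⟩
      · have := h.inj _ _ (by omega) (by omega) k2
        omega
      · have := h.inj _ _ (by omega) (by omega) k2
        omega
  obtain ⟨w, hw, hw1, hwi⟩ := deg3 hG h01.1 (P 1) (P i)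
  by_contra hcon
  push Not at hcon
  have hwH : (del2 G x y).Adj (P 0) w := by
    refine ⟨hw, h01.2.1, h01.2.2.1, ?_, ?_⟩
    · rintro rfl; exact hcon.1 hw
    · rintro rfl; exact hcon.2 hw
  obtain ⟨j, hj, rfl⟩ := first_nbr h hmax hwH
  have hj2 : 2 ≤ j := by
    rcases j with _ | _ | j
    · exact absurd rfl hwH.ne
    · exact absurd rfl hw1
    · omega
  rcases lt_trichotomy i j with hij | hij | hij
  · exact noboth i j hi2 hij hj hc hwH
  · exact hwi (by rw [hij])
  · exact noboth j i hj2 hij hi hwH hc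

theorem rotate {H : SimpleGraph V} {v : V} {n : ℕ} {P : ℕ → V} (h : IsP H v n P) {i : ℕ} (hi : 1 ≤ i) (hin : i ≤ n)
    (hadj : H.Adj (P 0) (P i)) : IsP H v n (fun k => if k < i then P (i - 1 - k) else P k) := by
  refine ⟨?_, ?_, ?_⟩
  · intro m hm
    by_cases h1 : m + 1 < i
    · have h2 : m < i := by omega
      simp only [h1, h2, if_true]
      have := h.adj (i - 1 - (m+1)) (by omega)
      have e : i - 1 - (m+1) + 1 = i - 1 - m := by omega
      rw [e] at this
      exact this.symm
    · by_cases h2 : m < i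
      · have e : m + 1 = i := by omega
        have e' : i - 1 - m = 0 := by omega
        simp only [h2, if_true, e, lt_irrefl, if_false, e']
        exact hadj
      · simp only [h1, h2, if_false]
        exact h.adj m hm
  · intro a b ha hb hab
    split_ifs at hab with h1 h2 h2
    · have := h.inj _ _ (by omega) (by omega) hab; omega
    · have := h.inj _ _ (by omega) (by omega) hab; omega
    · have := h.inj _ _ (by omega) (by omega) hab; omega
    · exact h.inj _ _ (by omega) (by omega) hab
  · have : ¬ n < i := by omega
    simp only [this, if_false]
    exact h.last

theorem L6 {G : SimpleGraph V} (hG : MinCx G) {x y : V} (hxy : G.Adj x y) {v a b c : V}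
    (ha : (del2 G x y).Adj v a) (hb : (del2 G x y).Adj v b) (hc : (del2 G x y).Adj v c)
    (hab : a ≠ b) (hac : a ≠ c) (hbc : b ≠ c) : False := by
  set H := del2 G x y with hH
  -- a longest path
  obtain ⟨n, hn1, ⟨P, hP⟩, hmax⟩ : ∃ n, 1 ≤ n ∧ (∃ P, IsP H v n P) ∧ ∀ Q, ¬ IsP H v (n+1) Q := by
    have hex : ∃ P, IsP H v 1 P := by
      refine ⟨fun k => if k = 0 then a else v, ?_, ?_, by simp⟩
      · intro m hm
        have : m = 0 := by omega
        subst this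
        simpa using ha.symm
      · intro p q hp hq hpq
        have := ha.ne
        rcases p with _ | p <;> rcases q with _ | q <;> simp at hpq
        · rfl
        · exact absurd hpq.symm this
        · exact absurd hpq this
        · omega
    have h1 : ∃ n, 1 ≤ n ∧ (∃ P, IsP H v n P) := ⟨1, le_rfl, hex⟩
    let N := Nat.findGreatest (fun n => 1 ≤ n ∧ ∃ P, IsP H v n P) (Fintype.card V)
    have hN : 1 ≤ N ∧ ∃ P, IsP H v N P := by
      obtain ⟨P, hP⟩ := hex
      exact Nat.findGreatest_spec (P := fun n => 1 ≤ n ∧ ∃ P, IsP H v n P) (m := 1) (by have := hP.bound; omega) ⟨le_rfl, P, hP⟩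
    refine ⟨N, hN.1, hN.2, fun Q hQ => ?_⟩
    have h2 := hQ.bound
    have : N + 1 ≤ N := Nat.le_findGreatest (by omega) ⟨by omega, Q, hQ⟩
    omega
  obtain ⟨⟨i, hi2, hin, hcl⟩, hst⟩ := start_data hG hxy hP hmax hn1
  have hst' := (start_data hG hxy (rotate hP (by omega) hin hcl) hmax hn1).2
  have hi0 : 0 < i := by omega
  simp only [hi0, if_true, Nat.sub_zero] at hst'
  have hPx : ∀ m, m ≤ i → P m ≠ x ∧ P m ≠ y := by
    intro m hm
    rcases m with _ | m
    · exact ⟨hcl.2.1, hcl.2.2.1⟩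
    · have := hP.adj m (by omega)
      exact ⟨this.2.2.2.1, this.2.2.2.2⟩
  have hinj : ∀ a b, a ≤ i → b ≤ i → P a = P b → a = b := fun a b h1 h2 => hP.inj a b (by omega) (by omega)
  have hadj : ∀ m, m < i → H.Adj (P m) (P (m+1)) := fun m hm => hP.adj m (by omega)
  -- every edge of H touches the cycle
  have touch : ∀ p q, H.Adj p q → ∃ m, m ≤ i ∧ (p = P m ∨ q = P m) := by
    intro p q hpq
    by_contra hcon
    push Not at hcon
    have lift : ∀ {s t : V}, G.Adj s t → s ≠ p → s ≠ q → t ≠ p → t ≠ q → (del2 G p q).Adj s t :=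
      fun h1 h2 h3 h4 h5 => ⟨h1, h2, h3, h4, h5⟩
    have hPp : ∀ m, m ≤ i → P m ≠ p ∧ P m ≠ q := fun m hm => ⟨(hcon m hm).1.symm, (hcon m hm).2.symm⟩
    have hxp : x ≠ p ∧ x ≠ q := ⟨hpq.2.1.symm, hpq.2.2.2.1.symm⟩
    have hyp : y ≠ p ∧ y ≠ q := ⟨hpq.2.2.1.symm, hpq.2.2.2.2.symm⟩
    have h0p := hPp 0 (by omega)
    have h1p := hPp (i-1) (by omega)
    -- chain through x,y
    have hchain : ∃ d ∈ Cc (del2 G p q), bd d = dl (P 0) + dl (P (i-1)) ∧ ∀ s t, s ≠ x → s ≠ y → t ≠ x → t ≠ y → d s(s,t) = 0 := by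
      have ez : ∀ z w s t : V, (z = x ∨ z = y) → s ≠ x → s ≠ y → t ≠ x → t ≠ y → ed w z s(s,t) = 0 := by
        intro z w s t hz h1 h2 h3 h4
        by_contra hn
        have := ed_ne hn
        rw [Sym2.eq_iff] at this
        rcases hz with rfl | rfl <;> tauto
      have same : ∀ z, (z = x ∨ z = y) → G.Adj (P 0) z → G.Adj (P (i-1)) z → ∃ d ∈ Cc (del2 G p q), bd d = dl (P 0) + dl (P (i-1)) ∧ ∀ s t, s ≠ x → s ≠ y → t ≠ x → t ≠ y → d s(s,t) = 0 := by
        intro z hz h1 h2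
        have hzp : z ≠ p ∧ z ≠ q := by rcases hz with rfl | rfl; exacts [hxp, hyp]
        refine ⟨ed (P 0) z + ed (P (i-1)) z, Submodule.add_mem _ (ed_Cc (lift h1 h0p.1 h0p.2 hzp.1 hzp.2)) (ed_Cc (lift h2 h1p.1 h1p.2 hzp.1 hzp.2)), ?_, ?_⟩
        · rw [map_add, bd_ed h1.ne, bd_ed h2.ne]
          calc _ = (dl z + dl z) + (dl (P 0) + dl (P (i-1))) := by abel
            _ = _ := by rw [dladd, zero_add]
        · intro s t k1 k2 k3 k4
          rw [Pi.add_apply, ez z _ s t hz k1 k2 k3 k4, ez z _ s t hz k1 k2 k3 k4, add_zero]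
      have diff : ∀ z z', (z = x ∨ z = y) → (z' = x ∨ z' = y) → G.Adj z z' → G.Adj (P 0) z → G.Adj (P (i-1)) z' → ∃ d ∈ Cc (del2 G p q), bd d = dl (P 0) + dl (P (i-1)) ∧ ∀ s t, s ≠ x → s ≠ y → t ≠ x → t ≠ y → d s(s,t) = 0 := by
        intro z z' hz hz' hzz h1 h2
        have hzp : z ≠ p ∧ z ≠ q := by rcases hz with rfl | rfl; exacts [hxp, hyp]
        have hzp' : z' ≠ p ∧ z' ≠ q := by rcases hz' with rfl | rfl; exacts [hxp, hyp]
        refine ⟨ed (P 0) z + ed z z' + ed (P (i-1)) z', Submodule.add_mem _ (Submodule.add_mem _ (ed_Cc (lift h1 h0p.1 h0p.2 hzp.1 hzp.2)) (ed_Cc (lift hzz hzp.1 hzp.2 hzp'.1 hzp'.2))) (ed_Cc (lift h2 h1p.1 h1p.2 hzp'.1 hzp'.2)), ?_, ?_⟩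
        · rw [map_add, map_add, bd_ed h1.ne, bd_ed h2.ne, bd_ed hzz.ne]
          calc _ = (dl z + dl z) + (dl z' + dl z') + (dl (P 0) + dl (P (i-1))) := by abel
            _ = _ := by rw [dladd, dladd, zero_add, zero_add]
        · intro s t k1 k2 k3 k4
          rw [Pi.add_apply, Pi.add_apply, ez z _ s t hz k1 k2 k3 k4, ez z' _ s t hz' k1 k2 k3 k4, ez z' _ s t hz' k1 k2 k3 k4]
          simp
      rcases hst with h1 | h1 <;> rcases hst' with h2 | h2
      · exact same x (Or.inl rfl) h1 h2
      · exact diff x y (Or.inl rfl) (Or.inr rfl) hxy h1 h2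
      · exact diff y x (Or.inr rfl) (Or.inl rfl) hxy.symm h1 h2
      · exact same y (Or.inr rfl) h1 h2
    obtain ⟨d, hd, hbd, hd0⟩ := hchain
    have hup : ∀ {s t : ℕ}, s ≤ i → t ≤ i → H.Adj (P s) (P t) → (del2 G p q).Adj (P s) (P t) := by
      intro s t hs ht h
      exact lift h.1 (hPp s hs).1 (hPp s hs).2 (hPp t ht).1 (hPp t ht).2
    refine ear hG hpq.1 hi2 hinj (fun m hm => hup (by omega) (by omega) (hadj m hm)) (hup (by omega) (by omega) hcl)
      (k := 0) (l := i-1) (by omega) (by omega) hd hbd ?_ ?_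
    · intro m hm
      exact hd0 _ _ (hPx m (by omega)).1 (hPx m (by omega)).2 (hPx (m+1) (by omega)).1 (hPx (m+1) (by omega)).2
    · exact hd0 _ _ (hPx 0 (by omega)).1 (hPx 0 (by omega)).2 (hPx i (by omega)).1 (hPx i (by omega)).2
  -- ears through an outside vertex are impossible
  have noear2 : ∀ w k l, k < l → l ≤ i → (∀ m, m ≤ i → w ≠ P m) → H.Adj (P k) w → H.Adj (P l) w → False := by
    intro w k l hkl hl hw h1 h2
    have ez : ∀ s t u, s ≤ i → t ≤ i → ed u w s(P s, P t) = 0 := by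
      intro s t u hs ht
      by_contra hn
      have := ed_ne hn
      rw [Sym2.eq_iff] at this
      rcases this with ⟨_, h⟩ | ⟨h, _⟩
      · exact hw t ht h.symm
      · exact hw s hs h.symm
    refine ear hG hxy hi2 hinj hadj hcl hkl hl (d := ed (P k) w + ed (P l) w) (Submodule.add_mem _ (ed_Cc h1) (ed_Cc h2)) ?_ ?_ ?_
    · rw [map_add, bd_ed h1.ne, bd_ed h2.ne]
      calc _ = (dl w + dl w) + (dl (P k) + dl (P l)) := by abel
        _ = _ := by rw [dladd, zero_add]
    · intro m hm
      rw [Pi.add_apply, ez m (m+1) _ (by omega) (by omega), ez m (m+1) _ (by omega) (by omega), add_zero]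
    · rw [Pi.add_apply, ez 0 i _ (by omega) (by omega), ez 0 i _ (by omega) (by omega), add_zero]
  have noear2' : ∀ w k l, k ≠ l → k ≤ i → l ≤ i → (∀ m, m ≤ i → w ≠ P m) → H.Adj (P k) w → H.Adj (P l) w → False := by
    intro w k l hkl hk hl hw h1 h2
    rcases lt_or_gt_of_ne hkl with h | h
    · exact noear2 w k l h hl hw h1 h2
    · exact noear2 w l k h hk hw h2 h1
  by_cases hni : n = i
  · -- v = P i
    have hv : v = P i := by rw [← hni]; exact hP.last.symm
    have good : ∀ w, H.Adj v w → w = P 0 ∨ w = P (i-1) := by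
      intro w hw
      by_contra hcon
      push Not at hcon
      by_cases hwC : ∃ m, m ≤ i ∧ w = P m
      · obtain ⟨k, hk, rfl⟩ := hwC
        have hk0 : k ≠ 0 := by rintro rfl; exact hcon.1 rfl
        have hk1 : k ≠ i - 1 := by rintro rfl; exact hcon.2 rfl
        have hk2 : k ≠ i := by rintro rfl; exact hw.ne hv
        rw [hv] at hw
        refine ear hG hxy hi2 hinj hadj hcl (k := k) (l := i) (by omega) le_rfl (ed_Cc hw.symm) (bd_ed hw.symm.ne) ?_ ?_
        · intro m hm
          by_contra hn
          have := ed_ne hn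
          rw [Sym2.eq_iff] at this
          rcases this with ⟨k1, k2⟩ | ⟨k1, k2⟩
          · have := hinj _ _ (by omega) (by omega) k1
            have := hinj _ _ (by omega) (by omega) k2
            omega
          · have := hinj _ _ (by omega) (by omega) k1
            omega
        · by_contra hn
          have := ed_ne hn
          rw [Sym2.eq_iff] at this
          rcases this with ⟨k1, k2⟩ | ⟨k1, k2⟩
          · have := hinj _ _ (by omega) (by omega) k1
            omega
          · have := hinj _ _ (by omega) (by omega) k2
            omega
      · push Not at hwC
        obtain ⟨w', hw', hwv⟩ := degH hG hxy hw.1.symm hw.2.2.2.1 hw.2.2.2.2 v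
        obtain ⟨k, hk, h | h⟩ := touch w w' hw'
        · exact hwC k hk h
        · subst h
          rw [hv] at hw hwv
          refine noear2' w k i ?_ hk le_rfl hwC hw'.symm hw
          rintro rfl; exact hwv rfl
    have h1 := good a ha
    have h2 := good b hb
    have h3 := good c hc
    rcases h1 with h1 | h1 <;> rcases h2 with h2 | h2 <;> rcases h3 with h3 | h3 <;>
      first
      | exact hab (h1.trans h2.symm)
      | exact hac (h1.trans h3.symm)
      | exact hbc (h2.trans h3.symm)
  · have hvC : ∀ m, m ≤ i → v ≠ P m := by
      intro m hm h
      rw [← hP.last] at h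
      have := hP.inj _ _ le_rfl (by omega) h
      omega
    obtain ⟨k, hk, h | h⟩ := touch v a ha
    · exact hvC k hk h
    obtain ⟨l, hl, h' | h'⟩ := touch v b hb
    · exact hvC l hl h'
    subst h h'
    refine noear2' v k l ?_ hk hl hvC ha.symm hb.symm
    rintro rfl; exact hab rfl

theorem H2 {G : SimpleGraph V} (hG : MinCx G) {x y : V} (hxy : G.Adj x y) {v w : V} (h : G.Adj v w)
    (hvx : v ≠ x) (hvy : v ≠ y) : ∃ a b, a ≠ b ∧ (del2 G x y).Adj v a ∧ (del2 G x y).Adj v b ∧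
      ∀ c, G.Adj v c → c = a ∨ c = b ∨ c = x ∨ c = y := by
  obtain ⟨a, ha, _⟩ := degH hG hxy h hvx hvy v
  obtain ⟨b, hb, hab⟩ := degH hG hxy h hvx hvy a
  refine ⟨a, b, hab.symm, ha, hb, fun c hc => ?_⟩
  by_contra hcon
  push Not at hcon
  exact L6 hG hxy ha hb ⟨hc, hvx, hvy, hcon.2.2.1, hcon.2.2.2⟩ hab.symm hcon.1.symm hcon.2.1.symm

theorem no_min {G : SimpleGraph V} (hG : MinCx G) : False := by
  by_cases hE : ∃ x y, G.Adj x y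
  · by_cases h4 : ∃ v a b c d, G.Adj v a ∧ G.Adj v b ∧ G.Adj v c ∧ G.Adj v d ∧ a ≠ b ∧ a ≠ c ∧ a ≠ d ∧ b ≠ c ∧ b ≠ d ∧ c ≠ d
    · obtain ⟨v, a, b, c, d, ha, hb, hc, hd, hab, hac, had, hbc, hbd, hcd⟩ := h4
      -- edges avoiding v have ends in N(v)
      have hend : ∀ x y, G.Adj x y → x ≠ v → y ≠ v → G.Adj v x ∧ G.Adj v y ∧
          ∃ p q, ∀ r, G.Adj v r → r = p ∨ r = q ∨ r = x ∨ r = y := by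
        intro x y hxy hx hy
        obtain ⟨p, q, hpq, hp, hq, hall⟩ := H2 hG hxy ha hx.symm hy.symm
        refine ⟨?_, ?_, p, q, hall⟩
        · by_contra hn
          have k : ∀ r, G.Adj v r → r = p ∨ r = q ∨ r = y := by
            intro r hr
            rcases hall r hr with h | h | h | h
            · tauto
            · tauto
            · subst h; exact absurd hr hn
            · tauto
          have k1 := k a ha
          have k2 := k b hb
          have k3 := k c hc
          have k4 := k d hd
          clear hall k hp hq hn hxy
          grind
        · by_contra hn
          have k : ∀ r, G.Adj v r → r = p ∨ r = q ∨ r = x := by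
            intro r hr
            rcases hall r hr with h | h | h | h
            · tauto
            · tauto
            · tauto
            · subst h; exact absurd hr hn
          have k1 := k a ha
          have k2 := k b hb
          have k3 := k c hc
          have k4 := k d hd
          clear hall k hp hq hn hxy
          grind
      have hNv : ∀ r, G.Adj v r → r = a ∨ r = b ∨ r = c ∨ r = d := by
        obtain ⟨w, hw, hwv, _⟩ := deg3 hG ha.symm v v
        obtain ⟨_, _, p, q, hall⟩ := hend a w hw ha.ne' hwv
        intro r hr
        have k1 := hall a ha
        have k2 := hall b hb
        have k3 := hall c hc
        have k4 := hall d hd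
        have k5 := hall r hr
        clear hall
        grind
      -- each neighbour of v is adjacent to all the others
      have full : ∀ r s, G.Adj v r → G.Adj v s → r ≠ s → G.Adj r s := by
        intro r s hr hs hrs
        by_contra hn
        obtain ⟨w, hw, hwv, _⟩ := deg3 hG hr.symm v v
        have hvw := (hend r w hw hr.ne' hwv).2.1
        obtain ⟨p, q, hpq, hp, hq, _⟩ := H2 hG hvw hr.symm hr.ne' hw.ne
        have hvp := (hend r p hp.1 hr.ne' hp.2.2.2.1).2.1
        have hvq := (hend r q hq.1 hr.ne' hq.2.2.2.1).2.1
        have n1 := hp.1.ne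
        have n2 := hq.1.ne
        have n3 := hw.ne
        have n4 := hp.2.2.2.2
        have n5 := hq.2.2.2.2
        have s1 : s ≠ w := by rintro rfl; exact hn hw
        have s2 : s ≠ p := by rintro rfl; exact hn hp.1
        have s3 : s ≠ q := by rintro rfl; exact hn hq.1
        have k1 := hNv r hr
        have k2 := hNv s hs
        have k3 := hNv w hvw
        have k4 := hNv p hvp
        have k5 := hNv q hvq
        clear hNv hend
        grind
      have e1 := full a b ha hb hab
      have e2 := full a c ha hc hac
      have e3 := full a d ha hd had
      have e4 := full b c hb hc hbc
      have e5 := full b d hb hd hbd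
      have e6 := full c d hc hd hcd
      exact five_clique hG.planar ha hb hc hd e1 e2 e3 e4 e5 e6
    · have ex1 : ∀ x y v w, G.Adj x y → G.Adj v w → v ≠ x → v ≠ y → (G.Adj v x ∨ G.Adj v y) ∧ ¬ (G.Adj v x ∧ G.Adj v y) := by
        intro x y v w hxy hvw hvx hvy
        obtain ⟨a, b, hab, ha, hb, hall⟩ := H2 hG hxy hvw hvx hvy
        constructor
        · obtain ⟨c, hc, hca, hcb⟩ := deg3 hG hvw a b
          rcases hall c hc with h | h | h | h
          · exact absurd h hca
          · exact absurd h hcb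
          · subst h; exact Or.inl hc
          · subst h; exact Or.inr hc
        · rintro ⟨h1, h2⟩
          exact h4 ⟨v, a, b, x, y, ha.1, hb.1, h1, h2, hab, ha.2.2.2.1, ha.2.2.2.2, hb.2.2.2.1, hb.2.2.2.2, hxy.ne⟩
      obtain ⟨x, y, hxy⟩ := hE
      obtain ⟨a, ha, hay⟩ := L1 hG hxy
      obtain ⟨b, hb, hby, hba⟩ := L2 hG hxy ha hay.symm
      obtain ⟨c, hc, hcx⟩ := L1 hG hxy.symm
      obtain ⟨d, hd, hdx, hdc⟩ := L2 hG hxy.symm hc hcx.symm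
      have nay : ∀ r, G.Adj x r → r ≠ y → ¬ G.Adj y r := by
        intro r hr hry h
        exact (ex1 x y r x hxy hr.symm hr.ne' hry).2 ⟨hr.symm, h.symm⟩
      have adj : ∀ r s, G.Adj x r → r ≠ y → G.Adj y s → s ≠ x → G.Adj r s := by
        intro r s hr hry hs hsx
        have hrs : r ≠ s := by rintro rfl; exact nay r hr hry hs
        rcases (ex1 y s r x hs hr.symm hry hrs).1 with h | h
        · exact absurd h.symm (nay r hr hry)
        · exact h
      exact k33 hG.planar hxy ha hb hc hd (adj a c ha hay hc hcx) (adj a d ha hay hd hdx) (adj b c hb hby hc hcx) (adj b d hb hby hd hdx)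
        hay hby hba.symm hcx hdx hdc.symm
  · push Not at hE
    apply hG.nfs
    refine ⟨Empty, inferInstance, fun e => e.elim, fun e => e.elim, fun S hS => ⟨fun e => e.elim, ?_⟩, fun _ e => e.elim⟩
    simp only [Finset.univ_eq_empty, Finset.sum_empty]
    funext e
    induction e with | _ a b => exact Cc_zero (mem_Zc.1 hS).1 (hE a b)

theorem planar_FS (G : SimpleGraph V) (hp : IsPlanar G) : FS G := by
  suffices h : ∀ n (G : SimpleGraph V), G.edgeSet.ncard = n → IsPlanar G → FS G from h _ G rfl hp
  intro n
  induction n using Nat.strong_induction_on with | _ n ih =>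
  intro G hn hp
  by_contra hno
  exact no_min ⟨hp, hno, fun G' hp' hlt => ih _ (hn ▸ hlt) G' rfl hp'⟩

end Theta6

namespace Theta6
universe u
open scoped Classical
set_option linter.unusedSectionVars false
set_option linter.unusedVariables false
variable {V : Type u} [Fintype V]

theorem dimZ (G : SimpleGraph V) [Nonempty V] :
    G.edgeSet.ncard + 1 ≤ Module.finrank (ZMod 2) (Zc G) + Fintype.card V := by
  let E : (G.edgeSet → ZMod 2) →ₗ[ZMod 2] ES V := Function.ExtendByZero.linearMap (ZMod 2) (Subtype.val : G.edgeSet → Sym2 V)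
  have hE : ∀ x (e : G.edgeSet), E x e.1 = x e := by
    intro x e
    simp [E, Subtype.val_injective.extend_apply]
  have hE0 : ∀ x (e : Sym2 V), e ∉ G.edgeSet → E x e = 0 := by
    intro x e he
    have : ¬ ∃ a : G.edgeSet, (a : Sym2 V) = e := by rintro ⟨a, rfl⟩; exact he a.2
    simp [E, Function.extend_apply' _ _ _ this]
  have hEC : ∀ x, E x ∈ Cc G := by
    intro x e he
    by_contra h
    exact he (hE0 x e h)
  let L := bd.comp E
  have h1 := LinearMap.finrank_range_add_finrank_ker L
  have hker : Module.finrank (ZMod 2) (LinearMap.ker L) ≤ Module.finrank (ZMod 2) (Zc G) := by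
    let f : LinearMap.ker L →ₗ[ZMod 2] Zc G := LinearMap.codRestrict (Zc G) (E.comp (LinearMap.ker L).subtype)
      (fun x => mem_Zc.2 ⟨hEC _, x.2⟩)
    apply LinearMap.finrank_le_finrank_of_injective (f := f)
    intro x y hxy
    apply Subtype.ext
    funext e
    have : E x.1 = E y.1 := congrArg Subtype.val hxy
    rw [← hE x.1 e, ← hE y.1 e, this]
  let σ : (V → ZMod 2) →ₗ[ZMod 2] ZMod 2 := ∑ v, LinearMap.proj v
  have hσ : ∀ x, σ x = ∑ v, x v := by intro x; simp [σ]
  have hran : LinearMap.range L ≤ LinearMap.ker σ := by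
    rintro _ ⟨x, rfl⟩
    rw [LinearMap.mem_ker, hσ]
    exact handshake0 (hEC x)
  have h2 := Submodule.finrank_mono hran
  have h3 := LinearMap.finrank_range_add_finrank_ker σ
  have h4 : Module.finrank (ZMod 2) (LinearMap.range σ) = 1 := by
    have : LinearMap.range σ = ⊤ := by
      rw [LinearMap.range_eq_top]
      intro y
      obtain ⟨v⟩ := ‹Nonempty V›
      refine ⟨fun w => if w = v then y else 0, ?_⟩
      rw [hσ]; simp
    rw [this, finrank_top, Module.finrank_self]
  simp only [Module.finrank_fintype_fun_eq_card] at h1 h3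
  have h5 : G.edgeSet.ncard = Fintype.card G.edgeSet := by
    rw [Set.ncard_eq_toFinset_card', Set.toFinset_card]
  omega

structure PF (G : SimpleGraph V) {ι : Type} [Fintype ι] (F : ι → ES V) : Prop extends FSp G F where
  nz : ∀ i, F i ≠ 0
  sum : ∑ i, F i = 0
  zs : ∀ c : ι → ZMod 2, ∑ i, c i • F i = 0 → ∀ i j, c i = c j
  count : G.edgeSet.ncard + 2 ≤ Fintype.card ι + Fintype.card V

theorem exists_PF (G : SimpleGraph V) [Nonempty V] (h : FS G) (hZ : Zc G ≠ ⊥) :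
    ∃ (ι : Type) (_ : Fintype ι) (F : ι → ES V), PF G F := by
  obtain ⟨ι, _, F, hF⟩ := h
  obtain ⟨κ, a, ha, hsp, hli⟩ := exists_linearIndependent' (ZMod 2) F
  have : Fintype κ := Fintype.ofInjective a ha
  let B : κ → ES V := F ∘ a
  have hspan : Submodule.span (ZMod 2) (Set.range B) = Zc G := by
    change Submodule.span (ZMod 2) (Set.range (F ∘ a)) = _
    rw [hsp]
    apply le_antisymm
    · rw [Submodule.span_le]
      rintro _ ⟨i, rfl⟩
      exact hF.mem i
    · intro S hS
      obtain ⟨c, rfl⟩ := hF.span S hS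
      exact Submodule.sum_mem _ fun i _ => Submodule.smul_mem _ _ (Submodule.subset_span ⟨i, rfl⟩)
  have hcard : Module.finrank (ZMod 2) (Zc G) = Fintype.card κ := by
    rw [← hspan]; exact finrank_span_eq_card hli
  have hne : Nonempty κ := by
    by_contra hn
    rw [not_nonempty_iff] at hn
    apply hZ
    rw [← hspan]
    simp
  have hBm : ∀ i, B i ∈ Zc G := fun i => hF.mem _
  have hBs : ∀ S ∈ Zc G, ∃ c : κ → ZMod 2, S = ∑ i, c i • B i := by
    intro S hS
    rw [← hspan, Submodule.mem_span_range_iff_exists_fun] at hS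
    obtain ⟨c, hc⟩ := hS
    exact ⟨c, hc.symm⟩
  have hB2 : M2 B := by
    intro e i j k hi hj hk
    rcases hF.m2 e _ _ _ hi hj hk with h | h | h
    · exact Or.inl (ha h)
    · exact Or.inr (Or.inl (ha h))
    · exact Or.inr (Or.inr (ha h))
  have hBli : ∀ c : κ → ZMod 2, ∑ i, c i • B i = 0 → ∀ i, c i = 0 := Fintype.linearIndependent_iff.1 hli
  have key : ∀ e i j, (∑ k, B k) e ≠ 0 → B i e ≠ 0 → B j e ≠ 0 → i = j := by
    intro e i j h hi hj
    by_contra hij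
    apply h
    rw [Finset.sum_apply, ← Finset.sum_subset (Finset.subset_univ {i, j}), Finset.sum_pair hij, z2 hi, z2 hj]
    · rfl
    · intro k _ hk
      by_contra hk2
      simp only [Finset.mem_insert, Finset.mem_singleton, not_or] at hk
      rcases hB2 e i j k hi hj hk2 with h | h | h
      · exact hij h
      · exact hk.1 h.symm
      · exact hk.2 h.symm
  refine ⟨Option κ, inferInstance, fun o => o.elim (∑ i, B i) B, ⟨⟨?_, ?_, ?_⟩, ?_, ?_, ?_, ?_⟩⟩
  · rintro (_ | i)
    · exact Submodule.sum_mem _ fun i _ => hBm i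
    · exact hBm i
  · intro S hS
    obtain ⟨c, hc⟩ := hBs S hS
    refine ⟨fun o => o.elim 0 c, ?_⟩
    rw [Fintype.sum_option]
    simpa using hc
  · rintro e (_ | i) (_ | j) (_ | k) hi hj hk
    · simp
    · simp
    · simp
    · right; right; congr 1; exact key e j k hi hj hk
    · simp
    · right; left; congr 1; exact key e i k hj hi hk
    · left; congr 1; exact key e i j hk hi hj
    · rcases hB2 e i j k hi hj hk with h | h | h <;> simp [h]
  · rintro (_ | i)
    · intro h0
      obtain ⟨k⟩ := hne
      have := hBli (fun _ => 1) (by simpa using h0) k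
      exact one_ne_zero this
    · intro h0
      have := hBli (Pi.single i 1) (by
        rw [Finset.sum_eq_single i]
        · simpa using h0
        · intro j _ hj; simp [hj]
        · simp) i
      simp at this
  · rw [Fintype.sum_option]
    exact esadd _
  · intro c hc
    rw [Fintype.sum_option] at hc
    simp only [Option.elim] at hc
    have h0 : ∑ i, (c none + c (some i)) • B i = 0 := by
      simp only [add_smul, Finset.sum_add_distrib, ← Finset.smul_sum]
      exact hc
    have h1 : ∀ i, c (some i) = c none := by
      intro i
      have := hBli _ h0 i
      exact (z2_eq_of_add this).symm
    rintro (_ | i) (_ | j) <;> simp [h1]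
  · have := dimZ G
    rw [hcard] at this
    rw [Fintype.card_option]
    omega

end Theta6

namespace Theta6
universe u
open scoped Classical
set_option linter.unusedSectionVars false
set_option linter.unusedVariables false
variable {V : Type u} [Fintype V]

theorem ed_add {S : ES V} {a b : V} (h : S s(a,b) = 0) (e : Sym2 V) :
    (S + ed a b) e ≠ 0 ↔ S e ≠ 0 ∨ e = s(a,b) := by
  rw [Pi.add_apply, ed_apply]
  by_cases he : e = s(a,b)
  · subst he; simp [h]
  · simp [he]

theorem ed_ne_iff (a b : V) (e : Sym2 V) : ed a b e ≠ 0 ↔ e = s(a,b) := by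
  rw [ed_apply]; simp

noncomputable def sz (S : ES V) : ℕ := (Finset.univ.filter (fun e => S e ≠ 0)).card

theorem z_next {G : SimpleGraph V} {S : ES V} (hS : S ∈ Zc G) {a b : V} (h : S s(a,b) ≠ 0) :
    ∃ c, c ≠ a ∧ S s(b,c) ≠ 0 := by
  by_contra hcon
  push Not at hcon
  have h1 := star1 (S := S) (v := b) (a := a) hcon
  rw [Zc_sum hS] at h1
  rw [Sym2.eq_swap] at h
  exact h h1.symm

theorem sz_ge {S : ES V} (s : Finset (Sym2 V)) (h : ∀ e ∈ s, S e ≠ 0) : s.card ≤ sz S := by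
  apply Finset.card_le_card
  intro e he
  simp [h e he]

theorem sz_eq {S : ES V} (s : Finset (Sym2 V)) (h : ∀ e, S e ≠ 0 ↔ e ∈ s) : sz S = s.card := by
  unfold sz
  congr 1
  ext e
  simp [h e]

theorem sz3 {G : SimpleGraph V} {S : ES V} (hS : S ∈ Zc G) (h : S ≠ 0) : 3 ≤ sz S := by
  obtain ⟨e, he⟩ : ∃ e, S e ≠ 0 := by
    by_contra hcon
    push Not at hcon
    exact h (funext hcon)
  induction e with | _ a b =>
  obtain ⟨c, hc, hbc⟩ := z_next hS he
  have he' : S s(b,a) ≠ 0 := by rwa [Sym2.eq_swap]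
  obtain ⟨d, hd, had⟩ := z_next hS he'
  have n1 := (Cc_adj (mem_Zc.1 hS).1 he).ne
  have n2 := (Cc_adj (mem_Zc.1 hS).1 hbc).ne
  have n3 := (Cc_adj (mem_Zc.1 hS).1 had).ne
  have hcard : ({s(a,b), s(b,c), s(a,d)} : Finset (Sym2 V)).card = 3 := by
    rw [Finset.card_eq_three]
    refine ⟨_, _, _, ?_, ?_, ?_, rfl⟩ <;> rw [Ne, Sym2.eq_iff] <;> grind
  rw [← hcard]
  apply sz_ge
  intro e h
  simp only [Finset.mem_insert, Finset.mem_singleton] at h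
  rcases h with rfl | rfl | rfl <;> assumption

theorem sub_eq {G : SimpleGraph V} {C T : ES V} (hC : C ∈ Zc G) (hT : T ∈ Zc G) (h0 : C ≠ 0)
    (hsub : ∀ e, C e ≠ 0 → T e ≠ 0) (hsz : sz T ≤ 5) : T = C := by
  by_contra hne
  have h1 : T + C ∈ Zc G := Submodule.add_mem _ hT hC
  have h2 : T + C ≠ 0 := fun h => hne (eq_of_add h)
  have h3 := sz3 h1 h2
  have h4 := sz3 hC h0
  have h5 : sz C + sz (T + C) ≤ sz T := by
    unfold sz
    rw [← Finset.card_union_of_disjoint]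
    · apply Finset.card_le_card
      intro e he
      simp only [Finset.mem_union, Finset.mem_filter, Finset.mem_univ, true_and] at he ⊢
      rcases he with he | he
      · exact hsub e he
      · intro h6
        apply he
        have : C e = 0 := by by_contra h7; exact hsub e h7 h6
        simp [h6, this]
    · rw [Finset.disjoint_filter]
      intro e _ he h6
      apply h6
      rw [Pi.add_apply, z2 he, z2 (hsub e he)]; rfl
  omega

structure C3 (S : ES V) (a b c : V) : Prop where
  ab : a ≠ b
  bc : b ≠ c
  ac : a ≠ c
  eq : S = ed a b + ed b c + ed c a

structure C4 (S : ES V) (a b c d : V) : Prop where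
  ab : a ≠ b
  ac : a ≠ c
  ad : a ≠ d
  bc : b ≠ c
  bd : b ≠ d
  cd : c ≠ d
  eq : S = ed a b + ed b c + ed c d + ed d a

structure C5 (S : ES V) (a b c d e : V) : Prop where
  ab : a ≠ b
  ac : a ≠ c
  ad : a ≠ d
  ae : a ≠ e
  bc : b ≠ c
  bd : b ≠ d
  be : b ≠ e
  cd : c ≠ d
  ce : c ≠ e
  de : d ≠ e
  eq : S = ed a b + ed b c + ed c d + ed d e + ed e a

theorem C3.rot {S : ES V} {a b c : V} (h : C3 S a b c) : C3 S b c a :=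
  ⟨h.bc, h.ac.symm, h.ab.symm, by rw [h.eq]; abel⟩

theorem C3.swap {S : ES V} {a b c : V} (h : C3 S a b c) : C3 S b a c :=
  ⟨h.ab.symm, h.ac, h.bc, by rw [h.eq, ed_comm a b, ed_comm b c, ed_comm c a]; abel⟩

theorem C4.flip {S : ES V} {a b c d : V} (h : C4 S a b c d) : C4 S b a d c :=
  ⟨h.ab.symm, h.bd, h.bc, h.ad, h.ac, h.cd.symm, by
    rw [h.eq, ed_comm a b, ed_comm b c, ed_comm c d, ed_comm d a]; abel⟩

theorem C4.rot {S : ES V} {a b c d : V} (h : C4 S a b c d) : C4 S b c d a :=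
  ⟨h.bc, h.bd, h.ab.symm, h.cd, h.ac.symm, h.ad.symm, by rw [h.eq]; abel⟩

theorem C5.flip {S : ES V} {a b c d e : V} (h : C5 S a b c d e) : C5 S b a e d c :=
  ⟨h.ab.symm, h.be, h.bd, h.bc, h.ae, h.ad, h.ac, h.de.symm, h.ce.symm, h.cd.symm, by
    rw [h.eq, ed_comm a b, ed_comm b c, ed_comm c d, ed_comm d e, ed_comm e a]; abel⟩

theorem C3.on {S : ES V} {a b c : V} (h : C3 S a b c) (e : Sym2 V) :
    S e ≠ 0 ↔ e = s(a,b) ∨ e = s(b,c) ∨ e = s(c,a) := by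
  obtain ⟨h1, h2, h3, rfl⟩ := h
  have k1 : ed a b s(b,c) = 0 := by rw [ed_apply, if_neg]; rw [Sym2.eq_iff]; grind
  have k2 : (ed a b + ed b c) s(c,a) = 0 := by
    by_contra hn
    rw [← ne_eq, ed_add k1, ed_ne_iff, Sym2.eq_iff, Sym2.eq_iff] at hn; grind
  rw [ed_add k2, ed_add k1, ed_ne_iff]
  tauto

theorem C4.on {S : ES V} {a b c d : V} (h : C4 S a b c d) (e : Sym2 V) :
    S e ≠ 0 ↔ e = s(a,b) ∨ e = s(b,c) ∨ e = s(c,d) ∨ e = s(d,a) := by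
  obtain ⟨h1, h2, h3, h4, h5, h6, rfl⟩ := h
  have k1 : ed a b s(b,c) = 0 := by rw [ed_apply, if_neg]; rw [Sym2.eq_iff]; grind
  have k2 : (ed a b + ed b c) s(c,d) = 0 := by
    by_contra hn
    rw [← ne_eq, ed_add k1, ed_ne_iff, Sym2.eq_iff, Sym2.eq_iff] at hn; grind
  have k3 : (ed a b + ed b c + ed c d) s(d,a) = 0 := by
    by_contra hn
    rw [← ne_eq, ed_add k2, ed_add k1, ed_ne_iff, Sym2.eq_iff, Sym2.eq_iff, Sym2.eq_iff] at hn; grind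
  rw [ed_add k3, ed_add k2, ed_add k1, ed_ne_iff]
  tauto

theorem C5.on {S : ES V} {a b c d f : V} (h : C5 S a b c d f) (e : Sym2 V) :
    S e ≠ 0 ↔ e = s(a,b) ∨ e = s(b,c) ∨ e = s(c,d) ∨ e = s(d,f) ∨ e = s(f,a) := by
  obtain ⟨h1, h2, h3, h4, h5, h6, h7, h8, h9, h10, rfl⟩ := h
  have k1 : ed a b s(b,c) = 0 := by rw [ed_apply, if_neg]; rw [Sym2.eq_iff]; grind
  have k2 : (ed a b + ed b c) s(c,d) = 0 := by
    by_contra hn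
    rw [← ne_eq, ed_add k1, ed_ne_iff, Sym2.eq_iff, Sym2.eq_iff] at hn; grind
  have k3 : (ed a b + ed b c + ed c d) s(d,f) = 0 := by
    by_contra hn
    rw [← ne_eq, ed_add k2, ed_add k1, ed_ne_iff, Sym2.eq_iff, Sym2.eq_iff, Sym2.eq_iff] at hn; grind
  have k4 : (ed a b + ed b c + ed c d + ed d f) s(f,a) = 0 := by
    by_contra hn
    rw [← ne_eq, ed_add k3, ed_add k2, ed_add k1, ed_ne_iff, Sym2.eq_iff, Sym2.eq_iff, Sym2.eq_iff, Sym2.eq_iff] at hn; grind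
  rw [ed_add k4, ed_add k3, ed_add k2, ed_add k1, ed_ne_iff]
  tauto

theorem C3.sz {S : ES V} {a b c : V} (h : C3 S a b c) : sz S = 3 := by
  rw [sz_eq {s(a,b), s(b,c), s(c,a)} (by intro e; rw [h.on]; simp), Finset.card_eq_three]
  obtain ⟨h1, h2, h3, rfl⟩ := h
  refine ⟨_, _, _, ?_, ?_, ?_, rfl⟩ <;> rw [Ne, Sym2.eq_iff] <;> grind

theorem C4.sz {S : ES V} {a b c d : V} (h : C4 S a b c d) : sz S = 4 := by
  rw [sz_eq {s(a,b), s(b,c), s(c,d), s(d,a)} (by intro e; rw [h.on]; simp)]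
  obtain ⟨h1, h2, h3, h4, h5, h6, rfl⟩ := h
  rw [Finset.card_insert_of_notMem, Finset.card_insert_of_notMem, Finset.card_pair]
  · rw [Ne, Sym2.eq_iff]; grind
  · simp only [Finset.mem_insert, Finset.mem_singleton, Sym2.eq_iff]; grind
  · simp only [Finset.mem_insert, Finset.mem_singleton, Sym2.eq_iff]; grind

theorem C5.sz {S : ES V} {a b c d e : V} (h : C5 S a b c d e) : sz S = 5 := by
  rw [sz_eq {s(a,b), s(b,c), s(c,d), s(d,e), s(e,a)} (by intro e; rw [h.on]; simp)]
  obtain ⟨h1, h2, h3, h4, h5, h6, h7, h8, h9, h10, rfl⟩ := h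
  rw [Finset.card_insert_of_notMem, Finset.card_insert_of_notMem, Finset.card_insert_of_notMem, Finset.card_pair]
  · rw [Ne, Sym2.eq_iff]; grind
  · simp only [Finset.mem_insert, Finset.mem_singleton, Sym2.eq_iff]; grind
  · simp only [Finset.mem_insert, Finset.mem_singleton, Sym2.eq_iff]; grind
  · simp only [Finset.mem_insert, Finset.mem_singleton, Sym2.eq_iff]; grind

theorem c3_mem {G : SimpleGraph V} {a b c : V} (h1 : G.Adj a b) (h2 : G.Adj b c) (h3 : G.Adj c a) :
    ed a b + ed b c + ed c a ∈ Zc G := by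
  rw [mem_Zc]
  refine ⟨Submodule.add_mem _ (Submodule.add_mem _ (ed_Cc h1) (ed_Cc h2)) (ed_Cc h3), ?_⟩
  simp only [map_add]
  rw [bd_ed h1.ne, bd_ed h2.ne, bd_ed h3.ne]
  calc _ = (dl a + dl a) + (dl b + dl b) + (dl c + dl c) := by abel
    _ = 0 := by simp only [dladd, add_zero]

theorem c4_mem {G : SimpleGraph V} {a b c d : V} (h1 : G.Adj a b) (h2 : G.Adj b c) (h3 : G.Adj c d) (h4 : G.Adj d a) :
    ed a b + ed b c + ed c d + ed d a ∈ Zc G := by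
  rw [mem_Zc]
  refine ⟨Submodule.add_mem _ (Submodule.add_mem _ (Submodule.add_mem _ (ed_Cc h1) (ed_Cc h2)) (ed_Cc h3)) (ed_Cc h4), ?_⟩
  simp only [map_add]
  rw [bd_ed h1.ne, bd_ed h2.ne, bd_ed h3.ne, bd_ed h4.ne]
  calc _ = (dl a + dl a) + (dl b + dl b) + (dl c + dl c) + (dl d + dl d) := by abel
    _ = 0 := by simp only [dladd, add_zero]

theorem c5_mem {G : SimpleGraph V} {a b c d e : V} (h1 : G.Adj a b) (h2 : G.Adj b c) (h3 : G.Adj c d) (h4 : G.Adj d e)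
    (h5 : G.Adj e a) : ed a b + ed b c + ed c d + ed d e + ed e a ∈ Zc G := by
  rw [mem_Zc]
  refine ⟨Submodule.add_mem _ (Submodule.add_mem _ (Submodule.add_mem _ (Submodule.add_mem _ (ed_Cc h1) (ed_Cc h2)) (ed_Cc h3)) (ed_Cc h4)) (ed_Cc h5), ?_⟩
  simp only [map_add]
  rw [bd_ed h1.ne, bd_ed h2.ne, bd_ed h3.ne, bd_ed h4.ne, bd_ed h5.ne]
  calc _ = (dl a + dl a) + (dl b + dl b) + (dl c + dl c) + (dl d + dl d) + (dl e + dl e) := by abel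
    _ = 0 := by simp only [dladd, add_zero]

theorem swp {S : ES V} {a b : V} (h : S s(a,b) ≠ 0) : S s(b,a) ≠ 0 := by rwa [Sym2.eq_swap]

theorem sub3 {G : SimpleGraph V} {T : ES V} (hT : T ∈ Zc G) (hsz : sz T ≤ 5) {a b c : V}
    (h1 : T s(a,b) ≠ 0) (h2 : T s(b,c) ≠ 0) (h3 : T s(c,a) ≠ 0) : C3 T a b c := by
  have a1 := Cc_adj (mem_Zc.1 hT).1 h1
  have a2 := Cc_adj (mem_Zc.1 hT).1 h2
  have a3 := Cc_adj (mem_Zc.1 hT).1 h3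
  have hC : C3 (ed a b + ed b c + ed c a) a b c := ⟨a1.ne, a2.ne, a3.ne', rfl⟩
  have := sub_eq (c3_mem a1 a2 a3) hT (fun h => (hC.on s(a,b)).2 (Or.inl rfl) (by rw [h]; rfl))
    (by intro e he; rcases (hC.on e).1 he with rfl | rfl | rfl <;> assumption) hsz
  rwa [← this] at hC

theorem sub4 {G : SimpleGraph V} {T : ES V} (hT : T ∈ Zc G) (hsz : sz T ≤ 5) {a b c d : V}
    (h1 : T s(a,b) ≠ 0) (h2 : T s(b,c) ≠ 0) (h3 : T s(c,d) ≠ 0) (h4 : T s(d,a) ≠ 0) (hac : a ≠ c) (hbd : b ≠ d) :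
    C4 T a b c d := by
  have a1 := Cc_adj (mem_Zc.1 hT).1 h1
  have a2 := Cc_adj (mem_Zc.1 hT).1 h2
  have a3 := Cc_adj (mem_Zc.1 hT).1 h3
  have a4 := Cc_adj (mem_Zc.1 hT).1 h4
  have hC : C4 (ed a b + ed b c + ed c d + ed d a) a b c d := ⟨a1.ne, hac, a4.ne', a2.ne, hbd, a3.ne, rfl⟩
  have := sub_eq (c4_mem a1 a2 a3 a4) hT (fun h => (hC.on s(a,b)).2 (Or.inl rfl) (by rw [h]; rfl))
    (by intro e he; rcases (hC.on e).1 he with rfl | rfl | rfl | rfl <;> assumption) hsz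
  rwa [← this] at hC

theorem sub5 {G : SimpleGraph V} {T : ES V} (hT : T ∈ Zc G) (hsz : sz T ≤ 5) {a b c d e : V}
    (h1 : T s(a,b) ≠ 0) (h2 : T s(b,c) ≠ 0) (h3 : T s(c,d) ≠ 0) (h4 : T s(d,e) ≠ 0) (h5 : T s(e,a) ≠ 0)
    (hac : a ≠ c) (had : a ≠ d) (hbd : b ≠ d) (hbe : b ≠ e) (hce : c ≠ e) : C5 T a b c d e := by
  have a1 := Cc_adj (mem_Zc.1 hT).1 h1
  have a2 := Cc_adj (mem_Zc.1 hT).1 h2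
  have a3 := Cc_adj (mem_Zc.1 hT).1 h3
  have a4 := Cc_adj (mem_Zc.1 hT).1 h4
  have a5 := Cc_adj (mem_Zc.1 hT).1 h5
  have hC : C5 (ed a b + ed b c + ed c d + ed d e + ed e a) a b c d e :=
    ⟨a1.ne, hac, had, a5.ne', a2.ne, hbd, hbe, a3.ne, hce, a4.ne, rfl⟩
  have := sub_eq (c5_mem a1 a2 a3 a4 a5) hT (fun h => (hC.on s(a,b)).2 (Or.inl rfl) (by rw [h]; rfl))
    (by intro e he; rcases (hC.on e).1 he with rfl | rfl | rfl | rfl | rfl <;> assumption) hsz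
  rwa [← this] at hC

/-- small elements of the cycle space are cycles -/
theorem cls {G : SimpleGraph V} {T : ES V} (hT : T ∈ Zc G) {a b : V} (h : T s(a,b) ≠ 0) :
    (∃ c, C3 T a b c) ∨ (∃ c d, C4 T a b c d) ∨ (∃ c d e, C5 T a b c d e) ∨ 6 ≤ sz T := by
  by_cases hsz : sz T ≤ 5
  swap
  · right; right; right; omega
  have adj : ∀ {p q : V}, T s(p,q) ≠ 0 → p ≠ q := fun h => (Cc_adj (mem_Zc.1 hT).1 h).ne
  have hab := adj h
  obtain ⟨c, hca, hbc⟩ := z_next hT h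
  have hbc' := adj hbc
  obtain ⟨d, hdb, hcd⟩ := z_next hT hbc
  have hcd' := adj hcd
  by_cases hda : d = a
  · subst hda
    exact Or.inl ⟨c, sub3 hT hsz h hbc hcd⟩
  obtain ⟨x, hxc, hdx⟩ := z_next hT hcd
  have hdx' := adj hdx
  by_cases hxa : x = a
  · subst hxa
    exact Or.inr (Or.inl ⟨c, d, sub4 hT hsz h hbc hcd hdx hca.symm hdb.symm⟩)
  by_cases hxb : x = b
  · subst hxb
    have k := sub3 hT hsz hbc hcd hdx
    rw [k.on, Sym2.eq_iff, Sym2.eq_iff, Sym2.eq_iff] at h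
    grind
  obtain ⟨y, hyd, hxy⟩ := z_next hT hdx
  have hxy' := adj hxy
  by_cases hya : y = a
  · subst hya
    exact Or.inr (Or.inr (Or.inl ⟨c, d, x, sub5 hT hsz h hbc hcd hdx hxy hca.symm (Ne.symm hda) hdb.symm (Ne.symm hxb) (Ne.symm hxc)⟩))
  exfalso
  obtain ⟨z, hzb, haz⟩ := z_next hT (swp h)
  have haz' := adj haz
  have hcard : ({s(a,b), s(b,c), s(c,d), s(d,x), s(x,y), s(a,z)} : Finset (Sym2 V)).card = 6 := by
    by_cases hyb : y = b
    · subst hyb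
      have k := sub4 hT hsz hbc hcd hdx hxy hdb.symm (Ne.symm hxc)
      rw [k.on] at h
      simp only [Sym2.eq_iff] at h
      grind
    by_cases hyc : y = c
    · subst hyc
      have k := sub3 hT hsz hcd hdx hxy
      rw [k.on] at h
      simp only [Sym2.eq_iff] at h
      grind
    by_cases hzc : z = c
    · subst hzc
      have k := sub3 hT hsz h hbc (swp haz)
      rw [k.on] at hdx
      simp only [Sym2.eq_iff] at hdx
      grind
    by_cases hzd : z = d
    · subst hzd
      have k := sub4 hT hsz h hbc hcd (swp haz) hca.symm hdb.symm
      rw [k.on] at hdx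
      simp only [Sym2.eq_iff] at hdx
      grind
    rw [Finset.card_insert_of_notMem, Finset.card_insert_of_notMem, Finset.card_insert_of_notMem, Finset.card_insert_of_notMem, Finset.card_pair]
    all_goals
      simp only [Finset.mem_insert, Finset.mem_singleton, Sym2.eq_iff, Ne]
      grind
  have : 6 ≤ sz T := by
    rw [← hcard]
    apply sz_ge
    intro e h
    simp only [Finset.mem_insert, Finset.mem_singleton] at h
    rcases h with rfl | rfl | rfl | rfl | rfl | rfl <;> assumption
  omega

end Theta6

namespace Theta6
universe u
open scoped Classical
set_option linter.unusedSectionVars false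
set_option linter.unusedVariables false
variable {V : Type u} [Fintype V]

theorem thA {G : SimpleGraph V} (ht : ¬ HasTheta6 G) {a b c d e f : V} (h1 : G.Adj a b) (h2 : G.Adj b c)
    (h3 : G.Adj c d) (h4 : G.Adj d e) (h5 : G.Adj e f) (h6 : G.Adj f a) (h : G.Adj a c ∨ G.Adj a d)
    (hn : [a, b, c, d, e, f].Nodup) : False := by
  apply ht
  refine ⟨![a, b, c, d, e, f], ?_, ?_, ?_⟩
  · have := List.nodup_iff_injective_get.1 hn
    intro i j hij
    apply this
    fin_cases i <;> fin_cases j <;> exact hij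
  · intro i
    fin_cases i <;> assumption
  · rcases h with h | h
    · exact ⟨0, 2, by decide, by decide, by decide, h⟩
    · exact ⟨0, 3, by decide, by decide, by decide, h⟩

theorem C3.e1 {S : ES V} {a b c : V} (h : C3 S a b c) : S s(a,b) ≠ 0 := (h.on _).2 (by simp)
theorem C3.e2 {S : ES V} {a b c : V} (h : C3 S a b c) : S s(b,c) ≠ 0 := (h.on _).2 (by simp)
theorem C3.e3 {S : ES V} {a b c : V} (h : C3 S a b c) : S s(c,a) ≠ 0 := (h.on _).2 (by simp)
theorem C4.e1 {S : ES V} {a b c d : V} (h : C4 S a b c d) : S s(a,b) ≠ 0 := (h.on _).2 (by simp)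
theorem C4.e2 {S : ES V} {a b c d : V} (h : C4 S a b c d) : S s(b,c) ≠ 0 := (h.on _).2 (by simp)
theorem C4.e3 {S : ES V} {a b c d : V} (h : C4 S a b c d) : S s(c,d) ≠ 0 := (h.on _).2 (by simp)
theorem C4.e4 {S : ES V} {a b c d : V} (h : C4 S a b c d) : S s(d,a) ≠ 0 := (h.on _).2 (by simp)
theorem C5.e1 {S : ES V} {a b c d e : V} (h : C5 S a b c d e) : S s(a,b) ≠ 0 := (h.on _).2 (by simp)
theorem C5.e2 {S : ES V} {a b c d e : V} (h : C5 S a b c d e) : S s(b,c) ≠ 0 := (h.on _).2 (by simp)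
theorem C5.e3 {S : ES V} {a b c d e : V} (h : C5 S a b c d e) : S s(c,d) ≠ 0 := (h.on _).2 (by simp)
theorem C5.e4 {S : ES V} {a b c d e : V} (h : C5 S a b c d e) : S s(d,e) ≠ 0 := (h.on _).2 (by simp)
theorem C5.e5 {S : ES V} {a b c d e : V} (h : C5 S a b c d e) : S s(e,a) ≠ 0 := (h.on _).2 (by simp)

structure Faces (G : SimpleGraph V) (𝓕 : Finset (ES V)) : Prop where
  hp : IsPlanar G
  ht : ¬ HasTheta6 G
  mem : ∀ S ∈ 𝓕, S ∈ Zc G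
  two : ∀ S ∈ 𝓕, ∀ e, S e ≠ 0 → ∃ T ∈ 𝓕, T ≠ S ∧ T e ≠ 0
  m2 : ∀ S ∈ 𝓕, ∀ T ∈ 𝓕, ∀ U ∈ 𝓕, ∀ e, S e ≠ 0 → T e ≠ 0 → U e ≠ 0 → S = T ∨ S = U ∨ T = U
  v2 : ∀ S ∈ 𝓕, ∀ T ∈ 𝓕, S ≠ T → ∀ s a b, a ≠ b → S s(s,a) ≠ 0 → T s(s,a) ≠ 0 →
    (∀ u, S s(s,u) ≠ 0 → u = a ∨ u = b) → (∀ u, T s(s,u) ≠ 0 → u = a ∨ u = b) → False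
  zs : ∀ S ∈ 𝓕, ∀ l : List (ES V), l.length ≤ 5 → (∀ T ∈ l, T ∈ 𝓕) → S ∉ l → S + l.sum ≠ 0

variable {G : SimpleGraph V} {𝓕 : Finset (ES V)}

theorem Faces.adj (hF : Faces G 𝓕) {S : ES V} (hS : S ∈ 𝓕) {a b : V} (h : S s(a,b) ≠ 0) : G.Adj a b :=
  Cc_adj (mem_Zc.1 (hF.mem S hS)).1 h

theorem Faces.sat (hF : Faces G 𝓕) {A B P : ES V} (hA : A ∈ 𝓕) (hB : B ∈ 𝓕) (hP : P ∈ 𝓕) {e : Sym2 V}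
    (hAB : A ≠ B) (ha : A e ≠ 0) (hb : B e ≠ 0) (hPA : P ≠ A) (hPB : P ≠ B) : P e = 0 := by
  by_contra h
  rcases hF.m2 A hA B hB P hP e ha hb h with h | h | h
  · exact hAB h
  · exact hPA h.symm
  · exact hPB h.symm

theorem ne_on {S T : ES V} {e : Sym2 V} (h : S e ≠ 0) (h' : T e = 0) : S ≠ T := by
  rintro rfl; exact h h'

theorem C3.off {S : ES V} {a b c x y : V} (h : C3 S a b c) (hx : x ≠ a ∧ x ≠ b ∧ x ≠ c) : S s(x,y) = 0 := by
  by_contra hn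
  rw [← ne_eq, h.on] at hn
  simp only [Sym2.eq_iff] at hn
  grind

theorem C3.uniq {S T : ES V} {a b c : V} (h : C3 S a b c) (h' : C3 T a b c) : S = T := by rw [h.eq, h'.eq]

structure Cfg (G : SimpleGraph V) (𝓕 : Finset (ES V)) (A B C : ES V) (c u v w : V) : Prop where
  F : Faces G 𝓕
  mA : A ∈ 𝓕
  mB : B ∈ 𝓕
  mC : C ∈ 𝓕
  ta : C3 A c u v
  tb : C3 B c v w
  tc : C3 C c w u

theorem Cfg.rot {A B C : ES V} {c u v w : V} (h : Cfg G 𝓕 A B C c u v w) : Cfg G 𝓕 B C A c v w u :=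
  ⟨h.F, h.mB, h.mC, h.mA, h.tb, h.tc, h.ta⟩

theorem C3.sw2 {S : ES V} {a b c : V} (h : C3 S a b c) : C3 S a c b := h.rot.rot.swap

/-- exchange `u` and `v` -/
theorem Cfg.swap {A B C : ES V} {c u v w : V} (h : Cfg G 𝓕 A B C c u v w) : Cfg G 𝓕 A C B c v u w :=
  ⟨h.F, h.mA, h.mC, h.mB, h.ta.sw2, h.tc.sw2, h.tb.sw2⟩

theorem Cfg.ne {A B C : ES V} {c u v w : V} (h : Cfg G 𝓕 A B C c u v w) : A ≠ B ∧ B ≠ C ∧ A ≠ C := by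
  have hb := h.tb.off (x := u) (y := c) ⟨h.ta.ab.symm, h.ta.bc, h.tc.bc.symm⟩
  have hc := h.tc.off (x := v) (y := c) ⟨h.ta.ac.symm, h.tb.bc, h.ta.bc.symm⟩
  exact ⟨ne_on (swp h.ta.e1) hb, ne_on (swp h.tb.e1) hc, ne_on h.ta.e3 hc⟩

theorem Cfg.K {A B C : ES V} {c u v w : V} (h : Cfg G 𝓕 A B C c u v w) :
    G.Adj c u ∧ G.Adj c v ∧ G.Adj c w ∧ G.Adj u v ∧ G.Adj v w ∧ G.Adj u w :=
  ⟨h.F.adj h.mA h.ta.e1, h.F.adj h.mB h.tb.e1, h.F.adj h.mC h.tc.e1, h.F.adj h.mA h.ta.e2, h.F.adj h.mB h.tb.e2, (h.F.adj h.mC h.tc.e2).symm⟩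

theorem Cfg.c0 {A B C P : ES V} {c u v w : V} (h : Cfg G 𝓕 A B C c u v w) (hP : P ∈ 𝓕) (h1 : P ≠ A) (h2 : P ≠ B) (h3 : P ≠ C) :
    P s(c,u) = 0 ∧ P s(c,v) = 0 ∧ P s(c,w) = 0 :=
  ⟨h.F.sat h.mA h.mC hP h.ne.2.2 h.ta.e1 (swp h.tc.e3) h1 h3, h.F.sat h.mA h.mB hP h.ne.1 (swp h.ta.e3) h.tb.e1 h1 h2,
    h.F.sat h.mB h.mC hP h.ne.2.1 (swp h.tb.e3) h.tc.e1 h2 h3⟩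

theorem ne_sz {S T : ES V} (h : sz T = 3) (h' : sz S ≠ 3) : S ≠ T := by rintro rfl; exact h' h

theorem Cfg.Xquad {A B C X : ES V} {c u v w p q : V} (h : Cfg G 𝓕 A B C c u v w) (hX : X ∈ 𝓕) (x : C4 X u v p q) :
    p = w ∨ q = w := by
  have hs : sz X ≠ 3 := by rw [x.sz]; decide
  obtain ⟨h1, h2, h3⟩ := h.c0 hX (ne_sz h.ta.sz hs) (ne_sz h.tb.sz hs) (ne_sz h.tc.sz hs)
  obtain ⟨k1, k2, k3, k4, k5, k6⟩ := h.K
  have pc : p ≠ c := by rintro rfl; exact swp x.e2 h2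
  have qc : q ≠ c := by rintro rfl; exact x.e4 h1
  by_contra hn
  push Not at hn
  refine thA h.F.ht k1.symm k3 k5.symm (h.F.adj hX x.e2) (h.F.adj hX x.e3) (h.F.adj hX x.e4) (Or.inr k4) ?_
  have := x.ab; have := x.ac; have := x.ad; have := x.bc; have := x.bd; have := x.cd
  have := h.ta.ab; have := h.ta.bc; have := h.ta.ac; have := h.tb.bc; have := h.tb.ac; have := h.tc.bc
  simp; grind

theorem Cfg.Xpent {A B C X : ES V} {c u v w p q r : V} (h : Cfg G 𝓕 A B C c u v w) (hX : X ∈ 𝓕) (x : C5 X u v p q r)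
    (huw : X s(u,w) = 0) (hvw : X s(v,w) = 0) : False := by
  have hs : sz X ≠ 3 := by rw [x.sz]; decide
  obtain ⟨h1, h2, h3⟩ := h.c0 hX (ne_sz h.ta.sz hs) (ne_sz h.tb.sz hs) (ne_sz h.tc.sz hs)
  obtain ⟨k1, k2, k3, k4, k5, k6⟩ := h.K
  have pc : p ≠ c := by rintro rfl; exact swp x.e2 h2
  have rc : r ≠ c := by rintro rfl; exact x.e5 h1
  have pw : p ≠ w := by rintro rfl; exact x.e2 hvw
  have rw' : r ≠ w := by rintro rfl; exact swp x.e5 huw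
  have d1 := x.ab; have d2 := x.ac; have d3 := x.ad; have d4 := x.ae; have d5 := x.bc; have d6 := x.bd; have d7 := x.be
  have d8 := x.cd; have d9 := x.ce; have d10 := x.de
  have := h.ta.ab; have := h.ta.bc; have := h.ta.ac; have := h.tb.bc; have := h.tb.ac; have := h.tc.bc
  by_cases hq : q = c
  · refine thA h.F.ht k6 k5.symm (h.F.adj hX x.e2) (h.F.adj hX x.e3) (h.F.adj hX x.e4) (h.F.adj hX x.e5) (Or.inl k4) ?_
    simp; grind
  · refine thA h.F.ht k1.symm k2 (h.F.adj hX x.e2) (h.F.adj hX x.e3) (h.F.adj hX x.e4) (h.F.adj hX x.e5) (Or.inl k4) ?_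
    simp; grind

/-- an attached triangle `v w s` -/
structure Att (G : SimpleGraph V) (𝓕 : Finset (ES V)) (A B C Y : ES V) (c u v w s : V) : Prop extends Cfg G 𝓕 A B C c u v w where
  mY : Y ∈ 𝓕
  YB : Y ≠ B
  ty : C3 Y v w s

theorem Att.s {A B C Y : ES V} {c u v w s : V} (h : Att G 𝓕 A B C Y c u v w s) : s ≠ c ∧ s ≠ u := by
  constructor
  · rintro rfl
    exact h.YB (h.ty.uniq h.tb.rot)
  · rintro rfl
    have h1 : A ∉ [B, C, Y] := by
      have := h.ne
      have hy : A ≠ Y := ne_on h.ta.e1 (h.ty.off ⟨h.ta.ac, h.tb.ac, h.ta.ab⟩)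
      simp; tauto
    refine h.F.zs A h.mA [B, C, Y] (by simp) (by simp [h.mB, h.mC, h.mY]) h1 ?_
    have t : (2 : ES V) = 0 := by rw [← one_add_one_eq_two]; exact esadd _
    simp only [List.sum_cons, List.sum_nil]
    rw [h.ta.eq, h.tb.eq, h.tc.eq, h.ty.eq, ed_comm v c, ed_comm w c, ed_comm s c]
    ring_nf
    simp [t]

theorem Att.Pne {A B C Y P : ES V} {c u v w s : V} (h : Att G 𝓕 A B C Y c u v w s) (hP : P s(v,s) ≠ 0) :
    P ≠ A ∧ P ≠ B ∧ P ≠ C := by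
  have := h.s
  exact ⟨ne_on (swp hP) (h.ta.off ⟨this.1, this.2, h.ty.ac.symm⟩), ne_on (swp hP) (h.tb.off ⟨this.1, h.ty.ac.symm, h.ty.bc.symm⟩),
    ne_on (swp hP) (h.tc.off ⟨this.1, h.ty.bc.symm, this.2⟩)⟩

theorem Att.Ptri {A B C Y P : ES V} {c u v w s r : V} (h : Att G 𝓕 A B C Y c u v w s) (hP : P ∈ 𝓕) (hPY : P ≠ Y)
    (p : C3 P v s r) : r = u := by
  by_contra hru
  have hn := h.Pne p.e1
  obtain ⟨h1, h2, h3⟩ := h.c0 hP hn.1 hn.2.1 hn.2.2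
  obtain ⟨k1, k2, k3, k4, k5, k6⟩ := h.K
  obtain ⟨s1, s2⟩ := h.s
  have rc : r ≠ c := by rintro rfl; exact p.e3 h2
  have rw' : r ≠ w := by rintro rfl; exact hPY (p.sw2.uniq h.ty)
  refine thA h.F.ht (h.F.adj hP p.e3).symm (h.F.adj hP p.e2).symm (h.F.adj h.mY h.ty.e2).symm k3.symm k1 k4 (Or.inr k5) ?_
  have := h.ta.ab; have := h.ta.bc; have := h.ta.ac; have := h.tb.bc; have := h.tb.ac; have := h.tc.bc
  have := p.ab; have := p.bc; have := p.ac; have := h.ty.bc; have := h.ty.ac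
  simp; grind

theorem Att.Pvw {A B C Y P : ES V} {c u v w s : V} (h : Att G 𝓕 A B C Y c u v w s) (hP : P ∈ 𝓕) (hPY : P ≠ Y)
    (hp : P s(v,s) ≠ 0) : P s(v,w) = 0 :=
  h.F.sat h.mB h.mY hP h.YB.symm h.tb.e2 h.ty.e1 (h.Pne hp).2.1 hPY

theorem Att.Pquad {A B C Y P : ES V} {c u v w s a b : V} (h : Att G 𝓕 A B C Y c u v w s) (hP : P ∈ 𝓕)
    (p : C4 P v s a b) : False := by
  have hPY : P ≠ Y := ne_sz h.ty.sz (by rw [p.sz]; decide)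
  have hn := h.Pne p.e1
  obtain ⟨h1, h2, h3⟩ := h.c0 hP hn.1 hn.2.1 hn.2.2
  obtain ⟨k1, k2, k3, k4, k5, k6⟩ := h.K
  obtain ⟨s1, s2⟩ := h.s
  have hvw := h.Pvw hP hPY p.e1
  have q1 := h.F.adj hP p.e1
  have q2 := h.F.adj hP p.e2
  have q3 := h.F.adj hP p.e3
  have q4 := h.F.adj hP p.e4
  have ws := h.F.adj h.mY h.ty.e2
  have bw : b ≠ w := by rintro rfl; exact swp p.e4 hvw
  have bc : b ≠ c := by rintro rfl; exact p.e4 h2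
  have aw : a ≠ w := by
    rintro rfl
    refine h.F.v2 P hP Y h.mY hPY s v a p.ac (swp p.e1) h.ty.e3 ?_ ?_
    · intro x hx
      rw [p.on] at hx
      simp only [Sym2.eq_iff] at hx
      have := p.ab; have := p.bc; have := p.bd
      grind
    · intro x hx
      rw [h.ty.on] at hx
      simp only [Sym2.eq_iff] at hx
      have := p.ab; have := p.bc; have := p.bd
      grind
  have := h.ta.ab; have := h.ta.bc; have := h.ta.ac; have := h.tb.bc; have := h.tb.ac; have := h.tc.bc
  have := p.ab; have := p.bc; have := p.ac; have := h.ty.bc; have := h.ty.ac; have := p.ad; have := p.bd; have := p.cd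
  by_cases bu : b = u
  · subst bu
    have ac : a ≠ c := by rintro rfl; exact p.e3 h1
    refine thA h.F.ht k1.symm k3 k5.symm q1 q2 q3 (Or.inr k4) ?_
    simp; grind
  by_cases au : a = u
  · subst au
    refine thA h.F.ht k3 ws q1.symm q4.symm q3.symm k1.symm (Or.inr k2) ?_
    simp; grind
  by_cases ac : a = c
  · subst ac
    refine thA h.F.ht q4.symm q3.symm k1 k6 ws q1.symm (Or.inr k4.symm) ?_
    simp; grind
  · refine thA h.F.ht q2 q3 q4 k2.symm k3 ws (Or.inr q1.symm) ?_
    simp; grind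

theorem Att.Ppent {A B C Y P : ES V} {c u v w s a b d : V} (h : Att G 𝓕 A B C Y c u v w s) (hP : P ∈ 𝓕)
    (p : C5 P v s a b d) (huw : P s(u,w) = 0) : False := by
  have hPY : P ≠ Y := ne_sz h.ty.sz (by rw [p.sz]; decide)
  have hn := h.Pne p.e1
  obtain ⟨h1, h2, h3⟩ := h.c0 hP hn.1 hn.2.1 hn.2.2
  obtain ⟨k1, k2, k3, k4, k5, k6⟩ := h.K
  obtain ⟨s1, s2⟩ := h.s
  have hvw := h.Pvw hP hPY p.e1
  have q1 := h.F.adj hP p.e1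
  have q2 := h.F.adj hP p.e2
  have q3 := h.F.adj hP p.e3
  have q4 := h.F.adj hP p.e4
  have q5 := h.F.adj hP p.e5
  have ws := h.F.adj h.mY h.ty.e2
  have dw : d ≠ w := by rintro rfl; exact swp p.e5 hvw
  have := h.ta.ab; have := h.ta.bc; have := h.ta.ac; have := h.tb.bc; have := h.tb.ac; have := h.tc.bc
  have := p.ab; have := p.bc; have pac := p.ac; have := h.ty.bc; have := h.ty.ac; have := p.ad; have := p.bd; have := p.cd
  have := p.ae; have := p.be; have := p.ce; have := p.de
  have aw : a ≠ w := by
    rintro rfl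
    refine h.F.v2 P hP Y h.mY hPY s v a pac (swp p.e1) h.ty.e3 ?_ ?_
    · intro x hx
      rw [p.on] at hx
      simp only [Sym2.eq_iff] at hx
      grind
    · intro x hx
      rw [h.ty.on] at hx
      simp only [Sym2.eq_iff] at hx
      grind
  by_cases bw : b = w
  · subst bw
    have ac : a ≠ c := by rintro rfl; exact p.e3 h3
    have au : a ≠ u := by rintro rfl; exact p.e3 huw
    refine thA h.F.ht q1 q2 q3 k3.symm k1 k4 (Or.inr k5) ?_
    simp; grind
  · refine thA h.F.ht k5 ws q2 q3 q4 q5 (Or.inl q1) ?_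
    simp; grind

end Theta6

namespace Theta6
universe u
open scoped Classical
set_option linter.unusedSectionVars false
set_option linter.unusedVariables false
variable {V : Type u} [Fintype V]
variable {G : SimpleGraph V} {𝓕 : Finset (ES V)}

noncomputable def ph (S : ES V) : ℕ := if sz S = 3 then 0 else if sz S = 4 then 2 else if sz S = 5 then 3 else 5

theorem ph3 {S : ES V} (h : sz S = 3) : ph S = 0 := by simp [ph, h]
theorem ph_ge {S : ES V} (h : sz S ≠ 3) : 2 ≤ ph S := by
  unfold ph; split_ifs <;> omega

theorem ph_cls (hF : Faces G 𝓕) {T : ES V} (hT : T ∈ 𝓕) {a b : V} (h : T s(a,b) ≠ 0) (h3 : sz T ≠ 3) :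
    (∃ p q, C4 T a b p q) ∨ (∃ p q r, C5 T a b p q r) ∧ ph T = 3 ∨ ph T = 5 := by
  rcases cls (hF.mem T hT) h with ⟨c, h⟩ | ⟨c, d, h⟩ | ⟨c, d, e, h⟩ | h
  · exact absurd h.sz h3
  · exact Or.inl ⟨c, d, h⟩
  · refine Or.inr (Or.inl ⟨⟨c, d, e, h⟩, ?_⟩)
    simp [ph, h.sz]
  · refine Or.inr (Or.inr ?_)
    unfold ph; split_ifs <;> omega

theorem tri_cls (hF : Faces G 𝓕) {T : ES V} (hT : T ∈ 𝓕) {a b : V} (h : T s(a,b) ≠ 0) (h3 : sz T = 3) :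
    ∃ c, C3 T a b c := by
  rcases cls (hF.mem T hT) h with h | ⟨c, d, h⟩ | ⟨c, d, e, h⟩ | h
  · exact h
  · rw [h.sz] at h3; omega
  · rw [h.sz] at h3; omega
  · omega

noncomputable def rr (𝓕 : Finset (ES V)) (S : ES V) : ℕ :=
  ∑ e : Sym2 V, ∑ T ∈ 𝓕, if T ≠ S ∧ S e ≠ 0 ∧ T e ≠ 0 then ph T else 0

structure Oth (𝓕 : Finset (ES V)) (S : ES V) (a b : V) (T : ES V) : Prop where
  mS : S ∈ 𝓕
  mT : T ∈ 𝓕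
  ne : T ≠ S
  s : S s(a,b) ≠ 0
  t : T s(a,b) ≠ 0

theorem Oth.swap {S T : ES V} {a b : V} (h : Oth 𝓕 S a b T) : Oth 𝓕 S b a T := ⟨h.mS, h.mT, h.ne, swp h.s, swp h.t⟩
theorem Oth.inv {S T : ES V} {a b : V} (h : Oth 𝓕 S a b T) : Oth 𝓕 T a b S := ⟨h.mT, h.mS, h.ne.symm, h.t, h.s⟩

theorem Oth.uniq {S T U : ES V} {a b : V} (hF : Faces G 𝓕) (h : Oth 𝓕 S a b T) (hU : U ∈ 𝓕) (hu : U s(a,b) ≠ 0)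
    (hne : U ≠ S) : U = T := by
  by_contra hn
  exact hu (hF.sat h.mS h.mT hU h.ne.symm h.s h.t hne hn)

theorem exists_oth {S : ES V} {a b : V} (hF : Faces G 𝓕) (hS : S ∈ 𝓕) (h : S s(a,b) ≠ 0) : ∃ T, Oth 𝓕 S a b T := by
  obtain ⟨T, h1, h2, h3⟩ := hF.two S hS _ h
  exact ⟨T, hS, h1, h2, h, h3⟩

structure Tri (𝓕 : Finset (ES V)) (S : ES V) (a b c : V) (P Q R : ES V) : Prop where
  t : C3 S a b c
  p : Oth 𝓕 S a b P
  q : Oth 𝓕 S b c Q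
  r : Oth 𝓕 S c a R

theorem Tri.ge {S P Q R : ES V} {a b c : V} (h : Tri 𝓕 S a b c P Q R) : ph P + ph Q + ph R ≤ rr 𝓕 S := by
  unfold rr
  have key : ∀ e T, T ∈ 𝓕 → T ≠ S → S e ≠ 0 → T e ≠ 0 →
      ph T ≤ ∑ T ∈ 𝓕, if T ≠ S ∧ S e ≠ 0 ∧ T e ≠ 0 then ph T else 0 := by
    intro e T hT h1 h2 h3
    have := Finset.single_le_sum (f := fun T => if T ≠ S ∧ S e ≠ 0 ∧ T e ≠ 0 then ph T else 0) (s := 𝓕)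
      (fun _ _ => Nat.zero_le _) hT
    refine le_trans ?_ this
    simp [h1, h2, h3]
  have hsub : ∑ e ∈ ({s(a,b), s(b,c), s(c,a)} : Finset (Sym2 V)), (∑ T ∈ 𝓕, if T ≠ S ∧ S e ≠ 0 ∧ T e ≠ 0 then ph T else 0)
     ≤ ∑ e : Sym2 V, ∑ T ∈ 𝓕, if T ≠ S ∧ S e ≠ 0 ∧ T e ≠ 0 then ph T else 0 :=
    Finset.sum_le_sum_of_subset (Finset.subset_univ _)
  refine le_trans ?_ hsub
  have := h.t.ab; have := h.t.bc; have := h.t.ac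
  rw [Finset.sum_insert, Finset.sum_insert, Finset.sum_singleton]
  · have a1 := key _ P h.p.mT h.p.ne h.p.s h.p.t
    have a2 := key _ Q h.q.mT h.q.ne h.q.s h.q.t
    have a3 := key _ R h.r.mT h.r.ne h.r.s h.r.t
    omega
  · simp only [Finset.mem_singleton, Sym2.eq_iff]; grind
  · simp only [Finset.mem_insert, Finset.mem_singleton, Sym2.eq_iff]; grind

def CloS (𝓕 K : Finset (ES V)) (S : ES V) : Prop :=
  S ∈ 𝓕 ∧ sz S = 3 ∧ ∀ e T, S e ≠ 0 → T ∈ 𝓕 → T e ≠ 0 → sz T = 3 → T ∈ K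

def Clo (𝓕 K : Finset (ES V)) : Prop := ∀ S ∈ K, CloS 𝓕 K S

theorem Tri.clo {S P Q R : ES V} {a b c : V} (hF : Faces G 𝓕) (h : Tri 𝓕 S a b c P Q R) {K : Finset (ES V)} (hS : S ∈ K)
    (h1 : P ∈ K ∨ sz P ≠ 3) (h2 : Q ∈ K ∨ sz Q ≠ 3) (h3 : R ∈ K ∨ sz R ≠ 3) : CloS 𝓕 K S := by
  refine ⟨h.p.mS, h.t.sz, fun e T he hT hTe h3' => ?_⟩
  by_cases hTS : T = S
  · rwa [hTS]
  rw [h.t.on] at he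
  rcases he with rfl | rfl | rfl
  · obtain rfl := h.p.uniq hF hT hTe hTS; tauto
  · obtain rfl := h.q.uniq hF hT hTe hTS; tauto
  · obtain rfl := h.r.uniq hF hT hTe hTS; tauto

def Good (𝓕 𝒮 : Finset (ES V)) : Prop :=
  ∃ K ⊆ 𝒮, K.Nonempty ∧ Clo 𝓕 K ∧ 3 * K.card ≤ ∑ S ∈ K, rr 𝓕 S

theorem Clo.nb {𝒮 : Finset (ES V)} (h : Clo 𝓕 𝒮) {S T : ES V} {a b : V} (hS : S ∈ 𝒮) (hO : Oth 𝓕 S a b T) (h3 : sz T = 3) :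
    T ∈ 𝒮 := (h S hS).2.2 _ T hO.s hO.mT hO.t h3

theorem good_mk {𝒮 : Finset (ES V)} (l : List (ES V)) (hn : l.Nodup) (h0 : l ≠ []) (hl : ∀ S ∈ l, S ∈ 𝒮)
    (hc : ∀ S ∈ l, CloS 𝓕 l.toFinset S) (hs : 3 * l.length ≤ (l.map (rr 𝓕)).sum) : Good 𝓕 𝒮 := by
  refine ⟨l.toFinset, ?_, ?_, ?_, ?_⟩
  · intro S h; exact hl S (by simpa using h)
  · simpa using h0
  · intro S h; exact hc S (by simpa using h)
  · rw [List.toFinset_card_of_nodup hn, List.sum_toFinset _ hn]; exact hs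

end Theta6

namespace Theta6
universe u
open scoped Classical
set_option linter.unusedSectionVars false
set_option linter.unusedVariables false
variable {V : Type u} [Fintype V]
variable {G : SimpleGraph V} {𝓕 𝒮 : Finset (ES V)} {A B C X Y Z P Q : ES V} {c u v w s : V}

structure CX (G : SimpleGraph V) (𝓕 : Finset (ES V)) (A B C : ES V) (c u v w : V) (X Y Z : ES V) : Prop
    extends Cfg G 𝓕 A B C c u v w where
  x : Oth 𝓕 A u v X
  y : Oth 𝓕 B v w Y
  z : Oth 𝓕 C w u Z

theorem CX.rot (h : CX G 𝓕 A B C c u v w X Y Z) : CX G 𝓕 B C A c v w u Y Z X := ⟨h.toCfg.rot, h.y, h.z, h.x⟩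
theorem CX.swap (h : CX G 𝓕 A B C c u v w X Y Z) : CX G 𝓕 A C B c v u w X Z Y :=
  ⟨h.toCfg.swap, h.x.swap, h.z.swap, h.y.swap⟩

theorem CX.trA (h : CX G 𝓕 A B C c u v w X Y Z) : Tri 𝓕 A c u v C X B :=
  ⟨h.ta, ⟨h.mA, h.mC, h.ne.2.2.symm, h.ta.e1, swp h.tc.e3⟩, h.x, ⟨h.mA, h.mB, h.ne.1.symm, h.ta.e3, swp h.tb.e1⟩⟩
theorem CX.trB (h : CX G 𝓕 A B C c u v w X Y Z) : Tri 𝓕 B c v w A Y C := h.rot.trA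
theorem CX.trC (h : CX G 𝓕 A B C c u v w X Y Z) : Tri 𝓕 C c w u B Z A := h.rot.rot.trA

theorem CX.big (h : CX G 𝓕 A B C c u v w X Y Z) (hx : sz X ≠ 3) (hxy : X ≠ Y) (hxz : X ≠ Z) : ph X = 5 := by
  have hA : X ≠ A := h.x.ne
  have hB : X ≠ B := ne_sz h.tb.sz hx
  have hC : X ≠ C := ne_sz h.tc.sz hx
  have hvw : X s(v,w) = 0 := h.F.sat h.mB h.y.mT h.x.mT h.y.ne.symm h.y.s h.y.t hB hxy
  have huw : X s(w,u) = 0 := h.F.sat h.mC h.z.mT h.x.mT h.z.ne.symm h.z.s h.z.t hC hxz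
  rcases ph_cls h.F h.x.mT h.x.t hx with ⟨p, q, k⟩ | ⟨⟨p, q, r, k⟩, _⟩ | k
  · rcases h.toCfg.Xquad h.x.mT k with rfl | rfl
    · exact absurd hvw k.e2
    · exact absurd huw k.e4
  · exact (h.toCfg.Xpent h.x.mT k (by rwa [Sym2.eq_swap]) hvw).elim
  · exact k

theorem CX.all (h : CX G 𝓕 A B C c u v w X X X) (hx : sz X ≠ 3) : ph X = 5 := by
  rcases ph_cls h.F h.x.mT h.x.t hx with ⟨p, q, k⟩ | ⟨⟨p, q, r, k⟩, _⟩ | k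
  · exact absurd (sub3 (h.F.mem X h.x.mT) (by rw [k.sz]; decide) h.x.t h.y.t h.z.t).sz hx
  · exact absurd (sub3 (h.F.mem X h.x.mT) (by rw [k.sz]) h.x.t h.y.t h.z.t).sz hx
  · exact k

theorem CX.mem (h : CX G 𝓕 A B C c u v w X Y Z) (hc : Clo 𝓕 𝒮) (hA : A ∈ 𝒮) : B ∈ 𝒮 ∧ C ∈ 𝒮 :=
  ⟨hc.nb hA h.trA.r h.tb.sz, hc.nb hA h.trA.p h.tc.sz⟩

theorem CX.A0 (h : CX G 𝓕 A B C c u v w X Y Z) (hc : Clo 𝓕 𝒮) (hA : A ∈ 𝒮) (hx : sz X ≠ 3) (hy : sz Y ≠ 3) (hz : sz Z ≠ 3) :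
    Good 𝓕 𝒮 := by
  have hm := h.mem hc hA
  have hn := h.ne
  refine good_mk [A, B, C] (by simp; tauto) (by simp) (by simp; tauto) ?_ ?_
  · intro S hS
    simp only [List.mem_cons, List.not_mem_nil, or_false] at hS
    rcases hS with rfl | rfl | rfl
    · exact h.trA.clo h.F (by simp) (by simp) (by tauto) (by simp)
    · exact h.trB.clo h.F (by simp) (by simp) (by tauto) (by simp)
    · exact h.trC.clo h.F (by simp) (by simp) (by tauto) (by simp)
  · have := h.trA.ge; have := h.trB.ge; have := h.trC.ge
    simp only [List.length_cons, List.length_nil, List.map_cons, List.map_nil, List.sum_cons, List.sum_nil]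
    have := ph_ge hx; have := ph_ge hy; have := ph_ge hz
    by_cases e1 : X = Y
    · by_cases e2 : X = Z
      · subst e1; subst e2
        have := h.all hx
        omega
      · have := h.rot.rot.big hz (Ne.symm e2) (by rw [← e1]; exact Ne.symm e2)
        omega
    · by_cases e2 : X = Z
      · have := h.rot.big hy (by rw [← e2]; exact Ne.symm e1) (Ne.symm e1)
        omega
      · have := h.big hx e1 e2
        omega

theorem Att.swap (h : Att G 𝓕 A B C Y c u v w s) : Att G 𝓕 C B A Y c u w v s :=
  ⟨h.toCfg.rot.swap.rot.rot, h.mY, h.YB, h.ty.swap⟩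

/-- Properties of the face across `v s`. -/
theorem Att.P3 (h : Att G 𝓕 A B C Y c u v w s) (hx : Oth 𝓕 A u v X) (hP : Oth 𝓕 Y s v P) (hx3 : sz X ≠ 3) : sz P ≠ 3 := by
  intro h3
  obtain ⟨r, k⟩ := tri_cls h.F hP.mT (swp hP.t) h3
  obtain rfl := h.Ptri hP.mT hP.ne k
  have := hx.uniq h.F hP.mT k.e3 (h.Pne (swp hP.t)).1
  rw [this] at h3
  exact hx3 h3

theorem Att.P5 (h : Att G 𝓕 A B C Y c u v w s) (hP : Oth 𝓕 Y s v P) (hz : Oth 𝓕 C w u Z) (h3 : sz P ≠ 3) :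
    3 ≤ ph P ∧ (P ≠ Z → ph P = 5) := by
  rcases ph_cls h.F hP.mT (swp hP.t) h3 with ⟨p, q, k⟩ | ⟨⟨p, q, r, k⟩, k'⟩ | k
  · exact (h.Pquad hP.mT k).elim
  · refine ⟨by omega, fun hne => ?_⟩
    have : P s(w,u) = 0 := h.F.sat h.mC hz.mT hP.mT hz.ne.symm hz.s hz.t (h.Pne (swp hP.t)).2.2 hne
    exact (h.Ppent hP.mT k (by rwa [Sym2.eq_swap])).elim
  · exact ⟨by omega, fun _ => k⟩

theorem CX.att (h : CX G 𝓕 A B C c u v w X Y Z) (hy : sz Y = 3) : ∃ s, Att G 𝓕 A B C Y c u v w s := by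
  obtain ⟨s, k⟩ := tri_cls h.F h.y.mT h.y.t hy
  exact ⟨s, h.toCfg, h.y.mT, h.y.ne, k⟩

theorem CX.A1 (h : CX G 𝓕 A B C c u v w X Y Z) (hc : Clo 𝓕 𝒮) (hA : A ∈ 𝒮) (hx : sz X ≠ 3) (hy : sz Y = 3) (hz : sz Z ≠ 3) :
    Good 𝓕 𝒮 := by
  have hm := h.mem hc hA
  have hn := h.ne
  obtain ⟨s, k⟩ := h.att hy
  obtain ⟨P, hP⟩ := exists_oth h.F h.y.mT k.ty.e3
  obtain ⟨Q, hQ⟩ := exists_oth h.F h.y.mT k.ty.e2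
  have hY : Y ∈ 𝒮 := hc.nb hm.1 h.y hy
  have hP3 := k.P3 h.x hP hx
  have hQ3 := k.swap.P3 h.z.swap hQ.swap hz
  have hP5 := k.P5 hP h.z hP3
  have hQ5 := k.swap.P5 hQ.swap h.x.swap hQ3
  have hs := k.s
  have yA : A ≠ Y := ne_on h.ta.e1 (k.ty.off ⟨h.ta.ac, h.tb.ac, hs.1.symm⟩)
  have yC : C ≠ Y := ne_on h.tc.e1 (k.ty.off ⟨h.ta.ac, h.tb.ac, hs.1.symm⟩)
  have yB := h.y.ne
  have tY : Tri 𝓕 Y v w s B Q P := ⟨k.ty, h.y.inv, hQ, hP⟩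
  refine good_mk [A, B, C, Y] (by simp; tauto) (by simp) (by simp; tauto) ?_ ?_
  · intro S hS
    simp only [List.mem_cons, List.not_mem_nil, or_false] at hS
    rcases hS with rfl | rfl | rfl | rfl
    · exact h.trA.clo h.F (by simp) (by simp) (by tauto) (by simp)
    · exact h.trB.clo h.F (by simp) (by simp) (by simp) (by simp)
    · exact h.trC.clo h.F (by simp) (by simp) (by tauto) (by simp)
    · exact tY.clo h.F (by simp) (by simp) (by tauto) (by tauto)
  · have := h.trA.ge; have := h.trB.ge; have := h.trC.ge; have := tY.ge
    simp only [List.length_cons, List.length_nil, List.map_cons, List.map_nil, List.sum_cons, List.sum_nil]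
    have := ph_ge hx; have := ph_ge hz
    have hXY : X ≠ Y := ne_sz hy hx
    have hZY : Z ≠ Y := ne_sz hy hz
    by_cases e2 : X = Z
    · by_cases e3 : P = Z
      · have := congrArg ph e2; have := congrArg ph e3
        omega
      · have := hP5.2 e3
        omega
    · have := h.big hx hXY e2
      have := h.rot.rot.big hz (Ne.symm e2) hZY
      omega

/-- Two attached triangles have the same apex. -/
theorem Att.same {t : V} (h : Att G 𝓕 A B C Y c u v w s) (hZ : Z ∈ 𝓕) (hZC : Z ≠ C) (z : C3 Z w u t) : s = t := by
  have h2 : Att G 𝓕 B C A Z c v w u t := ⟨h.toCfg.rot, hZ, hZC, z⟩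
  by_contra hst
  obtain ⟨s1, s2⟩ := h.s
  obtain ⟨t1, t2⟩ := h2.s
  obtain ⟨k1, k2, k3, k4, k5, k6⟩ := h.K
  refine thA h.F.ht (h.F.adj h.mY h.ty.e2) (h.F.adj h.mY h.ty.e3) k2.symm k1 (h.F.adj hZ z.e2) (h.F.adj hZ z.e3)
    (Or.inr k3.symm) ?_
  have := h.ta.ab; have := h.ta.bc; have := h.ta.ac; have := h.tb.bc; have := h.tb.ac; have := h.tc.bc
  have := h.ty.bc; have := h.ty.ac; have := z.bc; have := z.ac
  simp; grind

theorem CX.A2 (h : CX G 𝓕 A B C c u v w X Y Z) (hc : Clo 𝓕 𝒮) (hA : A ∈ 𝒮) (hx : sz X ≠ 3) (hy : sz Y = 3) (hz : sz Z = 3) :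
    Good 𝓕 𝒮 := by
  have hm := h.mem hc hA
  have hn := h.ne
  obtain ⟨s, k⟩ := h.att hy
  obtain ⟨t, k2⟩ := h.rot.att hz
  obtain rfl := k.same h.z.mT h.z.ne k2.ty
  have k3 : Att G 𝓕 A C B Z c v u w s := ⟨h.toCfg.swap, h.z.mT, h.z.ne, k2.ty.swap⟩
  obtain ⟨P, hP⟩ := exists_oth h.F h.y.mT k.ty.e3
  obtain ⟨Q, hQ⟩ := exists_oth h.F h.z.mT k2.ty.e2
  have hY : Y ∈ 𝒮 := hc.nb hm.1 h.y hy
  have hZ : Z ∈ 𝒮 := hc.nb hm.2 h.z hz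
  have hP3 := k.P3 h.x hP hx
  have hQ3 := k3.P3 h.x.swap hQ.swap hx
  have hP5 := (k.P5 hP h.z hP3).2 (ne_sz hz hP3)
  have hQ5 := (k3.P5 hQ.swap h.y.swap hQ3).2 (ne_sz hy hQ3)
  have hX5 := h.big hx (ne_sz hy hx) (ne_sz hz hx)
  have hs := k.s
  have yA : A ≠ Y := ne_on h.ta.e1 (k.ty.off ⟨h.ta.ac, h.tb.ac, hs.1.symm⟩)
  have yC : C ≠ Y := ne_on h.tc.e1 (k.ty.off ⟨h.ta.ac, h.tb.ac, hs.1.symm⟩)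
  have yB := h.y.ne
  have zA : A ≠ Z := ne_on h.ta.e1 (k2.ty.off ⟨h.tb.ac, h.ta.ab, hs.1.symm⟩)
  have zB : B ≠ Z := ne_on h.tb.e1 (k2.ty.off ⟨h.tb.ac, h.ta.ab, hs.1.symm⟩)
  have zC := h.z.ne
  have yz : Y ≠ Z := ne_on k.ty.e1 (k2.ty.off ⟨k.ty.ab, h.ta.bc.symm, k.ty.ac⟩)
  have tY : Tri 𝓕 Y v w s B Z P := ⟨k.ty, h.y.inv, ⟨h.y.mT, h.z.mT, yz.symm, k.ty.e2, swp k2.ty.e3⟩, hP⟩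
  have tZ : Tri 𝓕 Z w u s C Q Y := ⟨k2.ty, h.z.inv, hQ, ⟨h.z.mT, h.y.mT, yz, k2.ty.e3, swp k.ty.e2⟩⟩
  refine good_mk [A, B, C, Y, Z] (by simp; tauto) (by simp) (by simp; tauto) ?_ ?_
  · intro S hS
    simp only [List.mem_cons, List.not_mem_nil, or_false] at hS
    rcases hS with rfl | rfl | rfl | rfl | rfl
    · exact h.trA.clo h.F (by simp) (by simp) (by tauto) (by simp)
    · exact h.trB.clo h.F (by simp) (by simp) (by simp) (by simp)
    · exact h.trC.clo h.F (by simp) (by simp) (by simp) (by simp)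
    · exact tY.clo h.F (by simp) (by simp) (by simp) (by tauto)
    · exact tZ.clo h.F (by simp) (by simp) (by tauto) (by simp)
  · have := h.trA.ge; have := h.trB.ge; have := h.trC.ge; have := tY.ge; have := tZ.ge
    simp only [List.length_cons, List.length_nil, List.map_cons, List.map_nil, List.sum_cons, List.sum_nil]
    omega

theorem CX.A3 (h : CX G 𝓕 A B C c u v w X Y Z) (hx : sz X = 3) (hy : sz Y = 3) (hz : sz Z = 3) : False := by
  have hn := h.ne
  obtain ⟨s, k⟩ := h.att hy
  obtain ⟨t, k2⟩ := h.rot.att hz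
  obtain rfl := k.same h.z.mT h.z.ne k2.ty
  obtain ⟨t, k3⟩ := h.rot.rot.att hx
  obtain rfl := k2.same h.x.mT h.x.ne k3.ty
  have hs := k.s
  have yA : A ≠ Y := ne_on h.ta.e1 (k.ty.off ⟨h.ta.ac, h.tb.ac, hs.1.symm⟩)
  have zA : A ≠ Z := ne_on h.ta.e1 (k2.ty.off ⟨h.tb.ac, h.ta.ab, hs.1.symm⟩)
  have xA := h.x.ne
  refine h.F.zs A h.mA [B, C, X, Y, Z] (by simp) (by simp [h.mB, h.mC, h.x.mT, h.y.mT, h.z.mT]) (by simp; tauto) ?_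
  have t : (2 : ES V) = 0 := by rw [← one_add_one_eq_two]; exact esadd _
  simp only [List.sum_cons, List.sum_nil]
  rw [h.ta.eq, h.tb.eq, h.tc.eq, k.ty.eq, k2.ty.eq, k3.ty.eq, ed_comm v c, ed_comm w c, ed_comm u c,
    ed_comm s v, ed_comm s w, ed_comm s u]
  ring_nf
  simp [t]

theorem CX.good (h : CX G 𝓕 A B C c u v w X Y Z) (hc : Clo 𝓕 𝒮) (hA : A ∈ 𝒮) : Good 𝓕 𝒮 := by
  have hm := h.mem hc hA
  by_cases hx : sz X = 3 <;> by_cases hy : sz Y = 3 <;> by_cases hz : sz Z = 3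
  · exact (h.A3 hx hy hz).elim
  · exact h.rot.rot.A2 hc hm.2 hz hx hy
  · exact h.rot.A2 hc hm.1 hy hz hx
  · exact h.rot.rot.A1 hc hm.2 hz hx hy
  · exact h.A2 hc hA hx hy hz
  · exact h.A1 hc hA hx hy hz
  · exact h.rot.A1 hc hm.1 hy hz hx
  · exact h.A0 hc hA hx hy hz

theorem Cfg.good (h : Cfg G 𝓕 A B C c u v w) (hc : Clo 𝓕 𝒮) (hA : A ∈ 𝒮) : Good 𝓕 𝒮 := by
  obtain ⟨X, hx⟩ := exists_oth h.F h.mA h.ta.e2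
  obtain ⟨Y, hy⟩ := exists_oth h.F h.mB h.tb.e2
  obtain ⟨Z, hz⟩ := exists_oth h.F h.mC h.tc.e2
  exact CX.good ⟨h, hx, hy, hz⟩ hc hA

end Theta6

namespace Theta6
universe u
open scoped Classical
set_option linter.unusedSectionVars false
set_option linter.unusedVariables false
variable {V : Type u} [Fintype V]
variable {G : SimpleGraph V} {𝓕 𝒮 : Finset (ES V)} {I X T U R S P Q : ES V} {a b c d u v w p q : V}

theorem Tri.rot (h : Tri 𝓕 I a b c P Q R) : Tri 𝓕 I b c a Q R P := ⟨h.t.rot, h.q, h.r, h.p⟩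

theorem Tri.cfg (hF : Faces G 𝓕) (h : Tri 𝓕 I u v w X T R) (ht : C3 T v w a) (hr : C3 R w u a) :
    Cfg G 𝓕 I T R w u v a :=
  ⟨hF, h.p.mS, h.q.mT, h.r.mT, h.t.rot.rot, ht.swap, hr.sw2⟩

/-- the special position of a quadrilateral next to a triangle with two triangular neighbours -/
theorem quadU (hF : Faces G 𝓕) (h : Tri 𝓕 I u v w X T R) (ht : C3 T v w b) (hr : C3 R w u a) (hx : C4 X u v b a)
    (hU : Oth 𝓕 R a w U) : sz U ≠ 3 := by
  intro h3
  obtain ⟨z, k⟩ := tri_cls hF hU.mT (swp hU.t) h3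
  have i1 := h.t.ab; have i2 := h.t.bc; have i3 := h.t.ac
  have i4 := ht.bc; have i5 := ht.ac; have i6 := hr.bc; have i7 := hr.ac
  have i8 := hx.cd
  have UI : U ≠ I := ne_on (swp k.e1) (h.t.off ⟨i6.symm, hx.bd.symm, i7.symm⟩)
  have UT : U ≠ T := ne_on (swp k.e1) (ht.off ⟨hx.bd.symm, i7.symm, i8.symm⟩)
  have zv : z ≠ v := by
    rintro rfl
    exact k.e3 (hF.sat h.p.mS h.q.mT hU.mT h.q.ne.symm h.q.s h.q.t UI UT)
  have zu : z ≠ u := by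
    rintro rfl
    exact hU.ne (k.sw2.uniq hr)
  have zb : z ≠ b := by
    rintro rfl
    have XI : X ≠ I := h.p.ne
    have TI := h.q.ne
    have RI := h.r.ne
    refine hF.zs I h.p.mS [R, U, T, X] (by simp) (by simp [h.p.mT, h.q.mT, h.r.mT, hU.mT]) (by simp; tauto) ?_
    have t : (2 : ES V) = 0 := by rw [← one_add_one_eq_two]; exact esadd _
    simp only [List.sum_cons, List.sum_nil]
    rw [h.t.eq, ht.eq, hr.eq, k.eq, hx.eq, ed_comm a w, ed_comm z a, ed_comm z w, ed_comm z v, ed_comm a u]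
    ring_nf
    simp [t]
  refine thA hF.ht (hF.adj hU.mT k.e3).symm (hF.adj hU.mT k.e2).symm (hF.adj h.r.mT hr.e2).symm (hF.adj h.p.mS h.t.e1)
    (hF.adj h.q.mT ht.e3).symm (hF.adj h.q.mT ht.e2).symm (Or.inr (hF.adj h.r.mT hr.e1)) ?_
  have := k.bc; have := k.ac; have := hx.ad; have := hx.bd; have := hx.ac
  simp; grind

theorem core (hF : Faces G 𝓕) (hc : Clo 𝓕 𝒮) (hI : I ∈ 𝒮) (h : Tri 𝓕 I u v w X T R) (ht : sz T = 3) (hr : sz R = 3)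
    (hx : ph X ≤ 2) : Good 𝓕 𝒮 := by
  obtain ⟨b, kt⟩ := tri_cls hF h.q.mT h.q.t ht
  obtain ⟨a, kr⟩ := tri_cls hF h.r.mT h.r.t hr
  by_cases hab : a = b
  · subst hab
    exact (h.cfg hF kt kr).good hc hI
  have i1 := h.t.ab; have i2 := h.t.bc; have i3 := h.t.ac
  have i4 := kt.bc; have i5 := kt.ac; have i6 := kr.bc; have i7 := kr.ac
  have bu : b ≠ u := by
    rintro rfl; exact h.q.ne (kt.uniq h.t.rot)
  have av : a ≠ v := by
    rintro rfl; exact h.r.ne (kr.uniq h.t.rot.rot)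
  have uv := hF.adj h.p.mS h.t.e1
  have vw := hF.adj h.p.mS h.t.e2
  have wu := hF.adj h.p.mS h.t.e3
  have wb := hF.adj h.q.mT kt.e2
  have bv := hF.adj h.q.mT kt.e3
  have ua := hF.adj h.r.mT kr.e2
  have aw := hF.adj h.r.mT kr.e3
  rcases cls (hF.mem X h.p.mT) h.p.t with ⟨d, k⟩ | ⟨p, q, k⟩ | ⟨p, q, r, k⟩ | k
  · have dw : d ≠ w := by
      rintro rfl; exact h.p.ne (k.uniq h.t)
    by_cases hda : d = a
    · subst hda
      exact (h.rot.cfg hF kr k).good hc hI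
    by_cases hdb : d = b
    · subst hdb
      exact (h.rot.rot.cfg hF k kt).good hc hI
    refine (thA hF.ht (hF.adj h.p.mT k.e3).symm (hF.adj h.p.mT k.e2).symm bv.symm wb.symm aw.symm ua.symm (Or.inl uv) ?_).elim
    have := k.bc; have := k.ac
    simp; grind
  · have xs : sz X ≠ 3 := by rw [k.sz]; decide
    have XI := h.p.ne
    have XT : X ≠ T := ne_sz ht xs
    have XR : X ≠ R := ne_sz hr xs
    have pw : p ≠ w := by
      rintro rfl
      exact k.e2 (hF.sat h.p.mS h.q.mT h.p.mT h.q.ne.symm h.q.s h.q.t XI XT)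
    have qw : q ≠ w := by
      rintro rfl
      exact k.e4 (hF.sat h.p.mS h.r.mT h.p.mT h.r.ne.symm h.r.s h.r.t XI XR)
    have vp := hF.adj h.p.mT k.e2
    have pq := hF.adj h.p.mT k.e3
    have qu := hF.adj h.p.mT k.e4
    have j1 := k.ac; have j2 := k.ad; have j3 := k.bc; have j4 := k.bd; have j5 := k.cd
    have hb : b = p ∨ b = q := by
      by_contra hn
      refine thA hF.ht qu.symm pq.symm vp.symm bv.symm wb.symm wu (Or.inr uv) ?_
      simp; grind
    have ha : a = p ∨ a = q := by
      by_contra hn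
      refine thA hF.ht ua aw vw.symm vp pq qu (Or.inr uv) ?_
      simp; grind
    rcases ha with rfl | rfl
    · rcases hb with rfl | rfl
      · exact absurd rfl hab
      · exact (five_clique hF.hp uv wu.symm ua qu.symm vw vp bv.symm aw.symm wb pq).elim
    rcases hb with rfl | rfl
    swap
    · exact absurd rfl hab
    obtain ⟨U, hU⟩ := exists_oth hF h.r.mT kr.e3
    obtain ⟨U', hU'⟩ := exists_oth hF h.q.mT kt.e2
    have u1 := quadU hF h kt kr k hU
    have h' : Tri 𝓕 I v u w X R T := ⟨h.t.swap, h.p.swap, h.r.swap, h.q.swap⟩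
    have u2 := quadU hF h' kr.swap kt.swap k.flip hU'.swap
    have tT : Tri 𝓕 T v w b I U' X := ⟨kt, h.q.inv, hU', ⟨h.q.mT, h.p.mT, XT, kt.e3, swp k.e2⟩⟩
    have tR : Tri 𝓕 R w u a I X U := ⟨kr, h.r.inv, ⟨h.r.mT, h.p.mT, XR, kr.e2, swp k.e4⟩, hU⟩
    have TR : T ≠ R := ne_on kt.e1 (kr.off ⟨i2, i1.symm, av.symm⟩)
    have TI := h.q.ne
    have RI := h.r.ne
    have mT := hc.nb hI h.q ht
    have mR := hc.nb hI h.r hr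
    refine good_mk [I, T, R] (by simp; tauto) (by simp) (by simp; tauto) ?_ ?_
    · intro S hS
      simp only [List.mem_cons, List.not_mem_nil, or_false] at hS
      rcases hS with rfl | rfl | rfl
      · exact h.clo hF (by simp) (by tauto) (by simp) (by simp)
      · exact tT.clo hF (by simp) (by simp) (by tauto) (by tauto)
      · exact tR.clo hF (by simp) (by simp) (by tauto) (by tauto)
    · have := h.ge; have := tT.ge; have := tR.ge
      simp only [List.length_cons, List.length_nil, List.map_cons, List.map_nil, List.sum_cons, List.sum_nil]
      have := ph_ge xs; have := ph_ge u1; have := ph_ge u2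
      omega
  · exfalso
    have := k.sz
    simp [ph, this] at hx
  · exfalso
    unfold ph at hx
    split_ifs at hx <;> omega

theorem main_good (hF : Faces G 𝓕) (hc : Clo 𝓕 𝒮) (hI : I ∈ 𝒮) (hr : rr 𝓕 I < 3) : Good 𝓕 𝒮 := by
  have hm := (hc I hI).1
  have h3 := (hc I hI).2.1
  obtain ⟨e, he⟩ : ∃ e, I e ≠ 0 := by
    by_contra hn
    push Not at hn
    have : I = 0 := funext hn
    have h0 := hF.zs I hm [] (by simp) (by simp) (by simp)
    simp [this] at h0
  induction e with | _ u v =>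
  obtain ⟨w, k⟩ := tri_cls hF hm he h3
  obtain ⟨X, hX⟩ := exists_oth hF hm k.e1
  obtain ⟨Y, hY⟩ := exists_oth hF hm k.e2
  obtain ⟨Z, hZ⟩ := exists_oth hF hm k.e3
  have h : Tri 𝓕 I u v w X Y Z := ⟨k, hX, hY, hZ⟩
  have hg := h.ge
  by_cases x3 : sz X = 3 <;> by_cases y3 : sz Y = 3 <;> by_cases z3 : sz Z = 3
  · exact core hF hc hI h y3 z3 (by omega)
  · exact core hF hc hI h.rot.rot x3 y3 (by omega)
  · exact core hF hc hI h.rot z3 x3 (by omega)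
  · have := ph_ge y3; have := ph_ge z3; omega
  · exact core hF hc hI h y3 z3 (by omega)
  · have := ph_ge x3; have := ph_ge z3; omega
  · have := ph_ge x3; have := ph_ge y3; omega
  · have := ph_ge x3; have := ph_ge y3; omega

theorem clo_sum (hF : Faces G 𝓕) : ∀ n : ℕ, ∀ 𝒮 : Finset (ES V), Clo 𝓕 𝒮 → 𝒮.card = n → 3 * 𝒮.card ≤ ∑ S ∈ 𝒮, rr 𝓕 S := by
  intro n
  induction n using Nat.strong_induction_on with | _ n ih =>
  intro 𝒮 hc hn
  by_cases hall : ∀ S ∈ 𝒮, 3 ≤ rr 𝓕 S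
  · have := Finset.card_nsmul_le_sum 𝒮 (rr 𝓕) 3 hall
    simpa [mul_comm] using this
  · push Not at hall
    obtain ⟨I, hI, hr⟩ := hall
    obtain ⟨K, hK, hne, hcl, hs⟩ := main_good hF hc hI hr
    have hc' : Clo 𝓕 (𝒮 \ K) := by
      intro S hS
      rw [Finset.mem_sdiff] at hS
      obtain ⟨h1, h2, h3⟩ := hc S hS.1
      refine ⟨h1, h2, fun e T he hT hTe hT3 => ?_⟩
      rw [Finset.mem_sdiff]
      refine ⟨h3 e T he hT hTe hT3, fun hTK => hS.2 ?_⟩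
      exact (hcl T hTK).2.2 e S hTe h1 he h2
    have hcard := Finset.card_sdiff_add_card_eq_card hK
    have := ih (𝒮 \ K).card (by have := hne.card_pos; omega) _ hc' rfl
    have h4 := Finset.sum_sdiff (f := rr 𝓕) hK
    omega

theorem tri_sum (hF : Faces G 𝓕) : 3 * (𝓕.filter (fun S => sz S = 3)).card ≤ ∑ T ∈ 𝓕, ph T * sz T := by
  have h1 : Clo 𝓕 (𝓕.filter (fun S => sz S = 3)) := by
    intro S hS
    rw [Finset.mem_filter] at hS
    refine ⟨hS.1, hS.2, fun e T _ hT _ h3 => ?_⟩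
    rw [Finset.mem_filter]
    exact ⟨hT, h3⟩
  refine (clo_sum hF _ _ h1 rfl).trans ?_
  unfold rr
  rw [Finset.sum_comm]
  have : ∀ e : Sym2 V, ∑ S ∈ 𝓕.filter (fun S => sz S = 3), ∑ T ∈ 𝓕, (if T ≠ S ∧ S e ≠ 0 ∧ T e ≠ 0 then ph T else 0)
      ≤ ∑ T ∈ 𝓕, if T e ≠ 0 then ph T else 0 := by
    intro e
    rw [Finset.sum_comm]
    apply Finset.sum_le_sum
    intro T hT
    rw [← Finset.sum_filter, Finset.sum_const, smul_eq_mul]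
    split_ifs with hTe
    · have : ((𝓕.filter (fun S => sz S = 3)).filter (fun S => T ≠ S ∧ S e ≠ 0 ∧ T e ≠ 0)).card ≤ 1 := by
        rw [Finset.card_le_one]
        intro S hS S' hS'
        simp only [Finset.mem_filter] at hS hS'
        rcases hF.m2 T hT S hS.1.1 S' hS'.1.1 e hTe hS.2.2.1 hS'.2.2.1 with h | h | h
        · exact absurd h hS.2.1
        · exact absurd h hS'.2.1
        · exact h
      nlinarith
    · simp at hTe
      simp [hTe]
  refine (Finset.sum_le_sum (fun e _ => this e)).trans ?_
  rw [Finset.sum_comm]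
  apply Finset.sum_le_sum
  intro T hT
  rw [← Finset.sum_filter, Finset.sum_const, smul_eq_mul, mul_comm]
  rfl

theorem sz_sum (hF : Faces G 𝓕) : ∑ T ∈ 𝓕, sz T ≤ 2 * G.edgeSet.ncard := by
  have h1 : ∀ T ∈ 𝓕, sz T = ∑ e ∈ G.edgeSet.toFinset, if T e ≠ 0 then 1 else 0 := by
    intro T hT
    unfold sz
    rw [Finset.card_filter]
    symm
    apply Finset.sum_subset (Finset.subset_univ _)
    intro e _ he
    rw [if_neg]
    intro h
    apply he
    induction e with | _ a b =>
    simpa using hF.adj hT h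
  rw [Finset.sum_congr rfl h1, Finset.sum_comm, Set.ncard_eq_toFinset_card', mul_comm, ← smul_eq_mul]
  apply Finset.sum_le_card_nsmul
  intro e _
  rw [← Finset.card_filter]
  by_contra hlt
  push Not at hlt
  obtain ⟨S, T, U, h1, h2, h3, n1, n2, n3⟩ := Finset.two_lt_card_iff.1 hlt
  simp only [Finset.mem_filter] at h1 h2 h3
  rcases hF.m2 S h1.1 T h2.1 U h3.1 e h1.2 h2.2 h3.2 with h | h | h <;> contradiction

theorem faces_count (hF : Faces G 𝓕) : 36 * 𝓕.card ≤ 22 * G.edgeSet.ncard := by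
  have h1 := tri_sum hF
  have h2 := sz_sum hF
  have h3 : ∑ T ∈ 𝓕, (36 + ph T * sz T) ≤ ∑ T ∈ 𝓕, (11 * sz T + if sz T = 3 then 3 else 0) := by
    apply Finset.sum_le_sum
    intro T hT
    have hT0 : T ≠ 0 := by
      have h0 := hF.zs T hT [] (by simp) (by simp) (by simp)
      simpa using h0
    have := sz3 (hF.mem T hT) hT0
    unfold ph
    split_ifs <;> omega
  rw [Finset.sum_add_distrib, Finset.sum_add_distrib, ← Finset.mul_sum, Finset.sum_const, ← Finset.sum_filter, Finset.sum_const,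
    smul_eq_mul, smul_eq_mul] at h3
  omega

end Theta6

namespace Theta6
universe u
open scoped Classical
set_option linter.unusedSectionVars false
set_option linter.unusedVariables false
variable {V : Type u} [Fintype V]

theorem list_comb {ι : Type} [Fintype ι] {F : ι → ES V} (l : List (ES V)) (hl : ∀ T ∈ l, ∃ i, F i = T) :
    ∃ c : ι → ZMod 2, ∑ i, c i • F i = l.sum ∧ ∀ k, c k ≠ 0 → F k ∈ l := by
  induction l with
  | nil => exact ⟨0, by simp, by simp⟩
  | cons T l ih =>
    obtain ⟨c, h1, h2⟩ := ih (fun T h => hl T (by simp [h]))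
    obtain ⟨i, rfl⟩ := hl T (by simp)
    refine ⟨c + Pi.single i 1, ?_, ?_⟩
    · simp only [Pi.add_apply, add_smul, Finset.sum_add_distrib, h1, List.sum_cons]
      rw [add_comm]
      congr 1
      rw [Finset.sum_eq_single i]
      · simp
      · intro j _ hj; simp [hj]
      · simp
    · intro k hk
      by_cases hki : k = i
      · subst hki; simp
      · simp [hki] at hk
        simp [h2 k hk]

theorem PF.inj {G : SimpleGraph V} {ι : Type} [Fintype ι] {F : ι → ES V} (h : PF G F) (h7 : 7 ≤ Fintype.card ι) :
    Function.Injective F := by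
  intro i j hij
  by_contra hne
  have hs : ∑ k, (fun k => if k = i ∨ k = j then (1 : ZMod 2) else 0) k • F k = 0 := by
    rw [← Finset.sum_subset (Finset.subset_univ {i, j})]
    · rw [Finset.sum_pair hne]; simp [hij, esadd]
    · intro k _ hk; simp at hk; simp [hk]
  have hcon := h.zs _ hs
  have : (Finset.univ : Finset ι) ⊆ {i, j} := by
    intro k _
    have := hcon k i
    simp at this
    simp
    tauto
  have h2 := Finset.card_le_card this
  have h3 := Finset.card_le_two (a := i) (b := j)
  rw [Finset.card_univ] at h2
  omega

theorem PF.faces {G : SimpleGraph V} {ι : Type} [Fintype ι] {F : ι → ES V} (h : PF G F) (h7 : 7 ≤ Fintype.card ι)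
    (hp : IsPlanar G) (ht : ¬ HasTheta6 G) (hd : ∀ s a b : V, ∃ d, G.Adj s d ∧ d ≠ a ∧ d ≠ b)
    (hr : ∀ s p q : V, p ≠ s → q ≠ s → (G.deleteIncidenceSet s).Reachable p q) : Faces G (Finset.univ.image F) := by
  have hinj := h.inj h7
  refine ⟨hp, ht, ?_, ?_, ?_, ?_, ?_⟩
  · intro S hS
    simp at hS
    obtain ⟨i, rfl⟩ := hS
    exact h.mem i
  · intro S hS e he
    simp at hS
    obtain ⟨i, rfl⟩ := hS
    obtain ⟨j, h1, h2⟩ := partner1 h.sum he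
    exact ⟨F j, by simp, fun h => h1 (hinj h), h2⟩
  · intro S hS T hT U hU e
    simp at hS hT hU
    obtain ⟨i, rfl⟩ := hS
    obtain ⟨j, rfl⟩ := hT
    obtain ⟨k, rfl⟩ := hU
    intro h1 h2 h3
    rcases h.m2 e i j k h1 h2 h3 with rfl | rfl | rfl <;> simp
  · intro S hS T hT hST s a b hab hSa hTa hSu hTu
    simp at hS hT
    obtain ⟨i, rfl⟩ := hS
    obtain ⟨j, rfl⟩ := hT
    have hij : i ≠ j := fun h => hST (by rw [h])
    obtain ⟨d, hsd, hda, hdb⟩ := hd s a b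
    have hsa : G.Adj s a := Cc_adj (mem_Zc.1 (h.mem i)).1 hSa
    have hb : ∀ k, F k s(s,a) ≠ 0 → (∀ u, F k s(s,u) ≠ 0 → u = a ∨ u = b) → F k s(s,b) = 1 := by
      intro k hk hku
      have h1 := Zc_sum (h.mem k) s
      rw [← Finset.sum_subset (Finset.subset_univ {a, b}), Finset.sum_pair hab, z2 hk] at h1
      · generalize F k s(s,b) = x at h1
        revert x; decide
      · intro u _ hu
        by_contra hn
        simp at hu
        have := hku u hn
        tauto
    obtain ⟨c, hc, hbd⟩ := chain (hr s a d hsa.ne' hsd.ne')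
    have hc0 : ∀ u, c s(s,u) = 0 := by
      intro u
      apply Cc_zero hc
      rw [deleteIncidenceSet_adj]
      simp
    have hcG : c ∈ Cc G := Cc_mono (deleteIncidenceSet_le G s) hc
    have hZ : ed s a + ed s d + c ∈ Zc G := by
      rw [mem_Zc]
      refine ⟨Submodule.add_mem _ (Submodule.add_mem _ (ed_Cc hsa) (ed_Cc hsd)) hcG, ?_⟩
      rw [map_add, map_add, bd_ed hsa.ne, bd_ed hsd.ne, hbd]
      have e1 := esadd (dl s); have e2 := esadd (dl a); have e3 := esadd (dl d)
      calc dl s + dl a + (dl s + dl d) + (dl a + dl d) = (dl s + dl s) + (dl a + dl a) + (dl d + dl d) := by abel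
        _ = 0 := by rw [e1, e2, e3]; simp
    have hh := hom h.toFSp (s := s) (c := fun k => if k = i ∨ k = j then 1 else 0) (S := ed s a + ed s d + c) (a := a) (b := d)
      ?_ hZ ?_ ⟨i, by simp, hSa⟩ ?_
    · obtain ⟨k, hk, hkd⟩ := hh
      have hk : k = i ∨ k = j := by simp at hk; tauto
      rcases hk with rfl | rfl
      · have := hSu d hkd; tauto
      · have := hTu d hkd; tauto
    · intro u
      rw [← Finset.sum_subset (Finset.subset_univ {i, j})]
      · rw [Finset.sum_pair hij]
        simp only [true_or, or_true, if_true, one_smul, Pi.add_apply]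
        by_cases hua : u = a
        · rw [hua, z2 hSa, z2 hTa]; exact z2add 1
        by_cases hub : u = b
        · rw [hub, hb i hSa hSu, hb j hTa hTu]; exact z2add 1
        have h1 : F i s(s,u) = 0 := by
          by_contra hn
          have := hSu u hn; tauto
        have h2 : F j s(s,u) = 0 := by
          by_contra hn
          have := hTu u hn; tauto
        rw [h1, h2, add_zero]
      · intro k _ hk
        simp at hk
        simp [hk]
    · intro u h1 h2
      simp only [Pi.add_apply, hc0, ed_apply, add_zero]
      rw [if_neg, if_neg, add_zero]
      · intro hn; exact h2 (Sym2.congr_right.1 hn)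
      · intro hn; exact h1 (Sym2.congr_right.1 hn)
    · simp only [Pi.add_apply, hc0, ed_apply, add_zero]
      rw [if_pos trivial, if_neg]
      · simp
      · intro hn; exact hda (Sym2.congr_right.1 hn).symm
  · intro S hS l hl hlF hSl hsum
    simp at hS
    obtain ⟨i, rfl⟩ := hS
    obtain ⟨c, h1, h2⟩ := list_comb (F := F) l (by intro T hT; simpa using hlF T hT)
    have hci : c i = 0 := by
      by_contra hn
      exact hSl (h2 i hn)
    have hz : ∑ k, (c + Pi.single i 1 : ι → ZMod 2) k • F k = 0 := by
      simp only [Pi.add_apply, add_smul, Finset.sum_add_distrib, h1]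
      rw [add_comm, ← hsum]
      congr 1
      rw [Finset.sum_eq_single i]
      · simp
      · intro j _ hj; simp [hj]
      · simp
    have hcon := h.zs _ hz
    have hsub : Finset.univ.image F ⊆ insert (F i) l.toFinset := by
      intro T hT
      simp at hT
      obtain ⟨k, rfl⟩ := hT
      by_cases hk : k = i
      · subst hk; simp
      · have := hcon k i
        simp [hk, hci] at this
        simp [h2 k (by rw [this]; simp)]
    have h3 := Finset.card_le_card hsub
    rw [Finset.card_image_of_injective _ hinj, Finset.card_univ] at h3
    have h4 := Finset.card_insert_le (F i) l.toFinset
    have h5 := List.toFinset_card_le l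
    omega

theorem theta_comap {W : Type*} {G : SimpleGraph V} (φ : W ↪ V) (h : ¬ HasTheta6 G) : ¬ HasTheta6 (G.comap φ) := by
  rintro ⟨v, h1, h2, i, j, h3, h4, h5, h6⟩
  exact h ⟨φ ∘ v, φ.injective.comp h1, h2, i, j, h3, h4, h5, h6⟩

theorem edges_in (G : SimpleGraph V) (A : Set V) :
    {e ∈ G.edgeSet | ∀ x ∈ e, x ∈ A}.ncard ≤ (G.comap (Function.Embedding.subtype (· ∈ A))).edgeSet.ncard := by
  have h : {e ∈ G.edgeSet | ∀ x ∈ e, x ∈ A} ⊆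
      Sym2.map Subtype.val '' (G.comap (Function.Embedding.subtype (· ∈ A))).edgeSet := by
    intro e
    induction e with | _ a b =>
    rintro ⟨h1, h2⟩
    exact ⟨s(⟨a, h2 a (by simp)⟩, ⟨b, h2 b (by simp)⟩), h1, rfl⟩
  exact (Set.ncard_le_ncard h (Set.toFinite _)).trans (Set.ncard_image_le (Set.toFinite _))

def Bd (n : ℕ) : Prop := ∀ (V : Type u) [Fintype V] (G : SimpleGraph V), Fintype.card V = n → 2 ≤ n → IsPlanar G →
  ¬ HasTheta6 G → 7 * G.edgeSet.ncard + 27 ≤ 18 * n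

theorem sub_bound {G : SimpleGraph V} (ih : ∀ m < Fintype.card V, Bd.{u} m) (hp : IsPlanar G) (ht : ¬ HasTheta6 G)
    (A : Set V) (h2 : 2 ≤ A.ncard) (hA : A.ncard < Fintype.card V) :
    7 * {e ∈ G.edgeSet | ∀ x ∈ e, x ∈ A}.ncard + 27 ≤ 18 * A.ncard := by
  have h1 := ih _ hA A (G.comap (Function.Embedding.subtype (· ∈ A)))
    (by rw [← Nat.card_eq_fintype_card, Nat.card_coe_set_eq]) h2 (planar_comap _ hp) (theta_comap _ ht)
  have := edges_in G A
  omega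

theorem bound_step (ih : ∀ m < Fintype.card V, Bd.{u} m) (G : SimpleGraph V) (hn : 2 ≤ Fintype.card V) (hp : IsPlanar G)
    (ht : ¬ HasTheta6 G) : 7 * G.edgeSet.ncard + 27 ≤ 18 * Fintype.card V := by
  have hce : G.edgeSet.ncard ≤ (Fintype.card V).choose 2 := by
    have := G.card_edgeFinset_le_card_choose_two
    rw [Set.ncard_eq_toFinset_card']
    exact this
  by_cases h2 : Fintype.card V = 2
  · rw [h2] at hce ⊢
    have : Nat.choose 2 2 = 1 := by decide
    omega
  by_cases hd : ∀ s a b : V, ∃ d, G.Adj s d ∧ d ≠ a ∧ d ≠ b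
  swap
  · push Not at hd
    obtain ⟨s, a, b, hd⟩ := hd
    have hsub : G.edgeSet ⊆ {e ∈ G.edgeSet | ∀ x ∈ e, x ∈ ({s}ᶜ : Set V)} ∪ {s(s,a), s(s,b)} := by
      intro e
      induction e with | _ x y =>
      intro he
      rw [mem_edgeSet] at he
      by_cases hx : x = s
      · subst hx
        by_cases hya : y = a
        · right; simp [hya]
        · right; simp [hd y he hya]
      by_cases hy : y = s
      · subst hy
        by_cases hya : x = a
        · right; simp [hya]
        · right; simp [hd x he.symm hya]
      left
      simp [he, hx, hy]
    have h3 := (Set.ncard_le_ncard hsub (Set.toFinite _)).trans (Set.ncard_union_le _ _)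
    have h4 : ({s(s,a), s(s,b)} : Set (Sym2 V)).ncard ≤ 2 := by
      have := Set.ncard_insert_le s(s,a) ({s(s,b)} : Set (Sym2 V))
      rw [Set.ncard_singleton] at this
      exact this
    have hA : ({s}ᶜ : Set V).ncard + 1 = Fintype.card V := by
      have := Set.ncard_add_ncard_compl ({s} : Set V)
      rw [Set.ncard_singleton, Nat.card_eq_fintype_card] at this
      omega
    have := sub_bound ih hp ht ({s}ᶜ) (by omega) (by omega)
    omega
  by_cases hr : ∀ s p q : V, p ≠ s → q ≠ s → (G.deleteIncidenceSet s).Reachable p q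
  swap
  · push Not at hr
    obtain ⟨s, p, q, hps, hqs, hnr⟩ := hr
    let H := G.deleteIncidenceSet s
    let A : Set V := {x | x ≠ s ∧ H.Reachable p x}
    have hsA : s ∉ A := fun h => h.1 rfl
    have hpA : p ∈ A := ⟨hps, Reachable.refl _⟩
    have hqA : q ∉ A := fun h => hnr h.2
    have hsub : G.edgeSet ⊆ {e ∈ G.edgeSet | ∀ x ∈ e, x ∈ insert s A} ∪ {e ∈ G.edgeSet | ∀ x ∈ e, x ∈ Aᶜ} := by
      intro e
      induction e with | _ x y =>
      intro he
      rw [mem_edgeSet] at he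
      by_cases hx : x = s
      · subst hx
        by_cases hy : y ∈ A
        · left; simp [he, hy]
        · right; simp [he, hy, hsA]
      by_cases hy : y = s
      · subst hy
        by_cases hx : x ∈ A
        · left; simp [he, hx]
        · right; simp [he, hx, hsA]
      have hxy : H.Adj x y := by
        show (G.deleteIncidenceSet s).Adj x y
        rw [deleteIncidenceSet_adj]
        exact ⟨he, hx, hy⟩
      have hiff : x ∈ A ↔ y ∈ A :=
        ⟨fun h => ⟨hy, h.2.trans hxy.reachable⟩, fun h => ⟨hx, h.2.trans hxy.symm.reachable⟩⟩
      by_cases hxA : x ∈ A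
      · left; simp [he, hxA, hiff.1 hxA]
      · right; simp [he, hxA, mt hiff.2 hxA]
    have h3 := (Set.ncard_le_ncard hsub (Set.toFinite _)).trans (Set.ncard_union_le _ _)
    have h4 : A.ncard + Aᶜ.ncard = Fintype.card V := by
      rw [Set.ncard_add_ncard_compl, Nat.card_eq_fintype_card]
    have h5 : (insert s A).ncard = A.ncard + 1 := Set.ncard_insert_of_notMem hsA (Set.toFinite _)
    have h6 : 1 ≤ A.ncard := (Set.ncard_pos (Set.toFinite _)).2 ⟨p, hpA⟩
    have h7 : 2 ≤ Aᶜ.ncard := by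
      have : ({s, q} : Set V) ⊆ Aᶜ := by
        intro x hx
        simp at hx
        rcases hx with rfl | rfl
        · exact hsA
        · exact hqA
      rw [← Set.ncard_pair hqs.symm]
      exact Set.ncard_le_ncard this (Set.toFinite _)
    have b1 := sub_bound ih hp ht (insert s A) (by omega) (by omega)
    have b2 := sub_bound ih hp ht Aᶜ h7 (by omega)
    omega
  have : Nonempty V := Fintype.card_pos_iff.1 (by omega)
  by_cases h4 : Fintype.card V ≤ 4
  · have h34 : Fintype.card V = 3 ∨ Fintype.card V = 4 := by omega
    have c3 : Nat.choose 3 2 = 3 := by decide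
    have c4 : Nat.choose 4 2 = 6 := by decide
    rcases h34 with h | h <;> rw [h] at hce ⊢ <;> omega
  by_cases hZ : Zc G = ⊥
  · have := dimZ G
    rw [hZ, finrank_bot] at this
    omega
  obtain ⟨ι, _, F, hF⟩ := exists_PF G (planar_FS G hp) hZ
  have hcnt := hF.count
  by_cases h7 : 7 ≤ Fintype.card ι
  · have := faces_count (hF.faces h7 hp ht hd hr)
    rw [Finset.card_image_of_injective _ (hF.inj h7), Finset.card_univ] at this
    omega
  · omega

theorem bound (n : ℕ) : Bd.{u} n := by
  induction n using Nat.strong_induction_on with | _ n ih =>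
  intro V _ G hc hn hp ht
  subst hc
  exact bound_step ih G hn hp ht

end Theta6

/-- Every `n`-vertex (`n ≥ 2`) planar graph containing no Theta graph on
6 vertices as a subgraph has at most `18n/7 - 27/7` edges. -/
theorem theta6_planar_weak_bound {V : Type*} [Fintype V] (n : ℕ)
    (G : SimpleGraph V) (hcard : Fintype.card V = n) (hn : 2 ≤ n)
    (hplanar : IsPlanar G) (hfree : ¬ HasTheta6 G) :
    (G.edgeSet.ncard : ℚ) ≤ 18 / 7 * n - 27 / 7 := by
  have h := Theta6.bound n V G hcard hn hplanar hfree
  have h' : (7 : ℚ) * (G.edgeSet.ncard : ℚ) + 27 ≤ 18 * n := by exact_mod_cast h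
  linarith
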